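/- Every countable group G embeds into a finitely generated group H such that: (1) H is simple, complete and co-Hopfian; (2) the image of G is malnormal in H. -/

import Mathlib

/-! Part 1: words in amalgams -/
namespace Emb
open Monoid Function

section Amalgam
variable {ι : Type*} {G : ι → Type*} {H : Type*} [∀ i, Group (G i)] [Group H]
  {φ : ∀ i, H →* G i}

/-- product of a list of letters -/
def lprod (φ : ∀ i, H →* G i) (l : List (Σ i, G i)) : PushoutI φ :=
  (l.map fun p => PushoutI.of (φ := φ) p.1 p.2).prod

/-- reduced lists -/
def LRed (φ : ∀ i, H →* G i) (l : List (Σ i, G i)) : Prop :=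
  l.IsChain (fun p q => p.1 ≠ q.1) ∧ ∀ p ∈ l, p.2 ∉ (φ p.1).range

@[simp] lemma lprod_nil : lprod φ [] = 1 := by simp [lprod]
@[simp] lemma lprod_cons (p : Σ i, G i) (l) :
    lprod φ (p :: l) = PushoutI.of p.1 p.2 * lprod φ l := by simp [lprod]
@[simp] lemma lprod_append (l m : List (Σ i, G i)) :
    lprod φ (l ++ m) = lprod φ l * lprod φ m := by simp [lprod]

/-- inverse list -/
def linv (l : List (Σ i, G i)) : List (Σ i, G i) :=
  (l.map fun p => (⟨p.1, p.2⁻¹⟩ : Σ i, G i)).reverse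

lemma lprod_linv (l : List (Σ i, G i)) : lprod φ (linv l) = (lprod φ l)⁻¹ := by
  induction l with
  | nil => simp [linv]
  | cons p l ih =>
    have : linv (p :: l) = linv l ++ [⟨p.1, p.2⁻¹⟩] := by simp [linv]
    rw [this]; simp [ih]

lemma LRed.tail {p : Σ i, G i} {l} (h : LRed φ (p :: l)) : LRed φ l :=
  ⟨h.1.tail, fun q hq => h.2 q (List.mem_cons_of_mem _ hq)⟩

lemma lred_cons {p : Σ i, G i} {l} :
    LRed φ (p :: l) ↔ p.2 ∉ (φ p.1).range ∧ (∀ q ∈ l.head?, q.1 ≠ p.1) ∧ LRed φ l := by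
  unfold LRed
  rw [List.isChain_cons]
  simp only [List.mem_cons, forall_eq_or_imp, ne_comm]
  tauto

lemma lred_append {l m : List (Σ i, G i)} :
    LRed φ (l ++ m) ↔ LRed φ l ∧ LRed φ m ∧
      ∀ p ∈ l.getLast?, ∀ q ∈ m.head?, p.1 ≠ q.1 := by
  unfold LRed
  rw [List.isChain_append]
  simp only [List.mem_append]
  constructor
  · rintro ⟨⟨a, b, c⟩, d⟩
    exact ⟨⟨a, fun p hp => d p (Or.inl hp)⟩, ⟨b, fun p hp => d p (Or.inr hp)⟩, c⟩
  · rintro ⟨⟨a, b⟩, ⟨c, d⟩, e⟩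
    exact ⟨⟨a, c, e⟩, fun p hp => hp.elim (b p) (d p)⟩

lemma lred_nil : LRed φ [] := ⟨List.isChain_nil, by simp⟩

lemma LRed.linv {l : List (Σ i, G i)} (h : LRed φ l) : LRed φ (linv l) := by
  constructor
  · unfold Emb.linv
    rw [List.isChain_reverse, List.isChain_map]
    exact h.1.imp fun a b hab => hab.symm
  · intro p hp
    simp only [Emb.linv, List.mem_reverse, List.mem_map] at hp
    obtain ⟨q, hq, rfl⟩ := hp
    simpa using h.2 q hq

lemma linv_getLast {l : List (Σ i, G i)} {i : ι} (h : ∀ q ∈ l.head?, q.1 ≠ i) :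
    ∀ q ∈ (linv l).getLast?, q.1 ≠ i := by
  intro q hq
  simp only [linv, List.getLast?_reverse, List.head?_map, Option.mem_def,
    Option.map_eq_some_iff] at hq
  obtain ⟨a, ha, rfl⟩ := hq
  exact h a ha

lemma linv_ne_nil {l : List (Σ i, G i)} (h : l ≠ []) : linv l ≠ [] := by
  simpa [linv] using h

lemma lprod_not_base (hφ : ∀ i, Injective (φ i)) {l : List (Σ i, G i)} (hl : LRed φ l)
    (hne : l ≠ []) : lprod φ l ∉ (PushoutI.base φ).range := by
  intro hmem
  let w : CoprodI.Word G := ⟨l, fun p hp h1 => hl.2 p hp (h1 ▸ one_mem _), hl.1⟩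
  have hw : PushoutI.Reduced φ w := fun p hp => hl.2 p hp
  have hprod : PushoutI.ofCoprodI (φ := φ) w.prod = lprod φ l := by
    simp [CoprodI.Word.prod, lprod, w, map_list_prod, Function.comp_def]
  have := hw.eq_empty_of_mem_range hφ (by rw [hprod]; exact hmem)
  apply hne
  have h2 : w.toList = [] := by rw [this]; rfl
  exact h2

lemma of_mem_base {i : ι} {g : G i} (h : g ∈ (φ i).range) :
    PushoutI.of (φ := φ) i g ∈ (PushoutI.base φ).range := by
  obtain ⟨c, rfl⟩ := h
  exact ⟨c, (PushoutI.of_apply_eq_base φ i c).symm⟩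

lemma lprod_not_of (hφ : ∀ i, Injective (φ i)) {l : List (Σ i, G i)} (hl : LRed φ l)
    (hne : l ≠ []) {j : ι} (hj : ∀ q ∈ l.head?, q.1 ≠ j) :
    lprod φ l ∉ (PushoutI.of (φ := φ) j).range := by
  rintro ⟨g, hg⟩
  by_cases hgr : g ∈ (φ j).range
  · exact lprod_not_base hφ hl hne (hg ▸ of_mem_base hgr)
  · have : LRed φ (⟨j, g⁻¹⟩ :: l) := lred_cons.2 ⟨by simpa using hgr, hj, hl⟩
    apply lprod_not_base hφ this (by simp)
    simp [← hg]

lemma lprod_not_of_two (hφ : ∀ i, Injective (φ i)) {p q : Σ i, G i} {l : List (Σ i, G i)}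
    (hl : LRed φ (p :: q :: l)) (j : ι) :
    lprod φ (p :: q :: l) ∉ (PushoutI.of (φ := φ) j).range := by
  classical
  by_cases hpj : p.1 = j
  · subst hpj
    intro hmem
    rw [lprod_cons] at hmem
    have h2 := (Subgroup.mul_mem_cancel_left _ (MonoidHom.mem_range.2 ⟨p.2, rfl⟩)).1 hmem
    refine lprod_not_of hφ hl.tail (by simp) ?_ h2
    exact (lred_cons.1 hl).2.1
  · exact lprod_not_of hφ hl (by simp) (by simpa using hpj)

lemma base_mul_lprod (c : H) {p : Σ i, G i} {l} (hl : LRed φ (p :: l)) :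
    ∃ q : Σ i, G i, q.1 = p.1 ∧ LRed φ (q :: l) ∧
      PushoutI.base φ c * lprod φ (p :: l) = lprod φ (q :: l) := by
  refine ⟨⟨p.1, φ p.1 c * p.2⟩, rfl, ?_, ?_⟩
  · rw [lred_cons] at hl ⊢
    refine ⟨?_, hl.2⟩
    rw [Subgroup.mul_mem_cancel_left _ (MonoidHom.mem_range.2 ⟨c, rfl⟩)]
    exact hl.1
  · simp [PushoutI.of_apply_eq_base, mul_assoc]

lemma exists_lred_mul (i : ι) (g : G i) (h : PushoutI φ)
    (hh : h ∈ (PushoutI.base φ).range ∨ ∃ l, l ≠ [] ∧ LRed φ l ∧ lprod φ l = h) :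
    PushoutI.of i g * h ∈ (PushoutI.base φ).range ∨
      ∃ l, l ≠ [] ∧ LRed φ l ∧ lprod φ l = PushoutI.of i g * h := by
  classical
  have key : ∀ (c : H) (l : List (Σ i, G i)), LRed φ l →
      (PushoutI.base φ c * lprod φ l ∈ (PushoutI.base φ).range ∨
      ∃ l', l' ≠ [] ∧ LRed φ l' ∧ lprod φ l' = PushoutI.base φ c * lprod φ l) := by
    intro c l hl
    rcases l with _ | ⟨p, l⟩
    · left; simp
    · right
      obtain ⟨q, -, hq, he⟩ := base_mul_lprod c hl
      exact ⟨_, by simp, hq, he.symm⟩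
  rcases hh with ⟨c, rfl⟩ | ⟨l, hne, hl, rfl⟩
  · by_cases hg : g ∈ (φ i).range
    · left
      exact mul_mem (of_mem_base hg) ⟨c, rfl⟩
    · right
      refine ⟨[⟨i, g * φ i c⟩], by simp, lred_cons.2 ⟨?_, by simp, lred_nil⟩, ?_⟩
      · rw [Subgroup.mul_mem_cancel_right _ (MonoidHom.mem_range.2 ⟨c, rfl⟩)]
        exact hg
      · simp [PushoutI.of_apply_eq_base]
  · by_cases hg : g ∈ (φ i).range
    · obtain ⟨c, rfl⟩ := hg
      rw [PushoutI.of_apply_eq_base]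
      exact key c l hl
    · obtain ⟨p, l, rfl⟩ := List.exists_cons_of_ne_nil hne
      by_cases hpi : p.1 = i
      · subst hpi
        by_cases hgp : g * p.2 ∈ (φ p.1).range
        · obtain ⟨c, hc⟩ := hgp
          have : PushoutI.of p.1 g * lprod φ (p :: l) = PushoutI.base φ c * lprod φ l := by
            rw [lprod_cons, ← mul_assoc, ← map_mul, ← hc, PushoutI.of_apply_eq_base]
          rw [this]
          exact key c l hl.tail
        · right
          refine ⟨⟨p.1, g * p.2⟩ :: l, by simp, ?_, by simp [mul_assoc]⟩
          rw [lred_cons] at hl ⊢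
          exact ⟨hgp, hl.2⟩
      · right
        exact ⟨⟨i, g⟩ :: p :: l, by simp, lred_cons.2 ⟨hg, by simpa using hpi, hl⟩, by simp⟩

lemma exists_lred (h : PushoutI φ) :
    h ∈ (PushoutI.base φ).range ∨ ∃ l, l ≠ [] ∧ LRed φ l ∧ lprod φ l = h := by
  classical
  suffices ∀ x : PushoutI φ, ∀ h : PushoutI φ,
      (h ∈ (PushoutI.base φ).range ∨ ∃ l, l ≠ [] ∧ LRed φ l ∧ lprod φ l = h) →
      (x * h ∈ (PushoutI.base φ).range ∨ ∃ l, l ≠ [] ∧ LRed φ l ∧ lprod φ l = x * h) by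
    simpa using this h 1 (Or.inl (one_mem _))
  intro x
  induction x using PushoutI.induction_on with
  | of i g => exact fun h hh => exists_lred_mul i g h hh
  | base c =>
    rintro h (hh | ⟨l, hne, hl, rfl⟩)
    · exact Or.inl (mul_mem ⟨c, rfl⟩ hh)
    · obtain ⟨p, l, rfl⟩ := List.exists_cons_of_ne_nil hne
      obtain ⟨q, -, hq, he⟩ := base_mul_lprod c hl
      exact Or.inr ⟨_, by simp, hq, he.symm⟩
  | mul x y hx hy =>
    intro h hh
    rw [mul_assoc]
    exact hx _ (hy _ hh)

/-- left decomposition -/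
lemma exists_left (h : PushoutI φ) (i : ι) :
    ∃ (z : G i) (l : List (Σ i, G i)), LRed φ l ∧ (∀ q ∈ l.head?, q.1 ≠ i) ∧
      h = PushoutI.of i z * lprod φ l := by
  rcases exists_lred h with ⟨c, rfl⟩ | ⟨l, hne, hl, rfl⟩
  · exact ⟨φ i c, [], lred_nil, by simp, by simp [PushoutI.of_apply_eq_base]⟩
  · obtain ⟨p, l, rfl⟩ := List.exists_cons_of_ne_nil hne
    by_cases hpi : p.1 = i
    · subst hpi
      exact ⟨p.2, l, hl.tail, (lred_cons.1 hl).2.1, by simp⟩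
    · exact ⟨1, p :: l, hl, by simpa using hpi, by simp⟩

/-- conjugating a factor element by a nonempty word -/
lemma conj_not_of (hφ : ∀ i, Injective (φ i)) {l : List (Σ i, G i)} (hl : LRed φ l)
    (hne : l ≠ []) {i : ι} (hi : ∀ q ∈ l.head?, q.1 ≠ i) {a : G i} (ha : a ∉ (φ i).range)
    (j : ι) :
    (lprod φ l)⁻¹ * PushoutI.of i a * lprod φ l ∉ (PushoutI.of (φ := φ) j).range := by
  have h1 : LRed φ (linv l ++ (⟨i, a⟩ :: l)) := by
    refine lred_append.2 ⟨hl.linv, lred_cons.2 ⟨ha, hi, hl⟩, ?_⟩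
    intro p hp q hq
    have := linv_getLast hi p hp
    simp only [List.head?_cons, Option.mem_def, Option.some.injEq] at hq
    subst hq
    exact this
  have h2 : (lprod φ l)⁻¹ * PushoutI.of i a * lprod φ l = lprod φ (linv l ++ (⟨i, a⟩ :: l)) := by
    simp [lprod_linv, mul_assoc]
  rw [h2]
  obtain ⟨p, m, hm⟩ := List.exists_cons_of_ne_nil (linv_ne_nil hne)
  rw [hm] at h1 ⊢
  rcases m with _ | ⟨q, m⟩
  · exact lprod_not_of_two hφ h1 j
  · exact lprod_not_of_two hφ h1 j

/-- F2 -/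
lemma conj_into_factor (hφ : ∀ i, Injective (φ i)) {i j : ι} {a : G i}
    (ha : ∀ z : G i, z⁻¹ * a * z ∉ (φ i).range) {h : PushoutI φ}
    (hh : h⁻¹ * PushoutI.of i a * h ∈ (PushoutI.of (φ := φ) j).range) :
    i = j ∧ h ∈ (PushoutI.of (φ := φ) i).range := by
  obtain ⟨z, l, hl, hi, rfl⟩ := exists_left h i
  have h2 : (PushoutI.of i z * lprod φ l)⁻¹ * PushoutI.of i a * (PushoutI.of i z * lprod φ l) =
    (lprod φ l)⁻¹ * PushoutI.of i (z⁻¹ * a * z) * lprod φ l := by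
    simp [mul_assoc]
  rw [h2] at hh
  by_cases hne : l = []
  · subst hne
    refine ⟨?_, by simp⟩
    by_contra hij
    have h3 : LRed φ [⟨i, z⁻¹ * a * z⟩] := lred_cons.2 ⟨ha z, by simp, lred_nil⟩
    apply lprod_not_of hφ h3 (by simp) (j := j) (by simpa using hij)
    simpa using hh
  · exact absurd hh (conj_not_of hφ hl hne hi (ha z) j)

/-- F1 -/
lemma finite_order_conj [Nonempty ι] (hφ : ∀ i, Injective (φ i)) (k : ℕ) (hk : 0 < k)
    (h : PushoutI φ) (hh : h ^ k = 1) :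
    ∃ (i : ι) (a : G i) (x : PushoutI φ), h = x * PushoutI.of i a * x⁻¹ := by
  classical
  have base_case : ∀ h ∈ (PushoutI.base φ).range,
      ∃ (i : ι) (a : G i) (x : PushoutI φ), h = x * PushoutI.of i a * x⁻¹ := by
    rintro _ ⟨c, rfl⟩
    exact ⟨Classical.arbitrary ι, φ _ c, 1, by simp [PushoutI.of_apply_eq_base]⟩
  suffices ∀ n, ∀ l : List (Σ i, G i), l.length = n → LRed φ l → lprod φ l ^ k = 1 →
      ∃ (i : ι) (a : G i) (x : PushoutI φ), lprod φ l = x * PushoutI.of i a * x⁻¹ by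
    rcases exists_lred h with hb | ⟨l, -, hl, rfl⟩
    · exact base_case h hb
    · exact this _ l rfl hl hh
  intro n
  induction n using Nat.strong_induction_on with
  | _ n ih =>
  intro l hn hl hlk
  rcases l with _ | ⟨p, l⟩
  · exact base_case _ (by simp [one_mem])
  rcases List.eq_nil_or_concat l with rfl | ⟨m, q, rfl⟩
  · exact ⟨p.1, p.2, 1, by simp⟩
  rw [List.concat_eq_append] at *
  by_cases hpq : p.1 = q.1
  · obtain ⟨i, pa⟩ := p
    obtain ⟨i', qa⟩ := q
    obtain rfl : i = i' := hpq
    -- conjugate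
    obtain ⟨hp, hpm, hmq⟩ := lred_cons.1 hl
    obtain ⟨hm, hq, hlast⟩ := lred_append.1 hmq
    have hconj : lprod φ (⟨i, pa⟩ :: (m ++ [⟨i, qa⟩])) =
        PushoutI.of i pa * (lprod φ m * PushoutI.of i (qa * pa)) * (PushoutI.of i pa)⁻¹ := by
      simp [mul_assoc]
    have hk2 : (lprod φ m * PushoutI.of i (qa * pa)) ^ k = 1 := by
      rw [hconj, conj_pow] at hlk
      simpa using hlk
    have fin : ∀ l' : List (Σ i, G i), l'.length < n → LRed φ l' →
        lprod φ l' = lprod φ m * PushoutI.of i (qa * pa) →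
        ∃ (i' : ι) (a : G i') (x : PushoutI φ),
          lprod φ (⟨i, pa⟩ :: (m ++ [⟨i, qa⟩])) = x * PushoutI.of i' a * x⁻¹ := by
      intro l' h1 h2 h3
      obtain ⟨i', a, x, hx⟩ := ih _ h1 l' rfl h2 (by rw [h3]; exact hk2)
      refine ⟨i', a, PushoutI.of i pa * x, ?_⟩
      rw [hconj, ← h3, hx]; simp [mul_assoc]
    by_cases hr : qa * pa ∈ (φ i).range
    · obtain ⟨c, hc⟩ := hr
      rcases List.eq_nil_or_concat m with rfl | ⟨m', r, rfl⟩
      · simp at hpm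
      rw [List.concat_eq_append] at *
      obtain ⟨hm', hr', hlast'⟩ := lred_append.1 hm
      refine fin (m' ++ [⟨r.1, r.2 * φ r.1 c⟩]) ?_ ?_ ?_
      · subst hn; simp
      · refine lred_append.2 ⟨hm', lred_cons.2 ⟨?_, by simp, lred_nil⟩, ?_⟩
        · rw [Subgroup.mul_mem_cancel_right _ (MonoidHom.mem_range.2 ⟨c, rfl⟩)]
          exact (lred_cons.1 hr').1
        · intro a ha b hb
          simp only [List.head?_cons, Option.mem_def, Option.some.injEq] at hb
          subst hb
          exact hlast' a ha r (by simp)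
      · rw [← hc]
        simp [PushoutI.of_apply_eq_base, mul_assoc]
    · refine fin (m ++ [⟨i, qa * pa⟩]) ?_ ?_ ?_
      · subst hn; simp
      · refine lred_append.2 ⟨hm, lred_cons.2 ⟨hr, by simp, lred_nil⟩, ?_⟩
        intro a ha b hb
        simp only [List.head?_cons, Option.mem_def, Option.some.injEq] at hb
        subst hb
        exact hlast a ha ⟨i, qa⟩ (by simp)
      · simp
  · exfalso
    set L := p :: (m ++ [q]) with hL
    have : ∀ r : ℕ, ∃ L' : List (Σ i, G i), LRed φ (L ++ L') ∧ lprod φ (L ++ L') = lprod φ L ^ (r+1)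
        := by
      intro r
      induction r with
      | zero => exact ⟨[], by simpa using hl, by simp⟩
      | succ r ihr =>
        obtain ⟨L', h1, h2⟩ := ihr
        refine ⟨L ++ L', lred_append.2 ⟨hl, h1, ?_⟩, ?_⟩
        · intro a ha b hb
          simp only [hL, List.cons_append, List.head?_cons, Option.mem_def,
            Option.some.injEq] at hb
          have : a = q := by
            simp only [hL, Option.mem_def] at ha
            rw [← List.cons_append, List.getLast?_concat] at ha
            exact (Option.some.inj ha).symm
          subst hb this
          exact fun h => hpq h.symm
        · rw [lprod_append, h2, ← pow_succ']
    obtain ⟨L', h1, h2⟩ := this (k - 1)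
    rw [Nat.sub_add_cancel hk, hlk] at h2
    exact lprod_not_base hφ h1 (by simp [hL]) (h2 ▸ one_mem _)

end Amalgam
end Emb

/-! Part 2: free group lemmas -/
namespace Emb
open Function

section Free

/-- substitution: `some k ↦ inl k`, `none ↦ g` -/
def sg (g : FreeGroup (ℕ ⊕ ℕ)) : FreeGroup (Option ℕ) →* FreeGroup (ℕ ⊕ ℕ) :=
  FreeGroup.lift (fun o => o.elim g (fun k => FreeGroup.of (Sum.inl k)))

/-- tail letters -/
abbrev tl (i : ℕ) : FreeGroup (ℕ ⊕ ℕ) := FreeGroup.of (Sum.inr i)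

/-- list substitution -/
def lsub (i j : ℕ) : Option ℕ × Bool → List ((ℕ ⊕ ℕ) × Bool)
  | (some k, b) => [(Sum.inl k, b)]
  | (none, true) => [(Sum.inr i, true), (Sum.inr j, true)]
  | (none, false) => [(Sum.inr j, false), (Sum.inr i, false)]

lemma sg_mk (i j : ℕ) (L : List (Option ℕ × Bool)) :
    sg (tl i * tl j) (FreeGroup.mk L) = FreeGroup.mk (L.flatMap (lsub i j)) := by
  induction L with
  | nil => simp [← FreeGroup.one_eq_mk]
  | cons p L ih =>
    have h1 : FreeGroup.mk (p :: L) = FreeGroup.mk [p] * FreeGroup.mk L := by simp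
    rw [h1, map_mul, ih, List.flatMap_cons, ← FreeGroup.mul_mk]
    congr 1
    rcases p with ⟨_ | k, _ | _⟩ <;> simp [sg, lsub, FreeGroup.of, FreeGroup.invRev]

lemma lsub_reduced {i j : ℕ} (hij : i ≠ j) (L : List (Option ℕ × Bool))
    (hL : FreeGroup.IsReduced L) : FreeGroup.IsReduced (L.flatMap (lsub i j)) := by
  induction L with
  | nil => simp
  | cons p L ih =>
    have hL' : FreeGroup.IsReduced L := List.IsChain.tail hL
    have ih := ih hL'
    unfold FreeGroup.IsReduced at *
    rw [List.flatMap_cons, List.isChain_append]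
    refine ⟨?_, ih, ?_⟩
    · rcases p with ⟨_ | k, _ | _⟩ <;> simp [lsub]
    · rcases L with _ | ⟨q, L⟩
      · simp
      · have h := (List.isChain_cons_cons.1 hL).1
        rcases p with ⟨_ | k, _ | _⟩ <;> rcases q with ⟨_ | l, _ | _⟩ <;>
          simp [lsub] at h ⊢ <;> first | exact hij | exact Ne.symm hij | exact h

lemma sg_tl_sublist_letters (i : ℕ) (V : FreeGroup (Option ℕ)) :
    ∀ p ∈ (sg (tl i) V).toWord, ∀ j, p.1 = Sum.inr j → j = i := by
  -- letters of a substituted word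
  have h : sg (tl i) V = FreeGroup.map (fun o : Option ℕ => o.elim (Sum.inr i) Sum.inl) V := by
    have : sg (tl i) = FreeGroup.map (fun o : Option ℕ => o.elim (Sum.inr i) Sum.inl) := by
      ext o; rcases o with _ | k <;> simp [sg]
    rw [this]
  rw [h, ← FreeGroup.mk_toWord (x := V), FreeGroup.map.mk, FreeGroup.toWord_mk]
  intro p hp j hj
  have := (FreeGroup.reduce.red (L := List.map (fun x : Option ℕ × Bool =>
    ((x.1.elim (Sum.inr i) Sum.inl : ℕ ⊕ ℕ), x.2)) V.toWord)).sublist.subset hp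
  simp only [List.mem_map] at this
  obtain ⟨⟨o, b⟩, -, rfl⟩ := this
  rcases o with _ | k
  · simpa using hj.symm
  · simp at hj

lemma pairwise_flat {i j : ℕ} (hij : i ≠ j) (L : List (Option ℕ × Bool))
    (h : (L.flatMap (lsub i j)).Pairwise
      (fun p q => ¬ (p.1 = Sum.inr j ∧ q.1 = Sum.inr i))) :
    (∃ K : List (ℕ × Bool), L = K.map (fun p => (some p.1, p.2))) ∨
    ∃ K K' : List (ℕ × Bool), L = K.map (fun p => (some p.1, p.2)) ++
      (none, true) :: K'.map (fun p => (some p.1, p.2)) := by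
  induction L with
  | nil => exact Or.inl ⟨[], rfl⟩
  | cons p L ih =>
    rw [List.flatMap_cons, List.pairwise_append] at h
    obtain ⟨h1, h2, h3⟩ := h
    rcases p with ⟨_ | k, b⟩
    · rcases b with _ | _
      · simp [lsub] at h1
      · right
        rcases ih h2 with ⟨K, rfl⟩ | ⟨K, K', rfl⟩
        · exact ⟨[], K, rfl⟩
        · exfalso
          refine h3 (Sum.inr j, true) (by simp [lsub]) (Sum.inr i, true) ?_ ⟨rfl, rfl⟩
          simp [lsub]
    · rcases ih h2 with ⟨K, rfl⟩ | ⟨K, K', rfl⟩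
      · exact Or.inl ⟨(k, b) :: K, rfl⟩
      · exact Or.inr ⟨(k, b) :: K, K', rfl⟩

/-- constants -/
abbrev cst : FreeGroup ℕ →* FreeGroup (Option ℕ) := FreeGroup.map some

lemma sg_cst (g : FreeGroup (ℕ ⊕ ℕ)) (c : FreeGroup ℕ) :
    sg g (cst c) = FreeGroup.map Sum.inl c := by
  have : (sg g).comp cst = FreeGroup.map Sum.inl := by ext; simp [sg]
  exact DFunLike.congr_fun this c

lemma sg_none (g : FreeGroup (ℕ ⊕ ℕ)) : sg g (FreeGroup.of none) = g := by simp [sg]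

/-- evaluate `none` at 1 -/
def ev1 : FreeGroup (Option ℕ) →* FreeGroup ℕ :=
  FreeGroup.lift (fun o => o.elim 1 FreeGroup.of)

lemma ev1_cst (c : FreeGroup ℕ) : ev1 (cst c) = c := by
  have : ev1.comp cst = MonoidHom.id _ := by ext; simp [ev1]
  exact DFunLike.congr_fun this c

lemma V_lemma {i j : ℕ} (hij : i ≠ j) (V : FreeGroup (Option ℕ))
    (h : sg (tl i * tl j) V = sg (tl i) V * sg (tl j) V) :
    V = 1 ∨ ∃ c : FreeGroup ℕ, V = cst c * FreeGroup.of none * (cst c)⁻¹ := by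
  have hred := lsub_reduced hij V.toWord FreeGroup.isReduced_toWord
  have hw : (sg (tl i * tl j) V).toWord = V.toWord.flatMap (lsub i j) := by
    conv_lhs => rw [← FreeGroup.mk_toWord (x := V), sg_mk, FreeGroup.toWord_mk]
    exact hred.reduce_eq
  have hsub := FreeGroup.toWord_mul_sublist (sg (tl i) V) (sg (tl j) V)
  rw [← h, hw] at hsub
  have hpw : ((sg (tl i) V).toWord ++ (sg (tl j) V).toWord).Pairwise
      (fun p q => ¬ (p.1 = Sum.inr j ∧ q.1 = Sum.inr i)) := by
    rw [List.pairwise_append]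
    refine ⟨?_, ?_, ?_⟩
    · refine List.Pairwise.imp_of_mem ?_ (List.pairwise_of_forall (R := fun _ _ => True) (by simp))
      intro p q hp hq _ hh
      exact hij (sg_tl_sublist_letters i V p hp j hh.1).symm
    · refine List.Pairwise.imp_of_mem ?_ (List.pairwise_of_forall (R := fun _ _ => True) (by simp))
      intro p q hp hq _ hh
      exact hij (sg_tl_sublist_letters j V q hq i hh.2)
    · intro p hp q hq hh
      exact hij (sg_tl_sublist_letters i V p hp j hh.1).symm
  have hmk : ∀ K : List (ℕ × Bool), FreeGroup.mk (K.map (fun p => (some p.1, p.2))) =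
      cst (FreeGroup.mk K) := by
    intro K; simp [cst, FreeGroup.map.mk]
  have hev : ev1 V = 1 := by
    have := congrArg (FreeGroup.lift (fun s : ℕ ⊕ ℕ => s.elim FreeGroup.of (fun _ => 1))) h
    have hs : ∀ g : FreeGroup (ℕ ⊕ ℕ),
        FreeGroup.lift (fun s : ℕ ⊕ ℕ => s.elim FreeGroup.of (fun _ => (1 : FreeGroup ℕ))) g = 1 →
        ∀ V, FreeGroup.lift (fun s : ℕ ⊕ ℕ => s.elim FreeGroup.of (fun _ => (1 : FreeGroup ℕ)))
          (sg g V) = ev1 V := by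
      intro g hg V
      have : (FreeGroup.lift (fun s : ℕ ⊕ ℕ => s.elim FreeGroup.of
        (fun _ => (1 : FreeGroup ℕ)))).comp (sg g) = ev1 := by
        ext o; rcases o with _ | k
        · simp [sg, ev1, hg]
        · simp [sg, ev1]
      exact DFunLike.congr_fun this V
    rw [map_mul, hs _ (by simp), hs _ (by simp), hs _ (by simp)] at this
    simpa using this
  rcases pairwise_flat hij V.toWord (hpw.sublist hsub) with ⟨K, hK⟩ | ⟨K, K', hK⟩
  · left
    have : V = cst (FreeGroup.mk K) := by
      rw [← FreeGroup.mk_toWord (x := V), hK, hmk]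
    rw [this, ev1_cst] at hev
    rw [this, hev, map_one]
  · right
    have h1 : V = cst (FreeGroup.mk K) * FreeGroup.of none * cst (FreeGroup.mk K') := by
      rw [← hmk, ← hmk, FreeGroup.of, FreeGroup.mul_mk, FreeGroup.mul_mk]
      conv_lhs => rw [← FreeGroup.mk_toWord (x := V), hK]
      simp
    refine ⟨FreeGroup.mk K, ?_⟩
    rw [h1, map_mul, map_mul, ev1_cst, ev1_cst] at hev
    have h2 : FreeGroup.mk K' = (FreeGroup.mk K)⁻¹ := by
      have : ev1 (FreeGroup.of none) = 1 := by simp [ev1]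
      rw [this, mul_one] at hev
      exact (inv_eq_of_mul_eq_one_right hev).symm
    rw [h1, h2, map_inv]

/-- conjugation lemma -/
lemma conj_lemma (N : ℕ) (w : ℕ → FreeGroup (Option ℕ)) (u : ℕ → ℕ → FreeGroup (Option ℕ))
    (h : ∀ i j, N ≤ i → N ≤ j → i ≠ j →
      sg (tl i) (w i) * sg (tl j) (w j) = sg (tl i * tl j) (u i j)) :
    (∀ i, N ≤ i → ∃ k, w i = cst k) ∨
    ∃ c, ∀ i, N ≤ i → w i = cst c * FreeGroup.of none * (cst c)⁻¹ := by
  -- specialisations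
  have sp : ∀ i j, i ≠ j → ∀ g g', ∃ f : FreeGroup (ℕ ⊕ ℕ) →* FreeGroup (Option ℕ),
      (∀ k, f (FreeGroup.of (Sum.inl k)) = FreeGroup.of (some k)) ∧ f (tl i) = g ∧ f (tl j) = g' := by
    intro i j hij g g'
    refine ⟨FreeGroup.lift (fun s => s.elim (fun k => FreeGroup.of (some k))
      (fun n => if n = i then g else g')), by simp, by simp, by simp [hij.symm]⟩
  have spg : ∀ (f : FreeGroup (ℕ ⊕ ℕ) →* FreeGroup (Option ℕ)),
      (∀ k, f (FreeGroup.of (Sum.inl k)) = FreeGroup.of (some k)) → ∀ x, f x = FreeGroup.of none →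
      ∀ v, f (sg x v) = v := by
    intro f hf x hx v
    have : f.comp (sg x) = MonoidHom.id _ := by
      ext o; rcases o with _ | k
      · simp [sg, hx]
      · simp [sg, hf]
    exact DFunLike.congr_fun this v
  have spo : ∀ (f : FreeGroup (ℕ ⊕ ℕ) →* FreeGroup (Option ℕ)),
      (∀ k, f (FreeGroup.of (Sum.inl k)) = FreeGroup.of (some k)) → ∀ x, f x = 1 →
      ∀ v, f (sg x v) = cst (ev1 v) := by
    intro f hf x hx v
    have : f.comp (sg x) = cst.comp ev1 := by
      ext o; rcases o with _ | k
      · simp [sg, hx, ev1]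
      · simp [sg, hf, ev1]
    exact DFunLike.congr_fun this v
  have key : ∀ i j, N ≤ i → N ≤ j → i ≠ j →
      (w i = cst (ev1 (w i)) ∧ w j = cst (ev1 (w j))) ∨
      ∃ c, w i = cst (ev1 (w i) * ev1 (w j) * c) * FreeGroup.of none * (cst (ev1 (w j) * c))⁻¹ ∧
        w j = cst (ev1 (w j) * c) * FreeGroup.of none * (cst c)⁻¹ := by
    intro i j hi hj hij
    have h0 := h i j hi hj hij
    have e1 : w i * cst (ev1 (w j)) = u i j := by
      obtain ⟨f, hf, h1, h2⟩ := sp i j hij (FreeGroup.of none) 1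
      have := congrArg f h0
      rw [map_mul, spg f hf _ h1, spo f hf _ h2, spg f hf _ (by simp [h1, h2])] at this
      exact this
    have e2 : cst (ev1 (w i)) * w j = u i j := by
      obtain ⟨f, hf, h1, h2⟩ := sp i j hij 1 (FreeGroup.of none)
      have := congrArg f h0
      rw [map_mul, spo f hf _ h1, spg f hf _ h2, spg f hf _ (by simp [h1, h2])] at this
      exact this
    set ki := ev1 (w i) with hki
    set kj := ev1 (w j) with hkj
    set V := (cst (ki * kj))⁻¹ * u i j with hV
    have eu : u i j = cst (ki * kj) * V := by rw [hV, mul_inv_cancel_left]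
    have ewi : w i = cst (ki * kj) * V * (cst kj)⁻¹ := by rw [← eu, ← e1]; simp
    have ewj : w j = cst kj * V := by
      have : w j = (cst ki)⁻¹ * (cst (ki * kj) * V) := by rw [← eu, ← e2]; simp
      rw [this]; simp [mul_assoc]
    have hVV : sg (tl i * tl j) V = sg (tl i) V * sg (tl j) V := by
      rw [eu, ewi, ewj] at h0
      simp only [map_mul, map_inv, sg_cst, mul_assoc, inv_mul_cancel_left, mul_right_inj] at h0
      exact h0.symm
    rcases V_lemma hij V hVV with h1 | ⟨c, hc⟩
    · left
      rw [ewi, ewj, h1]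
      simp
    · right
      refine ⟨c, ?_, ?_⟩
      · rw [ewi, hc]; simp [mul_assoc]
      · rw [ewj, hc]; simp [mul_assoc]
  let χ : FreeGroup (Option ℕ) →* Multiplicative ℤ :=
    FreeGroup.lift (fun o => o.elim (Multiplicative.ofAdd 1) (fun _ => 1))
  have χc : ∀ c, χ (cst c) = 1 := by
    intro c
    have : χ.comp cst = 1 := by ext; simp [χ]
    exact DFunLike.congr_fun this c
  have χn : χ (FreeGroup.of none) = Multiplicative.ofAdd 1 := by simp [χ]
  have hne : (Multiplicative.ofAdd (1 : ℤ)) ≠ 1 := by decide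
  by_cases hN : χ (w N) = 1
  · left
    have : ∀ j, N ≤ j → N ≠ j → w N = cst (ev1 (w N)) ∧ w j = cst (ev1 (w j)) := by
      intro j hj hNj
      rcases key N j le_rfl hj hNj with hk | ⟨c, hc, -⟩
      · exact hk
      · exfalso
        rw [hc] at hN
        simp only [map_mul, map_inv, χc, χn] at hN
        simp at hN
    intro i hi
    by_cases hNi : N = i
    · subst hNi
      exact ⟨_, (this (N+1) (by omega) (by omega)).1⟩
    · exact ⟨_, (this i hi hNi).2⟩
  · right
    have hall : ∀ i, N ≤ i → χ (w i) ≠ 1 := by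
      intro i hi
      by_cases hNi : N = i
      · exact hNi ▸ hN
      · rcases key N i le_rfl hi hNi with hk | ⟨c, -, hc⟩
        · exact absurd (by rw [hk.1, χc]) hN
        · rw [hc]
          simp only [map_mul, map_inv, χc, χn]
          simp
    have key2 : ∀ i j, N ≤ i → N ≤ j → i ≠ j →
      ∃ c, w i = cst (ev1 (w i) * ev1 (w j) * c) * FreeGroup.of none * (cst (ev1 (w j) * c))⁻¹ ∧
        w j = cst (ev1 (w j) * c) * FreeGroup.of none * (cst c)⁻¹ := by
      intro i j hi hj hij
      rcases key i j hi hj hij with hk | hk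
      · exact absurd (by rw [hk.1, χc]) (hall i hi)
      · exact hk
    -- uniqueness of the form
    have uniq : ∀ a b a' b' : FreeGroup ℕ,
        cst a * FreeGroup.of none * (cst b)⁻¹ = cst a' * FreeGroup.of none * (cst b')⁻¹ →
        a = a' ∧ b = b' := by
      intro a b a' b' hab
      have h1 : cst (a'⁻¹ * a) * FreeGroup.of none * cst (b⁻¹ * b') = FreeGroup.of none := by
        have : cst (a'⁻¹ * a) * FreeGroup.of none * cst (b⁻¹ * b') =
          (cst a')⁻¹ * (cst a * FreeGroup.of none * (cst b)⁻¹) * cst b' := by simp [mul_assoc]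
        rw [this, hab]; simp [mul_assoc]
      have h2 := congrArg ev1 h1
      have h3 : ev1 (FreeGroup.of none) = 1 := by simp [ev1]
      rw [map_mul, map_mul, h3, ev1_cst, ev1_cst, mul_one] at h2
      -- send none to a new letter commuting test
      have h4 : a'⁻¹ * a = 1 := by
        by_contra hne
        set d := a'⁻¹ * a with hd
        have hb : b⁻¹ * b' = d⁻¹ := (inv_eq_of_mul_eq_one_right h2).symm
        rw [hb] at h1
        -- action on functions: use map to Perm via generic group FreeGroup ℕ wr
        let f : FreeGroup (Option ℕ) →* Equiv.Perm (FreeGroup ℕ) :=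
          FreeGroup.lift (fun o => o.elim (Equiv.swap 1 d)
            (fun k => MulAction.toPerm (FreeGroup.of k)))
        have hf : ∀ c, f (cst c) = MulAction.toPerm c := by
          intro c
          have : f.comp cst = MulAction.toPermHom (FreeGroup ℕ) (FreeGroup ℕ) := by
            ext x y; simp [f]
          exact DFunLike.congr_fun this c
        have hfn : f (FreeGroup.of none) = Equiv.swap 1 d := by simp [f]
        have h5 := congrArg f h1
        rw [map_mul, map_mul, hf, hf, hfn] at h5
        have h6 := DFunLike.congr_fun h5 1
        simp only [Equiv.Perm.coe_mul, comp_apply, MulAction.toPerm_apply, smul_eq_mul, mul_one,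
          Equiv.swap_apply_left] at h6
        have h7 : Equiv.swap 1 d d⁻¹ = 1 := by
          have := congrArg (fun x => d⁻¹ * x) h6
          simpa using this
        have h8 : d⁻¹ = d := by
          have := congrArg (Equiv.swap 1 d) h7
          simpa using this
        have h9 : d ^ 2 = 1 := by
          rw [pow_two]; nth_rewrite 1 [← h8]; simp
        exact hne ((pow_eq_one_iff_left (by norm_num : (2:ℕ) ≠ 0)).1 h9)
      refine ⟨(inv_mul_eq_one.1 h4).symm, ?_⟩
      rw [h4, one_mul] at h2
      exact (inv_mul_eq_one.1 h2)
    have hk : ∀ i j, N ≤ i → N ≤ j → i ≠ j → ev1 (w i) * ev1 (w j) = 1 := by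
      intro i j hi hj hij
      obtain ⟨c, h1, h2⟩ := key2 i j hi hj hij
      obtain ⟨c', h3, h4⟩ := key2 j i hj hi hij.symm
      have e1 := uniq _ _ _ _ (h2.symm.trans h3)
      have e2 := uniq _ _ _ _ (h1.symm.trans h4)
      have : c = ev1 (w i) * (ev1 (w j) * c) := by
        rw [e2.2]; exact e1.2
      rw [← mul_assoc] at this
      exact mul_eq_right.1 this.symm
    have hk1 : ∀ i, N ≤ i → ev1 (w i) = 1 := by
      intro i hi
      have a1 := hk i (i+1) hi (by omega) (by omega)
      have a2 := hk (i+1) (i+2) (by omega) (by omega) (by omega)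
      have a3 := hk i (i+2) hi (by omega) (by omega)
      have b1 : ev1 (w (i+1)) = (ev1 (w i))⁻¹ := (inv_eq_of_mul_eq_one_right a1).symm
      have b2 : ev1 (w (i+2)) = ev1 (w i) := by
        rw [b1] at a2; simpa using (inv_eq_of_mul_eq_one_right a2).symm
      rw [b2, ← pow_two] at a3
      exact (pow_eq_one_iff_left (by norm_num : (2:ℕ) ≠ 0)).1 a3
    obtain ⟨c, h1, -⟩ := key2 N (N+1) le_rfl (by omega) (by omega)
    refine ⟨c, fun i hi => ?_⟩
    rw [hk1 N le_rfl, hk1 (N+1) (by omega), one_mul, one_mul] at h1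
    by_cases hNi : N = i
    · subst hNi; exact h1
    · obtain ⟨c', h3, h4⟩ := key2 N i le_rfl hi hNi
      rw [hk1 N le_rfl, hk1 i hi, one_mul, one_mul] at h3
      rw [hk1 i hi, one_mul] at h4
      rw [h4, ← h3, h1]

end Free

section Two
open FreeGroup

lemma list_comm_const {α : Type*} (a : α) (L : List α) (h : L ++ [a] = a :: L) :
    ∀ x ∈ L, x = a := by
  induction L with
  | nil => simp
  | cons b L ih =>
    simp only [List.cons_append, List.cons.injEq] at h
    obtain ⟨rfl, h⟩ := h
    intro x hx
    rcases List.mem_cons.1 hx with rfl | hx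
    · rfl
    · exact ih h x hx

lemma comm_of_gen {α : Type*} [DecidableEq α] (a : α) :
    ∀ n : ℕ, ∀ z : FreeGroup α, z.toWord.length = n → of a * z = z * of a →
      ∃ k : ℤ, z = of a ^ k := by
  intro n
  induction n using Nat.strong_induction_on with
  | _ n ih =>
  intro z hn hz
  rcases hL : z.toWord with _ | ⟨⟨b, s⟩, L⟩
  · exact ⟨0, by simpa [toWord_eq_nil_iff] using hL⟩
  have hz' : z = mk [(b, s)] * mk L := by
    rw [← mk_toWord (x := z), hL]; simp
  have hred : IsReduced ((b, s) :: L) := by rw [← hL]; exact isReduced_toWord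
  have hLr : (mk L).toWord = L := by
    rw [toWord_mk]; exact IsReduced.reduce_eq (List.IsChain.tail hred)
  by_cases hb : b = a
  · subst hb
    have hs : mk [(b, s)] = of b ^ (if s then (1:ℤ) else -1) := by
      cases s <;> simp [of, invRev]
    obtain ⟨k, hk⟩ := ih L.length (by rw [← hn, hL]; simp) (mk L) (by rw [hLr]) (by
      have h1 : mk L = (mk [(b, s)])⁻¹ * z := by rw [hz']; group
      rw [h1, hs, ← mul_assoc, mul_assoc _ z, ← hz]
      group)
    exact ⟨_, by rw [hz', hk, hs, ← zpow_add]⟩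
  · exfalso
    have h1 : (of a * z).toWord = (a, true) :: (b, s) :: L := by
      rw [toWord_mul, hL, toWord_of]
      apply IsReduced.reduce_eq
      exact List.isChain_cons_cons.2 ⟨fun h => absurd h.symm hb, hred⟩
    have h2 : ((a, true) :: (b, s) :: L).Sublist (((b, s) :: L) ++ [(a, true)]) := by
      rw [← h1, hz, ← hL, ← toWord_of]
      exact toWord_mul_sublist _ _
    have h3 := h2.eq_of_length (by simp)
    have h4 := list_comm_const _ _ h3.symm (b, s) (by simp)
    exact hb (Prod.mk.inj h4).1

/-- x y x^{-1} elements -/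
lemma S2_free (z : FreeGroup Bool) (h1 : of true * z = z * of true)
    (h2 : (of false * of true * (of false)⁻¹) * z = z * (of false * of true * (of false)⁻¹)) :
    z = 1 := by
  obtain ⟨k, hk⟩ := comm_of_gen true _ z rfl h1
  obtain ⟨m, hm⟩ := comm_of_gen true _ ((of false)⁻¹ * z * of false) rfl (by
    have : of true * ((of false)⁻¹ * z * of false) =
      (of false)⁻¹ * ((of false * of true * (of false)⁻¹) * z) * of false := by group
    rw [this, h2]; group)
  let χ : Bool → FreeGroup Bool →* Multiplicative ℤ := fun b =>
    FreeGroup.lift (fun c => if c = b then Multiplicative.ofAdd 1 else 1)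
  have e1 := congrArg (χ true) hk
  have e2 := congrArg (χ true) hm
  have hkm : k = m := by
    simp [χ] at e1 e2
    rw [e1] at e2
    simpa [← ofAdd_zsmul] using e2
  subst hkm
  have hc : of false * z = z * of false := by
    rw [← hk] at hm
    rw [← mul_assoc] at *
    have := congrArg (fun t => of false * t) hm
    simpa [mul_assoc] using this.symm
  obtain ⟨l, hl⟩ := comm_of_gen false _ z rfl hc
  have e3 := congrArg (χ true) hl
  have hk0 : k = 0 := by
    rw [e1] at e3
    simpa [χ, ← ofAdd_zsmul] using e3
  rw [hk, hk0, zpow_zero]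

/-- the conjugates x^i y x^-i are free -/
lemma free_conj : Function.Injective (FreeGroup.lift (fun i : ℕ =>
    (of false ^ i * of true * (of false ^ i)⁻¹ : FreeGroup Bool))) := by
  let X : Equiv.Perm (ℤ × FreeGroup ℤ) := 
    { toFun := fun p => (p.1 + 1, p.2)
      invFun := fun p => (p.1 - 1, p.2)
      left_inv := fun p => by simp
      right_inv := fun p => by simp }
  let Y : Equiv.Perm (ℤ × FreeGroup ℤ) := 
    { toFun := fun p => (p.1, of (-p.1) * p.2)
      invFun := fun p => (p.1, (of (-p.1))⁻¹ * p.2)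
      left_inv := fun p => by simp
      right_inv := fun p => by simp }
  let f : FreeGroup Bool →* Equiv.Perm (ℤ × FreeGroup ℤ) :=
    FreeGroup.lift (fun b => if b then Y else X)
  have hX : ∀ (i : ℕ) p, (X ^ i) p = (p.1 + i, p.2) := by
    intro i
    induction i with
    | zero => simp
    | succ i ih => 
      intro p; rw [pow_succ', Equiv.Perm.mul_apply, ih]
      simp [X, add_assoc]
  have hX' : ∀ (i : ℕ) p, ((X ^ i)⁻¹) p = (p.1 - i, p.2) := by
    intro i p
    rw [Equiv.Perm.inv_eq_iff_eq, hX]; simp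
  have hf : ∀ ω : FreeGroup ℕ, ∀ v, f (FreeGroup.lift (fun i : ℕ =>
    (of false ^ i * of true * (of false ^ i)⁻¹ : FreeGroup Bool)) ω) (0, v) =
      (0, FreeGroup.map (fun n : ℕ => (n : ℤ)) ω * v) := by
    intro ω
    have g : ∀ i : ℕ, ∀ v, f (of false ^ i * of true * (of false ^ i)⁻¹) (0, v) =
        (0, of (i : ℤ) * v) := by
      intro i v
      have hfx : f (of false) = X := by simp [f]
      have hfy : f (of true) = Y := by simp [f]
      rw [_root_.map_mul, _root_.map_mul, _root_.map_inv, _root_.map_pow, hfx, hfy, Equiv.Perm.mul_apply, Equiv.Perm.mul_apply]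
      rw [hX']
      simp [hX, Y]
    induction ω using FreeGroup.induction_on with
    | C1 => simp
    | of i => intro v; simpa using g i v
    | inv_of i _ =>
      intro v
      simp only [_root_.map_inv, lift_apply_of]
      rw [← _root_.map_inv, _root_.map_inv, Equiv.Perm.inv_eq_iff_eq, g]
      simp
    | mul a b ha hb => intro v; simp only [_root_.map_mul, Equiv.Perm.mul_apply] ; rw [hb, ha]; simp [mul_assoc]
  rw [injective_iff_map_eq_one]
  intro ω hω
  have := hf ω 1
  rw [hω, _root_.map_one] at this
  simp only [Equiv.Perm.coe_one, id_eq, mul_one, Prod.mk.injEq, true_and] at this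
  apply FreeGroup.map_injective (f := fun n : ℕ => (n : ℤ)) (fun a b h => by simpa using h)
  rw [← this, _root_.map_one]

end Two
end Emb

/-! Part 3: sides, good states -/
namespace Emb
open Function

/-- the abstract properties of the countable group `A`. -/
structure Side (A : Type) [Group A] where
  x : A
  y : A
  kk : A
  Gs : Subgroup A
  Am : ℕ → Subgroup A
  t : ℕ → A
  mono : Monotone Am
  union : ∀ a, ∃ m, a ∈ Am m
  x_mem : x ∈ Am 0
  y_mem : y ∈ Am 0
  kk_mem : kk ∈ Am 0
  Gs_le : Gs ≤ Am 0
  ext : ∀ (m : ℕ) (X : Type) [Group X] (f : Am m →* X) (τ : X),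
    ∃ Λ : A →* X, (∀ a : Am m, Λ a = f a) ∧ Λ (t m) = τ
  kk_pow : kk ^ 3 = 1
  kk_ne : kk ≠ 1
  x_kk : x * kk * x⁻¹ = kk ∨ x * kk * x⁻¹ = kk⁻¹
  y_kk : y * kk * y⁻¹ = kk ∨ y * kk * y⁻¹ = kk⁻¹
  free : ∀ ε : ℕ → Bool, ∀ ω : FreeGroup ℕ,
    FreeGroup.lift (fun i => if ε i then kk * (x ^ i * y * (x ^ i)⁻¹) else x ^ i * y * (x ^ i)⁻¹) ω
      = 1 → ω = 1
  conj : ∀ ε : ℕ → Bool, ∀ ω : FreeGroup ℕ, ∀ z : A, ∀ g ∈ Gs,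
    FreeGroup.lift (fun i => if ε i then kk * (x ^ i * y * (x ^ i)⁻¹) else x ^ i * y * (x ^ i)⁻¹) ω
      = z * g * z⁻¹ → g = 1
  comm : ∀ i z, z * (x ^ i * y * (x ^ i)⁻¹) = (x ^ i * y * (x ^ i)⁻¹) * z →
    z * (x ^ (i+1) * y * (x ^ (i+1))⁻¹) = (x ^ (i+1) * y * (x ^ (i+1))⁻¹) * z → z = 1
  kk_cm : ∀ k, k ^ 3 = 1 → (x * k * x⁻¹ = k ∨ x * k * x⁻¹ = k⁻¹) →
    (y * k * y⁻¹ = k ∨ y * k * y⁻¹ = k⁻¹) → k * kk = kk * k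
  mal : ∀ h, h ∉ Gs → ∀ g ∈ Gs, h * g * h⁻¹ ∈ Gs → g = 1

section
variable {A : Type} [Group A] (S : Side A)

/-- tail letters in `A` -/
def Side.a (i : ℕ) : A := S.x ^ i * S.y * (S.x ^ i)⁻¹

/-- twisted tail letters -/
def Side.ae (ε : ℕ → Bool) (i : ℕ) : A := if ε i then S.kk * S.a i else S.a i

lemma Side.a_mem (i m : ℕ) : S.a i ∈ S.Am m := by
  apply S.mono (Nat.zero_le m)
  exact mul_mem (mul_mem (pow_mem S.x_mem _) S.y_mem) (inv_mem (pow_mem S.x_mem _))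

lemma Side.ae_mem (ε) (i m : ℕ) : S.ae ε i ∈ S.Am m := by
  unfold Side.ae
  split_ifs
  · exact mul_mem (S.mono (Nat.zero_le m) S.kk_mem) (S.a_mem i m)
  · exact S.a_mem i m

/-- the family of generators -/
def fam (L : List A) (ε : ℕ → Bool) : ℕ ⊕ ℕ → A :=
  Sum.elim (fun k => L.getD k 1) (S.ae ε)

/-- index set -/
def idx (n N : ℕ) : Set (ℕ ⊕ ℕ) := {s | Sum.elim (fun k => k < n) (fun i => N ≤ i) s}

@[simp] lemma mem_idx_inl {n N k} : Sum.inl k ∈ idx n N ↔ k < n := Iff.rfl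
@[simp] lemma mem_idx_inr {n N i} : Sum.inr i ∈ idx n N ↔ N ≤ i := Iff.rfl

/-- generated free subgroup of the free group -/
def FI (n N : ℕ) : Subgroup (FreeGroup (ℕ ⊕ ℕ)) := Subgroup.closure (FreeGroup.of '' idx n N)

/-- the subgroup generated -/
def EE (L : List A) (N : ℕ) (ε : ℕ → Bool) : Subgroup A :=
  Subgroup.closure (fam S L ε '' idx L.length N)

/-- list closure -/
def CC (L : List A) : Subgroup A := Subgroup.closure {z | z ∈ L}

lemma of_mem_FI {n N : ℕ} {j : ℕ ⊕ ℕ} (h : j ∈ idx n N) : FreeGroup.of j ∈ FI n N :=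
  Subgroup.subset_closure ⟨j, h, rfl⟩

lemma lift_mem_iff {J : Type*} (F : J → A) (I : Set J) (z : A) :
    z ∈ Subgroup.closure (F '' I) ↔
      ∃ ω ∈ Subgroup.closure (FreeGroup.of '' I), FreeGroup.lift F ω = z := by
  have : Subgroup.closure (F '' I) =
      (Subgroup.closure (FreeGroup.of '' I)).map (FreeGroup.lift F) := by
    rw [MonoidHom.map_closure, Set.image_image]
    simp
  rw [this, Subgroup.mem_map]

lemma mem_EE {L : List A} {N ε z} :
    z ∈ EE S L N ε ↔ ∃ ω ∈ FI L.length N, FreeGroup.lift (fam S L ε) ω = z :=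
  lift_mem_iff _ _ _

lemma fam_mem_EE {L : List A} {N ε j} (h : j ∈ idx L.length N) : fam S L ε j ∈ EE S L N ε :=
  Subgroup.subset_closure ⟨j, h, rfl⟩

lemma CC_le_EE (L : List A) (N ε) : CC L ≤ EE S L N ε := by
  unfold CC
  rw [Subgroup.closure_le]
  intro z hz
  obtain ⟨k, hk, rfl⟩ := List.getElem_of_mem hz
  have := fam_mem_EE S (L := L) (N := N) (ε := ε) (j := Sum.inl k) hk
  simpa [fam, hk] using this

lemma CC_mono {L M : List A} (h : L <+: M) : CC L ≤ CC M :=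
  Subgroup.closure_mono fun _ hz => h.subset hz

lemma mem_CC {L : List A} {z : A} (h : z ∈ L) : z ∈ CC L := Subgroup.subset_closure h

lemma getD_mem_CC (L : List A) (k : ℕ) : L.getD k 1 ∈ CC L := by
  by_cases hk : k < L.length
  · rw [List.getD_eq_getElem _ _ hk]; exact mem_CC (List.getElem_mem hk)
  · rw [List.getD_eq_default _ _ (by omega)]; exact one_mem _

lemma idx_mono {n n' N N'} (h : n ≤ n') (h' : N' ≤ N) : idx n N ⊆ idx n' N' := by
  rintro (k | i) hk
  · exact lt_of_lt_of_le hk h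
  · exact le_trans h' hk

lemma FI_mono {n n' N N'} (h : n ≤ n') (h' : N' ≤ N) : FI n N ≤ FI n' N' :=
  Subgroup.closure_mono (Set.image_mono (idx_mono h h'))

lemma EE_anti (L : List A) {N N'} (h : N ≤ N') (ε) : EE S L N' ε ≤ EE S L N ε :=
  Subgroup.closure_mono (Set.image_mono (idx_mono le_rfl h))

/-- agreement of homs on a closure -/
lemma eqOn_closure {J X : Type*} [Group X] (f g : FreeGroup J →* X) (I : Set J)
    (h : ∀ j ∈ I, f (FreeGroup.of j) = g (FreeGroup.of j)) :
    ∀ ω ∈ Subgroup.closure (FreeGroup.of '' I), f ω = g ω := by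
  intro ω hω
  exact MonoidHom.eqOn_closure (f := f) (g := g) (s := FreeGroup.of '' I)
    (by rintro _ ⟨j, hj, rfl⟩; exact h j hj) hω

lemma map_mem_closure {J X : Type*} [Group X] (f : FreeGroup J →* X) (I : Set J) (K : Subgroup X)
    (h : ∀ j ∈ I, f (FreeGroup.of j) ∈ K) :
    ∀ ω ∈ Subgroup.closure (FreeGroup.of '' I), f ω ∈ K := by
  intro ω hω
  have : Subgroup.closure (FreeGroup.of '' I) ≤ K.comap f := by
    rw [Subgroup.closure_le]
    rintro _ ⟨j, hj, rfl⟩; exact h j hj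
  exact this hω

/-- good one-sided states -/
structure Good (L : List A) (N : ℕ) (X : List A) : Prop where
  free : ∀ ε, ∀ ω ∈ FI L.length N, FreeGroup.lift (fam S L ε) ω = 1 → ω = 1
  conj : ∀ ε, ∀ e ∈ EE S L N ε, ∀ z, ∀ g ∈ S.Gs, e = z * g * z⁻¹ → g = 1
  avoid : ∀ ε, ∀ x ∈ X, x ∉ EE S L N ε

variable {S}

lemma Good.inj {L N X} (h : Good S L N X) (ε) {ω ω'} (hω : ω ∈ FI L.length N)
    (hω' : ω' ∈ FI L.length N)
    (he : FreeGroup.lift (fam S L ε) ω = FreeGroup.lift (fam S L ε) ω') : ω = ω' := by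
  have := h.free ε (ω * ω'⁻¹) (mul_mem hω (inv_mem hω')) (by rw [map_mul, map_inv, he]; simp)
  exact mul_inv_eq_one.1 this

lemma Good.mono {L N X} (h : Good S L N X) {N'} (hN : N ≤ N') : Good S L N' X :=
  ⟨fun ε ω hω => h.free ε ω (FI_mono le_rfl hN hω),
   fun ε e he => h.conj ε e (EE_anti S L hN ε he),
   fun ε x hx hx' => h.avoid ε x hx (EE_anti S L hN ε hx')⟩

lemma Good.sub {L N X} (h : Good S L N X) {X'} (hX : ∀ x ∈ X', x ∈ X) : Good S L N X' :=
  ⟨h.free, h.conj, fun ε x hx => h.avoid ε x (hX x hx)⟩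

lemma good_nil : Good S [] 0 [] := by
  have key : ∀ ε ω, ω ∈ FI ([] : List A).length 0 → ∃ ω' : FreeGroup ℕ, ω = FreeGroup.map Sum.inr ω' ∧
      FreeGroup.lift (fam S [] ε) ω = FreeGroup.lift (fun i => if ε i then
        S.kk * (S.x ^ i * S.y * (S.x ^ i)⁻¹) else S.x ^ i * S.y * (S.x ^ i)⁻¹) ω' := by
    intro ε ω hω
    have : ω ∈ (FreeGroup.map (Sum.inr : ℕ → ℕ ⊕ ℕ)).range := by
      refine map_mem_closure (MonoidHom.id _) _ _ ?_ ω hω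
      rintro (k | i) hj
      · simp at hj
      · exact ⟨FreeGroup.of i, by simp⟩
    obtain ⟨ω', rfl⟩ := this
    refine ⟨ω', rfl, ?_⟩
    have : (FreeGroup.lift (fam S [] ε)).comp (FreeGroup.map Sum.inr) =
      FreeGroup.lift (fun i => if ε i then
        S.kk * (S.x ^ i * S.y * (S.x ^ i)⁻¹) else S.x ^ i * S.y * (S.x ^ i)⁻¹) := by
      ext i; simp [fam, Side.ae, Side.a]
    exact DFunLike.congr_fun this ω'
  refine ⟨?_, ?_, by simp⟩
  · intro ε ω hω h1
    obtain ⟨ω', rfl, h2⟩ := key ε ω hω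
    rw [h1] at h2
    rw [S.free ε ω' h2.symm, map_one]
  · intro ε e he z g hg h1
    obtain ⟨ω, hω, rfl⟩ := (mem_EE S).1 he
    obtain ⟨ω', rfl, h2⟩ := key ε ω hω
    exact S.conj ε ω' z g hg (h2.symm.trans h1)

/-- letters of a word are bounded -/
lemma FI_bounded {n N : ℕ} {ω} (hω : ω ∈ FI n N) :
    ∃ M, N ≤ M ∧ ω ∈ Subgroup.closure (FreeGroup.of '' {s : ℕ ⊕ ℕ | s ∈ idx n N ∧
      Sum.elim (fun _ => True) (fun i => i < M) s}) := by
  have up : ∀ {M M'}, M ≤ M' → Subgroup.closure (FreeGroup.of '' {s : ℕ ⊕ ℕ | s ∈ idx n N ∧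
      Sum.elim (fun _ => True) (fun i => i < M) s}) ≤
      Subgroup.closure (FreeGroup.of '' {s : ℕ ⊕ ℕ | s ∈ idx n N ∧
      Sum.elim (fun _ => True) (fun i => i < M') s}) := by
    intro M M' h
    apply Subgroup.closure_mono (Set.image_mono _)
    rintro (k | i) ⟨h1, h2⟩
    · exact ⟨h1, trivial⟩
    · exact ⟨h1, lt_of_lt_of_le h2 h⟩
  induction hω using Subgroup.closure_induction with
  | mem x hx =>
    obtain ⟨(k | i), hj, rfl⟩ := hx
    · exact ⟨N, le_rfl, Subgroup.subset_closure ⟨_, ⟨hj, trivial⟩, rfl⟩⟩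
    · exact ⟨i + 1, by simp at hj; omega, Subgroup.subset_closure ⟨_, ⟨hj, Nat.lt_succ_self i⟩, rfl⟩⟩
  | one => exact ⟨N, le_rfl, one_mem _⟩
  | mul x y _ _ hx hy =>
    obtain ⟨M, h1, h2⟩ := hx
    obtain ⟨M', h3, h4⟩ := hy
    exact ⟨max M M', by omega, mul_mem (up (le_max_left _ _) h2) (up (le_max_right _ _) h4)⟩
  | inv x _ hx =>
    obtain ⟨M, h1, h2⟩ := hx
    exact ⟨M, h1, inv_mem h2⟩

lemma Good.drop {L N X} (h : Good S L N X) {z : A} (hz : z ∉ CC L) :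
    ∃ M, N ≤ M ∧ ∀ M', M ≤ M' → ∀ ε, z ∉ EE S L M' ε := by
  by_cases hall : ∀ ε, z ∉ EE S L N ε
  · exact ⟨N, le_rfl, fun M' hM ε hzz => hall ε (EE_anti S L hM ε hzz)⟩
  push Not at hall
  obtain ⟨ε0, hz0⟩ := hall
  obtain ⟨ω, hω, hωz⟩ := (mem_EE S).1 hz0
  obtain ⟨M, hNM, hωM⟩ := FI_bounded hω
  refine ⟨M, hNM, fun M' hM ε hzz => hz ?_⟩
  obtain ⟨ω', hω', hωz'⟩ := (mem_EE S).1 hzz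
  let ε'' : ℕ → Bool := fun i => if i < M' then ε0 i else ε i
  have e1 : FreeGroup.lift (fam S L ε'') ω = z := by
    rw [← hωz]
    refine eqOn_closure _ _ _ ?_ ω hωM
    rintro (k | i) ⟨h1, h2⟩
    · simp [fam]
    · have : i < M' := lt_of_lt_of_le h2 hM
      simp [fam, Side.ae, ε'', this]
  have e2 : FreeGroup.lift (fam S L ε'') ω' = z := by
    rw [← hωz']
    refine eqOn_closure _ _ _ ?_ ω' hω'
    rintro (k | i) h1
    · simp [fam]
    · have : ¬ i < M' := by simpa using h1
      simp [fam, Side.ae, ε'', this]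
  have e3 : ω = ω' := h.inj ε'' hω (FI_mono le_rfl (hNM.trans hM) hω') (e1.trans e2.symm)
  -- kill letters
  let κ : FreeGroup (ℕ ⊕ ℕ) →* FreeGroup (ℕ ⊕ ℕ) :=
    FreeGroup.lift (Sum.elim (fun k => FreeGroup.of (Sum.inl k))
      (fun i => if i < M' then 1 else FreeGroup.of (Sum.inr i)))
  have k1 : κ ω = ω := by
    conv_rhs => rw [e3]
    rw [e3]
    refine eqOn_closure κ (MonoidHom.id _) _ ?_ ω' hω'
    rintro (k | i) h1
    · simp [κ]
    · have : ¬ i < M' := by simpa using h1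
      simp [κ, this]
  have k2 : FreeGroup.lift (fam S L ε'') (κ ω) ∈ CC L := by
    refine map_mem_closure ((FreeGroup.lift (fam S L ε'')).comp κ) _ _ ?_ ω hωM
    rintro (k | i) ⟨h1, h2⟩
    · simpa [κ, fam] using getD_mem_CC L k
    · have : i < M' := lt_of_lt_of_le h2 hM
      simp [κ, this, one_mem]
  rwa [k1, e1] at k2

lemma Good.add {L N X} (h : Good S L N X) {z : A} (hz : z ∉ CC L) :
    ∃ M, N ≤ M ∧ Good S L M (z :: X) := by
  obtain ⟨M, hM, h1⟩ := h.drop hz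
  refine ⟨M, hM, ⟨(h.mono hM).free, (h.mono hM).conj, ?_⟩⟩
  intro ε x hx
  rcases List.mem_cons.1 hx with rfl | hx
  · exact h1 M le_rfl ε
  · exact (h.mono hM).avoid ε x hx

lemma Good.adds {L N X} (h : Good S L N X) (zs : List A) (hz : ∀ z ∈ zs, z ∉ CC L) :
    ∃ M, N ≤ M ∧ Good S L M (zs ++ X) := by
  induction zs with
  | nil => exact ⟨N, le_rfl, by simpa using h⟩
  | cons z zs ih =>
    obtain ⟨M, h1, h2⟩ := ih (fun z hz' => hz z (List.mem_cons_of_mem _ hz'))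
    obtain ⟨M', h3, h4⟩ := h2.add (hz z (by simp))
    exact ⟨M', h1.trans h3, h4⟩

lemma fam_append_left {L M : List A} {ε k} (hk : k < L.length) :
    fam S (L ++ M) ε (Sum.inl k) = fam S L ε (Sum.inl k) := by
  simp only [fam, Sum.elim_inl]
  rw [List.getD_append _ _ _ _ hk]

/-- transfer: append a word in reserved letters -/
lemma Good.transfer {L N X} (h : Good S L N X) {τ : A} {M : ℕ} (hM : N ≤ M)
    (ωt : FreeGroup (ℕ ⊕ ℕ)) (hωt : ωt ∈ FI L.length N)
    (ρ : FreeGroup (ℕ ⊕ ℕ) →* FreeGroup (ℕ ⊕ ℕ))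
    (hρ1 : ∀ j ∈ idx L.length M, ρ (FreeGroup.of j) = FreeGroup.of j)
    (hρ2 : ρ ωt = FreeGroup.of (Sum.inl L.length))
    (hτ : ∀ ε : ℕ → Bool, ∃ ε₁ : ℕ → Bool, (∀ i, M ≤ i → ε₁ i = ε i) ∧
      FreeGroup.lift (fam S L ε₁) ωt = τ) :
    Good S (L ++ [τ]) M X := by
  let s : FreeGroup (ℕ ⊕ ℕ) →* FreeGroup (ℕ ⊕ ℕ) :=
    FreeGroup.lift (fun j => if j = Sum.inl L.length then ωt else FreeGroup.of j)
  have sI : ∀ j ∈ idx (L ++ [τ]).length M, s (FreeGroup.of j) ∈ FI L.length N := by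
    intro j hj
    by_cases hjn : j = Sum.inl L.length
    · simpa [s, hjn] using hωt
    · simp only [s, FreeGroup.lift_apply_of, hjn, if_false]
      apply of_mem_FI
      rcases j with k | i
      · simp at hj hjn ⊢; omega
      · simp at hj ⊢; omega
  have ρs : ∀ ω ∈ FI (L ++ [τ]).length M, ρ (s ω) = ω := by
    refine eqOn_closure (ρ.comp s) (MonoidHom.id _) _ ?_
    intro j hj
    by_cases hjn : j = Sum.inl L.length
    · simp [s, hjn, hρ2]
    · simp only [MonoidHom.comp_apply, s, FreeGroup.lift_apply_of, hjn, if_false, MonoidHom.id_apply]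
      apply hρ1
      rcases j with k | i
      · simp at hj hjn ⊢; omega
      · simpa using hj
  have key : ∀ ε, ∃ ε₁, ∀ ω ∈ FI (L ++ [τ]).length M,
      FreeGroup.lift (fam S (L ++ [τ]) ε) ω = FreeGroup.lift (fam S L ε₁) (s ω) := by
    intro ε
    obtain ⟨ε₁, h1, h2⟩ := hτ ε
    refine ⟨ε₁, eqOn_closure _ ((FreeGroup.lift (fam S L ε₁)).comp s) _ ?_⟩
    intro j hj
    by_cases hjn : j = Sum.inl L.length
    · subst hjn
      simp only [s, MonoidHom.comp_apply, FreeGroup.lift_apply_of, if_true, h2]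
      simp [fam]
    · simp only [MonoidHom.comp_apply, s, FreeGroup.lift_apply_of, hjn, if_false]
      rcases j with k | i
      · apply fam_append_left
        simp at hj hjn ⊢; omega
      · simp [fam, Side.ae, h1 i (by simpa using hj)]
  have sFI : ∀ ω ∈ FI (L ++ [τ]).length M, s ω ∈ FI L.length N :=
    map_mem_closure s _ _ sI
  have EEle : ∀ ε, ∃ ε₁, EE S (L ++ [τ]) M ε ≤ EE S L N ε₁ := by
    intro ε
    obtain ⟨ε₁, h1⟩ := key ε
    refine ⟨ε₁, fun z hz => ?_⟩
    obtain ⟨ω, hω, rfl⟩ := (mem_EE S).1 hz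
    rw [h1 ω hω]
    exact (mem_EE S).2 ⟨s ω, sFI ω hω, rfl⟩
  refine ⟨?_, ?_, ?_⟩
  · intro ε ω hω h1
    obtain ⟨ε₁, h2⟩ := key ε
    rw [h2 ω hω] at h1
    have h3 := h.free ε₁ (s ω) (sFI ω hω) h1
    have h4 := ρs ω hω
    rw [h3, map_one] at h4
    exact h4.symm
  · intro ε e he
    obtain ⟨ε₁, h1⟩ := EEle ε
    exact h.conj ε₁ e (h1 he)
  · intro ε x hx hx'
    obtain ⟨ε₁, h1⟩ := EEle ε
    exact h.avoid ε₁ x hx (h1 hx')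

/-- append one reserved letter -/
lemma Good.app1 {L N X} (h : Good S L N X) {i : ℕ} (hi : N ≤ i) (b : Bool) :
    Good S (L ++ [if b then S.kk * S.a i else S.a i]) (i+1) X := by
  refine h.transfer (by omega) (tl i) (of_mem_FI (by simpa using hi))
    (FreeGroup.lift (fun j => if j = Sum.inr i then FreeGroup.of (Sum.inl L.length)
      else FreeGroup.of j)) ?_ (by simp) ?_
  · rintro (k | j) hj
    · simp
    · have : j ≠ i := by simp at hj; omega
      simp [this]
  · intro ε
    refine ⟨fun j => if j = i then b else ε j, fun j hj => ?_, ?_⟩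
    · have : j ≠ i := by omega
      simp [this]
    · simp [fam, Side.ae]

/-- append a product of two reserved letters -/
lemma Good.app2 {L N X} (h : Good S L N X) {i j : ℕ} (hi : N ≤ i) (hj : N ≤ j) (hij : i ≠ j) :
    Good S (L ++ [S.a i * S.a j]) (max i j+1) X := by
  refine h.transfer (by omega) (tl i * tl j) (mul_mem (of_mem_FI (by simpa using hi))
    (of_mem_FI (by simpa using hj)))
    (FreeGroup.lift (fun s => if s = Sum.inr i then FreeGroup.of (Sum.inl L.length)
      else if s = Sum.inr j then 1 else FreeGroup.of s)) ?_ (by simp [hij.symm]) ?_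
  · rintro (k | l) hl
    · simp
    · have : l ≠ i ∧ l ≠ j := by simp at hl; omega
      simp [this]
  · intro ε
    refine ⟨fun l => if l = i then false else if l = j then false else ε l, fun l hl => ?_, ?_⟩
    · have : l ≠ i ∧ l ≠ j := by omega
      simp [this]
    · simp [fam, Side.ae]

end
end Emb

/-! Part 4: adding a new letter -/
namespace Emb
open Function

section
variable {A : Type} [Group A] {S : Side A}

lemma Side.list_bound (S : Side A) (L : List A) : ∃ m, ∀ z ∈ L, z ∈ S.Am m := by
  induction L with
  | nil => exact ⟨0, by simp⟩
  | cons a L ih =>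
    obtain ⟨m, hm⟩ := ih
    obtain ⟨m', hm'⟩ := S.union a
    refine ⟨max m m', fun z hz => ?_⟩
    rcases List.mem_cons.1 hz with rfl | hz
    · exact S.mono (le_max_right _ _) hm'
    · exact S.mono (le_max_left _ _) (hm z hz)

/-- cocycle action: an abstract lemma. `B` a group, `E` a subgroup, `ψ : E → F` a hom;
`u`, `v` families with distinct cosets. -/
lemma cocycle_action {B F : Type} [Group B] [Group F] (E : Subgroup B) (ψ : E →* F)
    {r : ℕ} (u v : Fin r → B) (hv : ∀ k l, k ≠ l → (v k)⁻¹ * v l ∉ E)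
    (hu : ∀ k l, k ≠ l → u k * (u l)⁻¹ ∉ E) (d : Fin r → F) :
    ∃ (X : Type) (f : B →* Equiv.Perm X) (T : Equiv.Perm X) (b : F → X), Injective b ∧
      (∀ e : E, ∀ w, f e (b w) = b (ψ e * w)) ∧
      (∀ k, ∀ w, f (u k) (T (f (v k) (b w))) = b (d k * w)) := by
  classical
  let Y := B ⧸ E
  let s : Y → B := Quotient.out
  have hs : ∀ y : Y, (QuotientGroup.mk (s y) : Y) = y := fun y => Quotient.out_eq' y
  have hmem : ∀ (a : B) (y : Y), (s (a • y))⁻¹ * a * s y ∈ E := by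
    intro a y
    have : (QuotientGroup.mk (s (a • y)) : Y) = QuotientGroup.mk (a * s y) := by
      rw [hs]
      conv_lhs => rw [← hs y]
      rfl
    have := QuotientGroup.eq.1 this
    simpa [mul_assoc] using this
  let c : B → Y → F := fun a y => ψ ⟨_, hmem a y⟩
  have hc1 : ∀ y, c 1 y = 1 := by
    intro y
    have : (⟨_, hmem 1 y⟩ : E) = 1 := by
      ext; simp
    simp only [c, this, map_one]
  have hc : ∀ a a' y, c (a * a') y = c a (a' • y) * c a' y := by
    intro a a' y
    simp only [c, ← map_mul]
    congr 1
    ext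
    simp [mul_smul, mul_assoc]
  let act : MulAction B (Y × F) :=
    { smul := fun a p => (a • p.1, c a p.1 * p.2)
      one_smul := fun p => by
        show ((1 : B) • p.1, c 1 p.1 * p.2) = p
        simp [hc1]
      mul_smul := fun a a' p => by
        show ((a * a') • p.1, c (a * a') p.1 * p.2) = (a • a' • p.1, c a (a' • p.1) * (c a' p.1 * p.2))
        rw [hc, mul_smul, mul_assoc] }
  let f : B →* Equiv.Perm (Y × F) := MulAction.toPermHom B (Y × F)
  have hf : ∀ a p, f a p = (a • p.1, c a p.1 * p.2) := fun a p => rfl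
  -- j
  have jm : ∀ a : B, (s (QuotientGroup.mk a : Y))⁻¹ * a ∈ E := by
    intro a
    exact QuotientGroup.eq.1 (hs (QuotientGroup.mk a))
  let j : B → F → Y × F := fun a w => (QuotientGroup.mk a, ψ ⟨_, jm a⟩ * w)
  have fj : ∀ a a' w, f a (j a' w) = j (a * a') w := by
    intro a a' w
    rw [hf]
    refine Prod.ext rfl ?_
    simp only [j, c, ← mul_assoc, ← map_mul]
    congr 2
    ext
    have : a • (QuotientGroup.mk a' : Y) = QuotientGroup.mk (a * a') := rfl
    simp [mul_assoc, this]
  let vf : Fin r → Y := fun k => QuotientGroup.mk (v k)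
  let uf : Fin r → Y := fun k => QuotientGroup.mk (u k)⁻¹
  have vfi : Injective vf := by
    intro k l hkl
    by_contra hne
    exact hv k l hne (QuotientGroup.eq.1 hkl)
  have ufi : Injective uf := by
    intro k l hkl
    by_contra hne
    have := QuotientGroup.eq.1 hkl
    rw [inv_inv] at this
    exact hu k l hne this
  obtain ⟨π, hπ⟩ := Equiv.Perm.exists_extending_pair vf uf vfi ufi
  let dd : Y → F := extend vf (fun k => ψ ⟨_, jm (u k)⁻¹⟩ * d k * (ψ ⟨_, jm (v k)⟩)⁻¹) 1
  let T : Equiv.Perm (Y × F) :=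
    { toFun := fun p => (π p.1, dd p.1 * p.2)
      invFun := fun p => (π.symm p.1, (dd (π.symm p.1))⁻¹ * p.2)
      left_inv := fun p => by simp
      right_inv := fun p => by simp }
  have hT : ∀ k w, T (j (v k) w) = j (u k)⁻¹ (d k * w) := by
    intro k w
    have h1 : dd (QuotientGroup.mk (v k)) = ψ ⟨_, jm (u k)⁻¹⟩ * d k * (ψ ⟨_, jm (v k)⟩)⁻¹ :=
      vfi.extend_apply _ _ k
    have h2 : π (QuotientGroup.mk (v k)) = QuotientGroup.mk (u k)⁻¹ := hπ k
    show (π (QuotientGroup.mk (v k)), dd (QuotientGroup.mk (v k)) * (ψ ⟨_, jm (v k)⟩ * w)) = _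
    rw [h1, h2]
    simp [j, mul_assoc]
  refine ⟨Y × F, f, T, j 1, ?_, ?_, ?_⟩
  · intro w w' h
    have := congrArg Prod.snd h
    simpa [j] using this
  · intro e w
    rw [fj, mul_one]
    have h1 : (QuotientGroup.mk (e : B) : Y) = QuotientGroup.mk 1 := by
      rw [QuotientGroup.eq]; simp
    refine Prod.ext h1 ?_
    simp only [j, ← mul_assoc, ← map_mul]
    congr 2
    ext
    simp [h1]
  · intro k w
    rw [fj, mul_one, hT, fj, mul_inv_cancel]

lemma Good.newletter {L N X} (h : Good S L N X) (UV : List (A × A))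
    (hUV : UV.Pairwise (fun p q => p.2⁻¹ * q.2 ∈ X ∧ p.1 * q.1⁻¹ ∈ X)) :
    ∃ t, Good S (L ++ UV.map (fun p => p.1 * t * p.2)) N X := by
  classical
  obtain ⟨m, hm⟩ := S.list_bound (L ++ X ++ UV.map Prod.fst ++ UV.map Prod.snd)
  have hmL : ∀ z ∈ L, z ∈ S.Am m := fun z hz => hm z (by simp [hz])
  have hmX : ∀ z ∈ X, z ∈ S.Am m := fun z hz => hm z (by simp [hz])
  have hm1 : ∀ p ∈ UV, p.1 ∈ S.Am m := fun p hp => by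
    apply hm; simp only [List.mem_append, List.mem_map]; exact Or.inl (Or.inr ⟨p, hp, rfl⟩)
  have hm2 : ∀ p ∈ UV, p.2 ∈ S.Am m := fun p hp => by
    apply hm; simp only [List.mem_append, List.mem_map]; exact Or.inr ⟨p, hp, rfl⟩
  refine ⟨S.t m, ?_⟩
  set t := S.t m with ht
  set L' := L ++ UV.map (fun p => p.1 * t * p.2) with hL'
  have hlen : L'.length = L.length + UV.length := by simp [hL']
  -- classification of generators
  have gens : ∀ ε, ∀ j ∈ idx L'.length N, (j ∈ idx L.length N ∧ fam S L' ε j = fam S L ε j) ∨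
      ∃ k : Fin UV.length, j = Sum.inl (L.length + k) ∧
        fam S L' ε j = UV[k].1 * t * UV[k].2 := by
    intro ε j hj
    rcases j with k | i
    · by_cases hk : k < L.length
      · exact Or.inl ⟨hk, fam_append_left hk⟩
      · right
        have hk2 : k < L.length + UV.length := by rw [← hlen]; exact hj
        refine ⟨⟨k - L.length, by omega⟩, ?_, ?_⟩
        · congr 1; simp; omega
        · have hk3 : k < L'.length := hj
          simp only [fam, Sum.elim_inl]
          rw [List.getD_eq_getElem _ _ hk3]
          simp only [hL']
          rw [List.getElem_append_right (by omega)]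
          simp
    · exact Or.inl ⟨hj, rfl⟩
  have EEm : ∀ ε, EE S L N ε ≤ S.Am m := by
    intro ε
    unfold EE
    rw [Subgroup.closure_le]
    rintro _ ⟨(k | i), hj, rfl⟩
    · have hk : k < L.length := hj
      simp only [fam, Sum.elim_inl]
      rw [List.getD_eq_getElem _ _ hk]
      exact hmL _ (List.getElem_mem hk)
    · exact S.ae_mem ε i m
  let u : Fin UV.length → S.Am m := fun k => ⟨UV[k].1, hm1 _ (List.getElem_mem _)⟩
  let v : Fin UV.length → S.Am m := fun k => ⟨UV[k].2, hm2 _ (List.getElem_mem _)⟩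
  have huv : ∀ ε k l, k ≠ l → (v k)⁻¹ * v l ∉ (EE S L N ε).subgroupOf (S.Am m) ∧
      u k * (u l)⁻¹ ∉ (EE S L N ε).subgroupOf (S.Am m) := by
    intro ε
    have aux : ∀ k l : Fin UV.length, k < l →
        (v k)⁻¹ * v l ∉ (EE S L N ε).subgroupOf (S.Am m) ∧
        u k * (u l)⁻¹ ∉ (EE S L N ε).subgroupOf (S.Am m) := by
      intro k l hkl
      have := List.pairwise_iff_getElem.1 hUV k l k.2 l.2 hkl
      refine ⟨fun h1 => h.avoid ε _ this.1 ?_, fun h1 => h.avoid ε _ this.2 ?_⟩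
      · simpa [Subgroup.mem_subgroupOf, v] using h1
      · simpa [Subgroup.mem_subgroupOf, u] using h1
    intro k l hkl
    rcases lt_or_gt_of_ne hkl with h1 | h1
    · exact aux k l h1
    · obtain ⟨h2, h3⟩ := aux l k h1
      refine ⟨fun h4 => h2 ?_, fun h4 => h3 ?_⟩
      · simpa using inv_mem h4
      · simpa using inv_mem h4
  -- inverse of lift
  have hψ : ∀ ε, ∃ ψ : (EE S L N ε).subgroupOf (S.Am m) →* FreeGroup (ℕ ⊕ ℕ),
      ∀ ω, ∀ hω : ω ∈ FI L.length N, ∀ hh, ψ ⟨⟨FreeGroup.lift (fam S L ε) ω, hh⟩,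
        by rw [Subgroup.mem_subgroupOf]; exact (mem_EE S).2 ⟨ω, hω, rfl⟩⟩ = ω := by
    intro ε
    have hex : ∀ e : (EE S L N ε).subgroupOf (S.Am m), ∃ ω ∈ FI L.length N,
        FreeGroup.lift (fam S L ε) ω = e := by
      intro e
      exact (mem_EE S).1 e.2
    choose ψ h1 h2 using hex
    refine ⟨MonoidHom.mk' ψ ?_, ?_⟩
    · intro a b
      apply h.inj ε (h1 _) (mul_mem (h1 _) (h1 _))
      rw [map_mul, h2, h2, h2]; rfl
    · intro ω hω hh
      apply h.inj ε (h1 _) hω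
      simp [h2]
  -- fixed point lemma
  have fixed : ∀ ε, ∃ (Y : Type) (f : A →* Equiv.Perm Y) (b : FreeGroup (ℕ ⊕ ℕ) → Y),
      Injective b ∧ ∀ ω ∈ FI L'.length N, ∀ w,
        f (FreeGroup.lift (fam S L' ε) ω) (b w) = b (ω * w) := by
    intro ε
    obtain ⟨ψ, hψ⟩ := hψ ε
    obtain ⟨Y, f0, T, b, hb, h1, h2⟩ := cocycle_action _ ψ u v (fun k l hkl => (huv ε k l hkl).1)
      (fun k l hkl => (huv ε k l hkl).2) (fun k => FreeGroup.of (Sum.inl (L.length + k)))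
    obtain ⟨f, hf, hft⟩ := S.ext m _ f0 T
    refine ⟨Y, f, b, hb, ?_⟩
    have gen : ∀ j ∈ idx L'.length N, ∀ w, f (fam S L' ε j) (b w) = b (FreeGroup.of j * w) := by
      intro j hj w
      rcases gens ε j hj with ⟨hj', he⟩ | ⟨k, rfl, he⟩
      · rw [he]
        have hmem : fam S L ε j ∈ S.Am m := EEm ε (fam_mem_EE S hj')
        have e1 := hψ (FreeGroup.of j) (of_mem_FI hj') (by simpa using hmem)
        have e2 := h1 ⟨⟨FreeGroup.lift (fam S L ε) (FreeGroup.of j), by simpa using hmem⟩,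
          by rw [Subgroup.mem_subgroupOf]; exact (mem_EE S).2 ⟨_, of_mem_FI hj', rfl⟩⟩ w
        rw [e1] at e2
        rw [← e2, ← hf]
        simp
      · rw [he]
        have e2 := h2 k w
        rw [← e2, map_mul, map_mul, hft, Equiv.Perm.mul_apply, Equiv.Perm.mul_apply, ← hf, ← hf]
    intro ω hω
    induction hω using Subgroup.closure_induction with
    | mem x hx =>
      obtain ⟨j, hj, rfl⟩ := hx
      simpa using gen j hj
    | one => simp
    | mul x y _ _ hx hy =>
      intro w
      rw [map_mul, map_mul, Equiv.Perm.mul_apply, hy, hx, mul_assoc]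
    | inv x _ hx =>
      intro w
      rw [map_inv, map_inv, Equiv.Perm.inv_eq_iff_eq, hx]
      simp
  have fixed2 : ∀ ε, ∃ (Λ : A →* Equiv.Perm (S.Am m ⧸ (EE S L N ε).subgroupOf (S.Am m))),
      (∀ a : S.Am m, ∀ y, Λ a y = a • y) ∧
      ∀ e ∈ EE S L' N ε, Λ e (QuotientGroup.mk 1) = QuotientGroup.mk 1 := by
    intro ε
    let Y := S.Am m ⧸ (EE S L N ε).subgroupOf (S.Am m)
    let vf : Fin UV.length → Y := fun k => QuotientGroup.mk (v k)
    let uf : Fin UV.length → Y := fun k => QuotientGroup.mk (u k)⁻¹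
    have vfi : Injective vf := by
      intro k l hkl
      by_contra hne
      exact (huv ε k l hne).1 (QuotientGroup.eq.1 hkl)
    have ufi : Injective uf := by
      intro k l hkl
      by_contra hne
      have := QuotientGroup.eq.1 hkl
      rw [inv_inv] at this
      exact (huv ε k l hne).2 this
    obtain ⟨π, hπ⟩ := Equiv.Perm.exists_extending_pair vf uf vfi ufi
    obtain ⟨f, hf, hft⟩ := S.ext m _ (MulAction.toPermHom (S.Am m) Y) π
    have hf' : ∀ a : S.Am m, ∀ y : Y, f a y = a • y := by
      intro a y; rw [hf]; rfl
    refine ⟨f, hf', ?_⟩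
    have : EE S L' N ε ≤ (MulAction.stabilizer (Equiv.Perm Y) (QuotientGroup.mk 1 : Y)).comap f := by
      unfold EE
      rw [Subgroup.closure_le]
      rintro _ ⟨j, hj, rfl⟩
      show f _ (QuotientGroup.mk 1 : Y) = QuotientGroup.mk 1
      rcases gens ε j hj with ⟨hj', he⟩ | ⟨k, rfl, he⟩
      · rw [he]
        have hmem := fam_mem_EE S (ε := ε) hj'
        have := hf' ⟨_, EEm ε hmem⟩ (QuotientGroup.mk 1)
        rw [this]
        show (QuotientGroup.mk (⟨_, EEm ε hmem⟩ * 1) : Y) = QuotientGroup.mk 1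
        rw [eq_comm, QuotientGroup.eq]
        simpa [Subgroup.mem_subgroupOf] using hmem
      · rw [he, map_mul, map_mul, hft, Equiv.Perm.mul_apply, Equiv.Perm.mul_apply]
        have e1 : f UV[k].2 (QuotientGroup.mk 1 : Y) = vf k := by
          have := hf' (v k) (QuotientGroup.mk 1)
          refine this.trans ?_
          show (QuotientGroup.mk (v k * 1) : Y) = _
          rw [mul_one]
        rw [e1, hπ]
        have := hf' (u k) (uf k)
        refine this.trans ?_
        show (QuotientGroup.mk (u k * (u k)⁻¹) : Y) = _
        rw [mul_inv_cancel]
    intro e he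
    exact this he
  refine ⟨?_, ?_, ?_⟩
  · intro ε ω hω h1
    obtain ⟨Y, f, b, hb, hf⟩ := fixed ε
    have := hf ω hω 1
    rw [h1, map_one] at this
    have := hb this
    simpa using this.symm
  · intro ε e he z g hg hez
    obtain ⟨Λ, h1, h2⟩ := fixed2 ε
    have h3 := h2 e he
    obtain ⟨a, ha⟩ := QuotientGroup.mk_surjective (Λ z⁻¹ (QuotientGroup.mk 1))
    have hgm : g ∈ S.Am m := S.mono (Nat.zero_le m) (S.Gs_le hg)
    have h4 : Λ g (QuotientGroup.mk a) = QuotientGroup.mk a := by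
      rw [hez, map_mul, map_mul, Equiv.Perm.mul_apply, Equiv.Perm.mul_apply, ← ha] at h3
      have := congrArg (Λ z⁻¹) h3
      rw [← ha, ← Equiv.Perm.mul_apply, ← map_mul] at this
      simpa using this
    have h5 := h1 ⟨g, hgm⟩ (QuotientGroup.mk a)
    rw [h4] at h5
    have h6 := QuotientGroup.eq.1 (h5 : QuotientGroup.mk a = QuotientGroup.mk (⟨g, hgm⟩ * a))
    rw [Subgroup.mem_subgroupOf] at h6
    refine h.conj ε _ h6 (a : A)⁻¹ g hg ?_
    simp [mul_assoc]
  · intro ε x hx hx'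
    obtain ⟨Λ, h1, h2⟩ := fixed2 ε
    have h3 := h2 x hx'
    have h5 := h1 ⟨x, hmX x hx⟩ (QuotientGroup.mk 1)
    rw [h3] at h5
    have h6 := QuotientGroup.eq.1 (h5 : (QuotientGroup.mk (1 : S.Am m) :
      S.Am m ⧸ (EE S L N ε).subgroupOf (S.Am m)) = QuotientGroup.mk (⟨x, hmX x hx⟩ * 1))
    rw [Subgroup.mem_subgroupOf] at h6
    exact h.avoid ε x hx (by simpa using h6)

end
end Emb

/-! Part 5: more one-sided lemmas -/
namespace Emb
open Function

section
variable {A : Type} [Group A] {S : Side A}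

lemma EE_append_left {L M : List A} {N ε} : EE S L N ε ≤ EE S (L ++ M) N ε := by
  unfold EE
  rw [Subgroup.closure_le]
  rintro _ ⟨(k | i), hk, rfl⟩
  · rw [← fam_append_left (M := M) hk]
    refine fam_mem_EE S ?_
    simp only [mem_idx_inl, List.length_append] at hk ⊢; omega
  · exact fam_mem_EE (L := L ++ M) S (j := Sum.inr i) hk

lemma Good.left {L M N X} (h : Good S (L ++ M) N X) : Good S L N X := by
  refine ⟨fun ε ω hω h1 => ?_, fun ε e he => h.conj ε e (EE_append_left he),
    fun ε x hx hx' => h.avoid ε x hx (EE_append_left hx')⟩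
  refine h.free ε ω (FI_mono (by simp) le_rfl hω) ?_
  rw [← h1]
  refine eqOn_closure _ _ _ ?_ ω hω
  rintro (k | i) hk
  · simp only [FreeGroup.lift_apply_of]; exact fam_append_left hk
  · simp [fam]

/-- words for elements of `CC` -/
lemma CC_word {L : List A} {z : A} (hz : z ∈ CC L) (ε) (N) :
    ∃ c : FreeGroup ℕ, FreeGroup.map Sum.inl c ∈ FI L.length N ∧
      FreeGroup.lift (fam S L ε) (FreeGroup.map Sum.inl c) = z := by
  unfold CC at hz
  induction hz using Subgroup.closure_induction with
  | mem x hx =>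
    obtain ⟨k, hk, rfl⟩ := List.getElem_of_mem hx
    refine ⟨FreeGroup.of k, ?_, ?_⟩
    · simp only [FreeGroup.map.of]; exact of_mem_FI (by simpa using hk)
    · simp [fam, hk]
  | one => exact ⟨1, by simp, by simp⟩
  | mul x y _ _ hx hy =>
    obtain ⟨c, h1, h2⟩ := hx
    obtain ⟨d, h3, h4⟩ := hy
    exact ⟨c * d, by rw [map_mul]; exact mul_mem h1 h3, by rw [map_mul, map_mul, h2, h4]⟩
  | inv x _ hx =>
    obtain ⟨c, h1, h2⟩ := hx
    exact ⟨c⁻¹, by rw [map_inv]; exact inv_mem h1, by rw [map_inv, map_inv, h2]⟩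

lemma lift_inr {L : List A} (i : ℕ) :
    FreeGroup.lift (fam S L (fun _ => false)) (tl i) = S.a i := by
  simp [fam, Side.ae]

lemma Good.a_div {L N X} (h : Good S L N X) {i j : ℕ} (hi : N ≤ i) (hj : N ≤ j) (hij : i ≠ j) :
    (S.a i)⁻¹ * S.a j ∉ CC L := by
  intro hz
  obtain ⟨c, h1, h2⟩ := CC_word (S := S) hz (fun _ => false) N
  have h3 := h.inj (fun _ => false) h1 (ω' := (tl i)⁻¹ * tl j)
    (mul_mem (inv_mem (of_mem_FI (by simpa using hi))) (of_mem_FI (by simpa using hj)))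
    (by rw [h2, map_mul, map_inv, lift_inr, lift_inr])
  let f : FreeGroup (ℕ ⊕ ℕ) →* Multiplicative ℤ := FreeGroup.lift
    (Sum.elim (fun _ => 1) (fun k => if k = j then Multiplicative.ofAdd 1 else 1))
  have h4 : f (FreeGroup.map Sum.inl c) = 1 := by
    have : f.comp (FreeGroup.map Sum.inl) = 1 := by ext; simp [f]
    exact DFunLike.congr_fun this c
  rw [h3] at h4
  simp [f, hij] at h4

lemma Good.a_not {L N X} (h : Good S L N X) {i : ℕ} (hi : N ≤ i) : S.a i ∉ CC L := by
  intro hz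
  obtain ⟨c, h1, h2⟩ := CC_word (S := S) hz (fun _ => false) N
  have h3 := h.inj (fun _ => false) h1 (ω' := tl i)
    (of_mem_FI (by simpa using hi)) (by rw [h2, lift_inr])
  let f : FreeGroup (ℕ ⊕ ℕ) →* Multiplicative ℤ := FreeGroup.lift
    (Sum.elim (fun _ => 1) (fun k => Multiplicative.ofAdd 1))
  have h4 : f (FreeGroup.map Sum.inl c) = 1 := by
    have : f.comp (FreeGroup.map Sum.inl) = 1 := by ext; simp [f]
    exact DFunLike.congr_fun this c
  rw [h3] at h4
  simp [f] at h4

lemma Good.a_conj {L N X} (h : Good S L N X) {i : ℕ} (hi : N ≤ i) {z : A} (hz : z ∈ CC L)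
    (hz1 : z ≠ 1) : S.a i * z * (S.a i)⁻¹ ∉ CC L := by
  intro hz'
  obtain ⟨c, h1, h2⟩ := CC_word (S := S) hz (fun _ => false) N
  obtain ⟨d, h3, h4⟩ := CC_word (S := S) hz' (fun _ => false) N
  have hti : tl i ∈ FI L.length N := of_mem_FI (by simpa using hi)
  have h5 := h.inj (fun _ => false) h3 (ω' := tl i * FreeGroup.map Sum.inl c * (tl i)⁻¹)
    (mul_mem (mul_mem hti h1) (inv_mem hti))
    (by rw [h4, map_mul, map_mul, map_inv, h2, lift_inr])
  let f : FreeGroup (ℕ ⊕ ℕ) →* FreeGroup ℕ := FreeGroup.lift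
    (Sum.elim FreeGroup.of (fun k => 1))
  have hf : ∀ c, f (FreeGroup.map Sum.inl c) = c := by
    intro c
    have : f.comp (FreeGroup.map Sum.inl) = MonoidHom.id _ := by ext; simp [f]
    exact DFunLike.congr_fun this c
  have h6 := congrArg f h5
  rw [map_mul, map_mul, map_inv, hf, hf] at h6
  have h7 : d = c := by simpa [f] using h6
  rw [h7] at h5
  obtain ⟨k, hk⟩ := comm_of_gen (Sum.inr i : ℕ ⊕ ℕ) _ (FreeGroup.map Sum.inl c) rfl
    (by conv_rhs => rw [h5]
        group)
  have h8 := congrArg f hk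
  rw [hf, map_zpow] at h8
  have h9 : c = 1 := by simpa [f] using h8
  rw [h9] at h2
  exact hz1 (by simpa using h2.symm)

lemma Good.appr {L N X} (h : Good S L N X) (r : ℕ) :
    Good S (L ++ (List.range r).map (fun i => S.a (N + i))) (N + r) X := by
  induction r with
  | zero => simpa using h
  | succ r ih =>
    rw [List.range_succ, List.map_append, ← List.append_assoc]
    have := ih.app1 (i := N + r) le_rfl false
    simpa [Nat.add_assoc] using this

/-- words for elements of `CC (L ++ [τ])` -/
lemma CC_snoc_word {L : List A} {z τ : A} (hz : z ∈ CC (L ++ [τ])) {ε} {N}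
    (g : FreeGroup (ℕ ⊕ ℕ)) (hg : g ∈ FI L.length N) (hτ : FreeGroup.lift (fam S L ε) g = τ) :
    ∃ c : FreeGroup (Option ℕ), sg g c ∈ FI L.length N ∧
      FreeGroup.lift (fam S L ε) (sg g c) = z := by
  unfold CC at hz
  induction hz using Subgroup.closure_induction with
  | mem x hx =>
    rcases List.mem_append.1 hx with hx | hx
    · obtain ⟨k, hk, rfl⟩ := List.getElem_of_mem hx
      refine ⟨FreeGroup.of (some k), ?_, ?_⟩
      · simp only [sg, FreeGroup.lift_apply_of, Option.elim_some]
        exact of_mem_FI (by simpa using hk)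
      · simp [sg, fam, hk]
    · have : x = τ := by simpa using hx
      exact ⟨FreeGroup.of none, by rwa [sg_none], by rw [sg_none, hτ, this]⟩
  | one => exact ⟨1, by simp, by simp⟩
  | mul x y _ _ hx hy =>
    obtain ⟨c, h1, h2⟩ := hx
    obtain ⟨d, h3, h4⟩ := hy
    exact ⟨c * d, by rw [map_mul]; exact mul_mem h1 h3, by rw [map_mul, map_mul, h2, h4]⟩
  | inv x _ hx =>
    obtain ⟨c, h1, h2⟩ := hx
    exact ⟨c⁻¹, by rw [map_inv]; exact inv_mem h1, by rw [map_inv, map_inv, h2]⟩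

lemma lift_inl_mem (L : List A) (ε) (c : FreeGroup ℕ) :
    FreeGroup.lift (fam S L ε) (FreeGroup.map Sum.inl c) ∈ CC L := by
  have : FreeGroup.lift (fam S L ε) (FreeGroup.map Sum.inl c) =
      FreeGroup.lift (fun k => L.getD k 1) c := by
    have : (FreeGroup.lift (fam S L ε)).comp (FreeGroup.map Sum.inl) =
      FreeGroup.lift (fun k => L.getD k 1) := by ext; simp [fam]
    exact DFunLike.congr_fun this c
  rw [this]
  have h2 : (FreeGroup.lift (fun k => L.getD k 1)).range ≤ CC L := by
    rw [FreeGroup.range_lift_eq_closure, Subgroup.closure_le]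
    rintro _ ⟨k, rfl⟩
    exact getD_mem_CC L k
  exact h2 ⟨c, rfl⟩

/-- the conjugating dichotomy -/
lemma Good.dich {L N X} (h : Good S L N X) (g : ℕ → A)
    (h1 : ∀ i, N ≤ i → g i ∈ CC (L ++ [S.a i]))
    (h2 : ∀ i j, N ≤ i → N ≤ j → i ≠ j → g i * g j ∈ CC (L ++ [S.a i * S.a j])) :
    (∀ i, N ≤ i → g i ∈ CC L) ∨ ∃ c ∈ CC L, ∀ i, N ≤ i → g i = c * S.a i * c⁻¹ := by
  have ht : ∀ i, N ≤ i → tl i ∈ FI L.length N := fun i hi => of_mem_FI (by simpa using hi)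
  have hw : ∀ i, ∃ w, N ≤ i → sg (tl i) w ∈ FI L.length N ∧
      FreeGroup.lift (fam S L (fun _ => false)) (sg (tl i) w) = g i := by
    intro i
    by_cases hi : N ≤ i
    · obtain ⟨w, hw⟩ := CC_snoc_word (h1 i hi) (tl i) (ht i hi) (lift_inr i)
      exact ⟨w, fun _ => hw⟩
    · exact ⟨1, fun h => absurd h hi⟩
  have hu : ∀ i j, ∃ w, N ≤ i → N ≤ j → i ≠ j → sg (tl i * tl j) w ∈ FI L.length N ∧
      FreeGroup.lift (fam S L (fun _ => false)) (sg (tl i * tl j) w) = g i * g j := by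
    intro i j
    by_cases hi : N ≤ i ∧ N ≤ j ∧ i ≠ j
    · obtain ⟨w, hw⟩ := CC_snoc_word (h2 i j hi.1 hi.2.1 hi.2.2) (tl i * tl j)
        (mul_mem (ht i hi.1) (ht j hi.2.1)) (by rw [map_mul, lift_inr, lift_inr])
      exact ⟨w, fun _ _ _ => hw⟩
    · exact ⟨1, fun h h' h'' => absurd ⟨h, h', h''⟩ hi⟩
  choose w hw using hw
  choose u hu using hu
  rcases conj_lemma N w u (by
    intro i j hi hj hij
    refine h.inj (fun _ => false) (mul_mem (hw i hi).1 (hw j hj).1) (hu i j hi hj hij).1 ?_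
    rw [map_mul, (hw i hi).2, (hw j hj).2, (hu i j hi hj hij).2]) with h3 | ⟨c, h3⟩
  · left
    intro i hi
    obtain ⟨k, hk⟩ := h3 i hi
    rw [← (hw i hi).2, hk, sg_cst]
    exact lift_inl_mem _ _ _
  · right
    refine ⟨_, lift_inl_mem (S := S) L (fun _ => false) c, fun i hi => ?_⟩
    rw [← (hw i hi).2, h3 i hi]
    simp only [map_mul, map_inv, sg_cst, sg_none, lift_inr]

end
end Emb

/-! Part 6: two-sided states and density of the tasks -/
namespace Emb
open Function

section
variable {A : Type} [Group A]

/-- two-sided states -/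
structure St (S : Side A) where
  L : Bool → List A
  N : Bool → ℕ
  X : Bool → List A
  good : ∀ b, Good S (L b) (N b) (X b)
  len : ∀ b c, (L b).length = (L c).length

variable {S : Side A}

/-- extension of states -/
def St.le (σ τ : St S) : Prop :=
  ∀ b, σ.L b <+: τ.L b ∧ σ.N b ≤ τ.N b ∧ ∀ x ∈ σ.X b, x ∈ τ.X b

lemma St.le_refl (σ : St S) : σ.le σ := fun _ => ⟨List.prefix_rfl, le_rfl, fun _ h => h⟩

lemma St.le_trans {σ τ ρ : St S} (h : σ.le τ) (h' : τ.le ρ) : σ.le ρ := fun b =>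
  ⟨(h b).1.trans (h' b).1, (h b).2.1.trans (h' b).2.1, fun x hx => (h' b).2.2 x ((h b).2.2 x hx)⟩

/-- paired elements -/
def St.PR (σ : St S) (s : Bool) (a b : A) : Prop :=
  ∃ k : ℕ, (σ.L s)[k]? = some a ∧ (σ.L !s)[k]? = some b

lemma pfx_get {L M : List A} (h : L <+: M) {k : ℕ} {a} (hk : L[k]? = some a) : M[k]? = some a := by
  obtain ⟨T, rfl⟩ := h
  rw [List.getElem?_append_left]
  · exact hk
  · exact (List.getElem?_eq_some_iff.1 hk).1

lemma St.PR.mono {σ τ : St S} (h : σ.le τ) {s a b} (h' : σ.PR s a b) : τ.PR s a b := by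
  obtain ⟨k, h1, h2⟩ := h'
  exact ⟨k, pfx_get (h s).1 h1, pfx_get (h !s).1 h2⟩

lemma St.PR.symm {σ : St S} {s a b} (h : σ.PR s a b) : σ.PR (!s) b a := by
  obtain ⟨k, h1, h2⟩ := h
  exact ⟨k, h2, by simpa using h1⟩

lemma St.PR.mem {σ : St S} {s a b} (h : σ.PR s a b) : a ∈ CC (σ.L s) := by
  obtain ⟨k, h1, h2⟩ := h
  exact mem_CC (List.mem_of_getElem? h1)

/-- a realisation -/
def St.Rz (σ : St S) {K : Type} [Group K] (j : Bool → A →* K) : Prop :=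
  ∀ s a b, σ.PR s a b → j s a = j (!s) b

lemma St.Rz.mono {σ τ : St S} (h : σ.le τ) {K : Type} [Group K] {j : Bool → A →* K}
    (h' : τ.Rz j) : σ.Rz j := fun s a b hp => h' s a b (hp.mono h)

lemma mkSt (σ : St S) (s : Bool) {l l' : List A} {n n' : ℕ} {X X' : List A}
    (h1 : Good S (σ.L s ++ l) n X) (h2 : Good S (σ.L (!s) ++ l') n' X')
    (hl : l.length = l'.length) (hn : σ.N s ≤ n) (hn' : σ.N (!s) ≤ n')
    (hX : ∀ x ∈ σ.X s, x ∈ X) (hX' : ∀ x ∈ σ.X (!s), x ∈ X') :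
    ∃ τ : St S, σ.le τ ∧ τ.L s = σ.L s ++ l ∧ τ.L (!s) = σ.L (!s) ++ l' ∧ τ.N s = n ∧
      τ.N (!s) = n' ∧ τ.X s = X ∧ τ.X (!s) = X' ∧
      ∀ (k : ℕ) a b, l[k]? = some a → l'[k]? = some b → τ.PR s a b := by
  have hs : (!s) ≠ s := by cases s <;> simp
  have hb : ∀ b, b = s ∨ b = !s := by intro b; cases s <;> cases b <;> simp
  have hll := σ.len s (!s)
  let τ : St S :=
    { L := fun b => if b = s then σ.L s ++ l else σ.L (!s) ++ l'
      N := fun b => if b = s then n else n'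
      X := fun b => if b = s then X else X'
      good := by
        intro b
        rcases hb b with rfl | rfl
        · simpa using h1
        · simpa [hs] using h2
      len := by
        have : ∀ b, (if b = s then σ.L s ++ l else σ.L (!s) ++ l').length =
          (σ.L s).length + l.length := by
          intro b
          split_ifs
          · simp
          · simp [hll, hl]
        intro b c
        rw [this, this] }
  have e1 : τ.L s = σ.L s ++ l := by simp [τ]
  have e2 : τ.L (!s) = σ.L (!s) ++ l' := by simp [τ, hs]
  have e3 : τ.N s = n := by simp [τ]
  have e4 : τ.N (!s) = n' := by simp [τ, hs]
  have e5 : τ.X s = X := by simp [τ]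
  have e6 : τ.X (!s) = X' := by simp [τ, hs]
  refine ⟨τ, ?_, e1, e2, e3, e4, e5, e6, ?_⟩
  · intro b
    rcases hb b with rfl | rfl
    · rw [e1, e3, e5]; exact ⟨List.prefix_append _ _, hn, hX⟩
    · rw [e2, e4, e6]; exact ⟨List.prefix_append _ _, hn', hX'⟩
  · intro k a b ha hb
    refine ⟨(σ.L s).length + k, ?_, ?_⟩
    · rw [e1, List.getElem?_append_right (by omega)]; simpa using ha
    · rw [e2, hll, List.getElem?_append_right (by omega)]; simpa using hb

/-- adding to the avoid lists -/
lemma addX (σ : St S) (s : Bool) (zs : List A) (hz : ∀ z ∈ zs, z ∉ CC (σ.L s)) :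
    ∃ τ : St S, σ.le τ ∧ (∀ b, τ.L b = σ.L b) ∧ ∀ z ∈ zs, z ∈ τ.X s := by
  obtain ⟨M, hM, h⟩ := (σ.good s).adds zs hz
  obtain ⟨τ, h1, h2, h3, -, -, h4, -⟩ := mkSt σ s (l := []) (l' := []) (n := M) (n' := σ.N (!s))
    (X := zs ++ σ.X s) (X' := σ.X (!s)) (by simpa using h) (by simpa using σ.good (!s)) rfl hM le_rfl
    (by intro x hx; simp [hx]) (fun x hx => hx)
  refine ⟨τ, h1, ?_, ?_⟩
  · have hb : ∀ b, b = s ∨ b = !s := by intro b; cases s <;> cases b <;> simp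
    intro b
    rcases hb b with rfl | rfl
    · simpa using h2
    · simpa using h3
  · intro z hz; rw [h4]; simp [hz]

/-- appending reserved letters on both sides -/
lemma appBoth (σ : St S) (s : Bool) {l : List A} {n : ℕ} {X : List A}
    (h1 : Good S (σ.L s ++ l) n X) (hn : σ.N s ≤ n) (hX : ∀ x ∈ σ.X s, x ∈ X) :
    ∃ τ : St S, σ.le τ ∧ τ.L s = σ.L s ++ l ∧ τ.N s = n ∧ τ.X s = X ∧
      ∀ (k : ℕ) a, l[k]? = some a → τ.PR s a (S.a (σ.N (!s) + k)) := by
  obtain ⟨τ, h1, h2, h3, h4, -, h5, -, h6⟩ := mkSt σ s h1 ((σ.good (!s)).appr l.length) (by simp) hn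
    (by omega) hX (fun x hx => hx)
  refine ⟨τ, h1, h2, h4, h5, fun k a hk => h6 k a _ hk ?_⟩
  have := (List.getElem?_eq_some_iff.1 hk).1
  simp [this]

/-- length task -/
lemma task_len (n : ℕ) (σ : St S) : ∃ τ : St S, σ.le τ ∧ ∀ b, n ≤ (τ.L b).length := by
  obtain ⟨τ, h1, h2, -⟩ := appBoth σ true ((σ.good true).appr n) (by omega) (fun x hx => hx)
  refine ⟨τ, h1, fun b => ?_⟩
  rw [τ.len b true, h2]; simp

/-- choose a good conjugator -/
lemma St.choose_e (σ : St S) (s : Bool) (x : A) : ∃ i, S.a i ∉ CC (σ.L s) ∧ x * S.a i ∉ CC (σ.L s) := by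
  by_cases h : x * S.a (σ.N s) ∈ CC (σ.L s)
  · refine ⟨σ.N s + 1, (σ.good s).a_not (by omega), fun h' => ?_⟩
    apply (σ.good s).a_div (i := σ.N s) (j := σ.N s + 1) le_rfl (by omega) (by omega)
    have := mul_mem (inv_mem h) h'
    simpa [mul_assoc] using this
  · exact ⟨σ.N s, (σ.good s).a_not le_rfl, h⟩

/-- the generation task -/
lemma task_gen (s : Bool) (x : A) (σ : St S) : ∃ τ : St S, σ.le τ ∧ ∃ t i j,
    τ.PR s t (S.a j) ∧ τ.PR s (x * S.a i * t * (S.a i)⁻¹) (S.a (j+1)) := by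
  obtain ⟨i, h1, h2⟩ := σ.choose_e s x
  obtain ⟨σ1, h3, h4, h5⟩ := addX σ s [(S.a i)⁻¹, (x * S.a i)⁻¹]
    (by simp only [List.mem_cons, List.not_mem_nil, or_false]
        rintro z (rfl | rfl)
        · simpa using h1
        · rw [inv_mem_iff]; exact h2)
  obtain ⟨t, ht⟩ := (σ1.good s).newletter [(1, 1), (x * S.a i, (S.a i)⁻¹)] (by
    simp only [List.pairwise_cons, List.mem_cons, List.not_mem_nil, or_false, forall_eq,
      inv_one, one_mul, List.Pairwise.nil, and_true, IsEmpty.forall_iff, implies_true]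
    exact ⟨h5 _ (by simp), h5 _ (by simp)⟩)
  obtain ⟨τ, h6, h7, -, -, h8⟩ := appBoth σ1 s ht le_rfl (fun x hx => hx)
  refine ⟨τ, St.le_trans h3 h6, t, i, _, h8 0 t (by simp), h8 1 _ (by simp)⟩

/-- conjugating out of the base -/
lemma task_out (s : Bool) (c : A) (hc : c ≠ 1) (σ : St S) : ∃ τ : St S, σ.le τ ∧
    ∃ z, z * c * z⁻¹ ∈ τ.X s := by
  by_cases h : c ∈ CC (σ.L s)
  · obtain ⟨τ, h1, -, h2⟩ := addX σ s [S.a (σ.N s) * c * (S.a (σ.N s))⁻¹]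
      (by simpa using (σ.good s).a_conj le_rfl h hc)
    exact ⟨τ, h1, S.a (σ.N s), h2 _ (by simp)⟩
  · obtain ⟨τ, h1, -, h2⟩ := addX σ s [c] (by simpa using h)
    exact ⟨τ, h1, 1, by simpa using h2⟩

end
end Emb

/-! Part 7: rigidity tasks, simplicity tasks -/
namespace Emb
open Function

section
variable {A : Type} [Group A] {S : Side A}

/-- evaluation of words -/
def ev (p q k : A) : FreeGroup (Fin 3) →* A := FreeGroup.lift ![p, q, k]

/-- the standard evaluation -/
def Side.sv (S : Side A) : FreeGroup (Fin 3) →* A := ev S.x S.y S.kk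

/-- the tail words -/
def wa (i : ℕ) : FreeGroup (Fin 3) :=
  FreeGroup.of 0 ^ i * FreeGroup.of 1 * (FreeGroup.of 0 ^ i)⁻¹

lemma ev_wa (p q k : A) (i) : ev p q k (wa i) = p ^ i * q * (p ^ i)⁻¹ := by simp [ev, wa]
@[simp] lemma ev_two (p q k : A) : ev p q k (FreeGroup.of 2) = k := by simp [ev]
@[simp] lemma ev_one (p q k : A) : ev p q k (FreeGroup.of 1) = q := by simp [ev]
@[simp] lemma ev_zero (p q k : A) : ev p q k (FreeGroup.of 0) = p := by simp [ev]
lemma sv_wa (i) : S.sv (wa i) = S.a i := by simp [Side.sv, ev_wa, Side.a]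
lemma sv_two : S.sv (FreeGroup.of 2) = S.kk := by simp [Side.sv]

lemma test_word (σ : St S) (s : Bool) (ω : FreeGroup (Fin 3)) {n : ℕ}
    (h : Good S (σ.L s ++ [S.sv ω]) n (σ.X s)) (hn : σ.N s ≤ n) (g : A)
    (hg : g ∉ CC (σ.L s ++ [S.sv ω])) :
    ∃ τ : St S, σ.le τ ∧ ∃ ω', τ.PR s (S.sv ω) (S.sv ω') ∧ g ∈ τ.X s := by
  obtain ⟨τ, h1, h2, -, -, h3⟩ := appBoth σ s h hn (fun x hx => hx)
  obtain ⟨ρ, h4, -, h5⟩ := addX τ s [g] (by rw [h2]; simpa using hg)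
  refine ⟨ρ, St.le_trans h1 h4, wa (σ.N (!s)), ?_, h5 g (by simp)⟩
  have := h3 0 (S.sv ω) (by simp)
  rw [sv_wa]
  exact this.mono h4

lemma task_R1 (s : Bool) (p q k : A) (σ : St S) : ∃ τ : St S, σ.le τ ∧
    (k ∈ CC (τ.L s) ∨ (∃ ω ω', τ.PR s (S.sv ω) (S.sv ω') ∧ ev p q k ω ∈ τ.X s) ∨
      ∃ c ∈ CC (τ.L s), ∃ N, ∀ i, N ≤ i → ev p q k (wa i) = c * S.a i * c⁻¹) := by
  by_cases hk : k ∈ CC (σ.L s)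
  · exact ⟨σ, σ.le_refl, Or.inl hk⟩
  by_cases h1 : ∀ i, σ.N s ≤ i → ev p q k (wa i) ∈ CC (σ.L s ++ [S.a i])
  swap
  · push Not at h1
    obtain ⟨i, hi, h1⟩ := h1
    obtain ⟨τ, h2, ω', h3⟩ := test_word σ s (wa i) (n := i + 1) (g := ev p q k (wa i))
      (by rw [sv_wa]; simpa using (σ.good s).app1 hi false) (by omega) (by rwa [sv_wa])
    exact ⟨τ, h2, Or.inr (Or.inl ⟨_, _, h3⟩)⟩
  by_cases h2 : ∀ i j, σ.N s ≤ i → σ.N s ≤ j → i ≠ j →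
      ev p q k (wa i) * ev p q k (wa j) ∈ CC (σ.L s ++ [S.a i * S.a j])
  swap
  · push Not at h2
    obtain ⟨i, j, hi, hj, hij, h2⟩ := h2
    obtain ⟨τ, h2, ω', h3⟩ := test_word σ s (wa i * wa j) (n := max i j + 1)
      (g := ev p q k (wa i * wa j))
      (by rw [map_mul, sv_wa, sv_wa]; exact (σ.good s).app2 hi hj hij) (by omega)
      (by rw [map_mul, map_mul, sv_wa, sv_wa]; exact h2)
    exact ⟨τ, h2, Or.inr (Or.inl ⟨_, _, h3⟩)⟩
  rcases (σ.good s).dich _ h1 h2 with h3 | ⟨c, hc, h3⟩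
  swap
  · exact ⟨σ, σ.le_refl, Or.inr (Or.inr ⟨c, hc, _, h3⟩)⟩
  obtain ⟨M, hM, h4⟩ := (σ.good s).drop hk
  obtain ⟨τ, h5, ω', h6⟩ := test_word σ s (FreeGroup.of 2 * wa M) (n := M + 1)
      (g := ev p q k (FreeGroup.of 2 * wa M))
      (by rw [map_mul, sv_wa, sv_two]; simpa using (σ.good s).app1 hM true) (by omega)
      (by
        rw [map_mul, map_mul, sv_wa, sv_two, ev_two]
        intro h7
        have h8 : k ∈ CC (σ.L s ++ [S.kk * S.a M]) :=
          ((CC (σ.L s ++ [S.kk * S.a M])).mul_mem_cancel_right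
            (CC_mono (List.prefix_append _ _) (h3 M hM))).1 h7
        refine h4 M le_rfl (fun _ => true) ?_
        have h9 : CC (σ.L s ++ [S.kk * S.a M]) ≤ EE S (σ.L s) M (fun _ => true) := by
          unfold CC
          rw [Subgroup.closure_le]
          intro z hz
          rcases List.mem_append.1 hz with hz | hz
          · exact CC_le_EE S _ _ _ (mem_CC hz)
          · have : z = fam S (σ.L s) (fun _ => true) (Sum.inr M) := by
              simpa [fam, Side.ae] using hz
            rw [this]
            exact fam_mem_EE S (by simp)
        exact h9 h8)
  exact ⟨τ, h5, Or.inr (Or.inl ⟨_, _, h6⟩)⟩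

lemma task_R3 (s : Bool) (p q k : A) (σ : St S) : ∃ τ : St S, σ.le τ ∧
    (k ∈ CC (τ.L (!s)) ∨ (∃ ω ω', τ.PR s (S.sv ω) (S.sv ω') ∧ ev p q k ω ∈ τ.X (!s))) := by
  by_cases hk : k ∈ CC (σ.L (!s))
  · exact ⟨σ, σ.le_refl, Or.inl hk⟩
  have : ∃ ω, ev p q k ω ∉ CC (σ.L (!s)) ∧
      Good S (σ.L s ++ [S.sv ω]) (σ.N s + 1) (σ.X s) := by
    by_cases h : ev p q k (wa (σ.N s)) ∈ CC (σ.L (!s))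
    · refine ⟨FreeGroup.of 2 * wa (σ.N s), ?_, ?_⟩
      · rw [map_mul, ev_two]
        intro h'
        exact hk ((Subgroup.mul_mem_cancel_right _ h).1 h')
      · rw [map_mul, sv_wa, sv_two]; simpa using (σ.good s).app1 le_rfl true
    · refine ⟨wa (σ.N s), h, ?_⟩
      rw [sv_wa]; simpa using (σ.good s).app1 le_rfl false
  obtain ⟨ω, h1, h2⟩ := this
  obtain ⟨M, hM, h3⟩ := (σ.good (!s)).add h1
  have h4 := h3.app1 le_rfl false
  simp only [Bool.false_eq_true, if_false] at h4
  obtain ⟨τ, h5, -, -, -, -, -, h6, h7⟩ := mkSt σ s h2 h4 rfl (by omega) (by omega) (fun x hx => hx)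
    (fun x hx => by simp [hx])
  refine ⟨τ, h5, Or.inr ⟨ω, wa M, ?_, ?_⟩⟩
  · rw [sv_wa]; exact h7 0 _ _ (by simp) (by simp)
  · rw [h6]; simp

lemma task_R5 (p q k p' q' k' : A) (hne : ∀ i, ev p q k (wa i) ≠ ev p q k (wa (i+1))) (σ : St S) :
    ∃ τ : St S, σ.le τ ∧ ∃ ω ω', τ.PR true (S.sv ω) (S.sv ω') ∧ ev p q k ω ≠ ev p' q' k' ω' := by
  obtain ⟨i, hi, h1⟩ : ∃ i, σ.N true ≤ i ∧
      ev p q k (wa i) ≠ ev p' q' k' (wa (σ.N false)) := by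
    by_cases h : ev p q k (wa (σ.N true)) = ev p' q' k' (wa (σ.N false))
    · exact ⟨σ.N true + 1, by omega, by rw [← h]; exact (hne _).symm⟩
    · exact ⟨σ.N true, le_rfl, h⟩
  have h2 := (σ.good true).app1 hi false
  simp only [Bool.false_eq_true, if_false] at h2
  obtain ⟨τ, h3, -, -, -, h4⟩ := appBoth σ true h2 (by omega) (fun x hx => hx)
  refine ⟨τ, h3, _, _, ?_, h1⟩
  rw [sv_wa, sv_wa]
  exact h4 0 _ (by simp)

lemma task_R6 (s : Bool) (σ : St S) :
    ∃ τ : St S, σ.le τ ∧ ∃ i j, τ.PR s (S.a i) (S.a j) ∧ τ.PR s (S.a (i+1)) (S.a (j+1)) := by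
  obtain ⟨τ, h1, -, -, -, h2⟩ := appBoth σ s ((σ.good s).appr 2) (by omega) (fun x hx => hx)
  exact ⟨τ, h1, σ.N s, σ.N (!s), h2 0 _ (by simp), h2 1 _ (by simp)⟩

lemma task_R7 (s : Bool) (σ : St S) :
    ∃ τ : St S, σ.le τ ∧ ∃ i j, τ.PR s (S.kk * S.a i) (S.a j) := by
  have h2 := (σ.good s).app1 le_rfl true
  simp only [if_true] at h2
  obtain ⟨τ, h1, -, -, -, h2⟩ := appBoth σ s h2 (by omega) (fun x hx => hx)
  exact ⟨τ, h1, σ.N s, σ.N (!s), h2 0 _ (by simp)⟩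

/-- value of a word -/
def wv {K : Type} [Group K] (j : Bool → A →* K) (w : List (Bool × A)) : K :=
  (w.map (fun p => j p.1 p.2)).prod

/-- a word with alternating sides starting at `s` -/
def Alt : Bool → List (Bool × A) → Prop
  | _, [] => True
  | s, p :: w => p.1 = s ∧ Alt (!s) w

/-- the chain lemma -/
lemma chain (w : List (Bool × A)) (hw : w ≠ []) : ∀ (s : Bool) (_ : Alt s w) (σ : St S)
    (_ : ∀ p ∈ w, p.2⁻¹ ∈ σ.X p.1),
    ∃ τ : St S, σ.le τ ∧ ∃ d, Good S (τ.L s ++ [d]) (τ.N s) (τ.X s) ∧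
      ∃ e : Bool → A, (∀ b, e b ∈ CC (τ.L b)) ∧
      ∀ (K : Type) [Group K] (j : Bool → A →* K), τ.Rz j →
        ∀ b, wv j w * j b (e b) * (wv j w)⁻¹ = j s d := by
  induction w with
  | nil => exact absurd rfl hw
  | cons p w ih =>
    intro s ha σ hX
    obtain ⟨s', z⟩ := p
    obtain ⟨rfl, ha⟩ := ha
    dsimp only at *
    have hz : z⁻¹ ∈ σ.X s' := hX (s', z) (by simp)
    have nl : ∀ σ1 : St S, z⁻¹ ∈ σ1.X s' → ∃ t, Good S (σ1.L s' ++ [t, z * t * z⁻¹]) (σ1.N s') (σ1.X s') := by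
      intro σ1 h1
      obtain ⟨t, ht⟩ := (σ1.good s').newletter [(1, 1), (z, z⁻¹)] (by
        simp only [List.pairwise_cons, List.mem_cons, List.not_mem_nil, or_false, forall_eq,
          inv_one, one_mul, List.Pairwise.nil, and_true, IsEmpty.forall_iff, implies_true]
        exact ⟨h1, h1⟩)
      exact ⟨t, by simpa using ht⟩
    rcases w with _ | ⟨p', w⟩
    · obtain ⟨t, ht⟩ := nl σ hz
      have h1 : Good S (σ.L s' ++ [t]) (σ.N s') (σ.X s') :=
        Good.left (M := [z * t * z⁻¹]) (by simpa using ht)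
      obtain ⟨τ, h2, h3, h4, h5, h6⟩ := appBoth σ s' h1 le_rfl (fun x hx => hx)
      have hpr : τ.PR s' t (S.a (σ.N (!s'))) := h6 0 t (by simp)
      refine ⟨τ, h2, z * t * z⁻¹, by rw [h3, h4, h5]; simpa using ht,
        fun b => if b = s' then t else S.a (σ.N (!s')), ?_, ?_⟩
      · intro b
        dsimp only
        split_ifs with hb
        · rw [hb]; exact hpr.mem
        · have : b = !s' := by cases b <;> cases s' <;> simp_all
          rw [this]; exact hpr.symm.mem
      · intro K _ j hj b
        have : j b (if b = s' then t else S.a (σ.N (!s'))) = j s' t := by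
          split_ifs with hb
          · rw [hb]
          · have : b = !s' := by cases b <;> cases s' <;> simp_all
            rw [this]; exact (hj _ _ _ hpr).symm
        rw [this]
        simp [wv]
    · obtain ⟨σ1, h1, d, h2, e, h3, h4⟩ := ih (by simp) (!s') ha σ
        (fun p hp => hX p (List.mem_cons_of_mem _ hp))
      obtain ⟨t, ht⟩ := nl σ1 ((h1 s').2.2 _ hz)
      have h5 : Good S (σ1.L s' ++ [t]) (σ1.N s') (σ1.X s') :=
        Good.left (M := [z * t * z⁻¹]) (by simpa using ht)
      obtain ⟨τ, h6, h7, -, h8, -, h9, -, h10⟩ := mkSt σ1 s' h5 h2 rfl le_rfl le_rfl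
        (fun x hx => hx) (fun x hx => hx)
      have hpr : τ.PR s' t d := h10 0 t d (by simp) (by simp)
      refine ⟨τ, St.le_trans h1 h6, z * t * z⁻¹, by rw [h7, h8, h9]; simpa using ht, e,
        fun b => CC_mono (h6 b).1 (h3 b), ?_⟩
      intro K _ j hj b
      have h11 := h4 K j (hj.mono h6) b
      have h12 := hj _ _ _ hpr
      have h13 : wv j ((s', z) :: p' :: w) = j s' z * wv j (p' :: w) := by simp [wv]
      rw [h13, map_mul, map_mul, h12, ← h11, map_inv]
      group

lemma task_simple (s : Bool) (w : List (Bool × A)) (hw : w ≠ []) (ha : Alt s w) (x : A) (σ : St S) :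
    ∃ τ : St S, σ.le τ ∧ ((∃ p ∈ w, p.2 ∈ CC (τ.L p.1)) ∨
      ∀ (K : Type) [Group K] (j : Bool → A →* K), τ.Rz j →
        j s x ∈ Subgroup.normalClosure {wv j w}) := by
  by_cases hC : ∃ p ∈ w, p.2 ∈ CC (σ.L p.1)
  · exact ⟨σ, σ.le_refl, Or.inl hC⟩
  push Not at hC
  -- put the letters into the avoid lists
  obtain ⟨σ1, h1, h2⟩ : ∃ σ1 : St S, σ.le σ1 ∧ ∀ p ∈ w, p.2⁻¹ ∈ σ1.X p.1 := by
    clear ha hw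
    have : ∀ w' : List (Bool × A), (∀ p ∈ w', p.2 ∉ CC (σ.L p.1)) →
        ∃ σ1 : St S, σ.le σ1 ∧ (∀ b, σ1.L b = σ.L b) ∧ ∀ p ∈ w', p.2⁻¹ ∈ σ1.X p.1 := by
      intro w' 
      induction w' with
      | nil => intro _; exact ⟨σ, σ.le_refl, fun _ => rfl, by simp⟩
      | cons p w' ih =>
        intro h
        obtain ⟨σ1, h1, h2, h3⟩ := ih (fun p hp => h p (List.mem_cons_of_mem _ hp))
        obtain ⟨σ2, h4, h5, h6⟩ := addX σ1 p.1 [p.2⁻¹] (by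
          rw [h2]; simpa using h p (by simp))
        refine ⟨σ2, St.le_trans h1 h4, fun b => (h5 b).trans (h2 b), ?_⟩
        intro p' hp'
        rcases List.mem_cons.1 hp' with rfl | hp'
        · exact h6 _ (by simp)
        · exact (h4 _).2.2 _ (h3 p' hp')
    obtain ⟨σ1, h1, -, h2⟩ := this w hC
    exact ⟨σ1, h1, h2⟩
  obtain ⟨σ2, h3, d, h4, e, h5, h6⟩ := chain w hw s ha σ1 h2
  have hch : ∃ i, S.a i ∉ CC (σ2.L s ++ [d]) ∧ x * S.a i ∉ CC (σ2.L s ++ [d]) := by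
    by_cases h : x * S.a (σ2.N s) ∈ CC (σ2.L s ++ [d])
    · refine ⟨σ2.N s + 1, h4.a_not (by omega), fun h' => ?_⟩
      apply h4.a_div (i := σ2.N s) (j := σ2.N s + 1) le_rfl (by omega) (by omega)
      have := mul_mem (inv_mem h) h'
      simpa [mul_assoc] using this
    · exact ⟨σ2.N s, h4.a_not le_rfl, h⟩
  obtain ⟨i, hi1, hi2⟩ := hch
  obtain ⟨M, hM, g1⟩ := h4.adds [(S.a i)⁻¹, (x * S.a i)⁻¹]
    (by simp only [List.mem_cons, List.not_mem_nil, or_false]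
        rintro z (rfl | rfl)
        · simpa using hi1
        · rw [inv_mem_iff]; exact hi2)
  obtain ⟨t, ht⟩ := g1.newletter [(1, 1), (x * S.a i, (S.a i)⁻¹)] (by
    simp only [List.pairwise_cons, List.mem_cons, List.not_mem_nil, or_false, forall_eq,
      inv_one, one_mul, List.Pairwise.nil, and_true, IsEmpty.forall_iff, implies_true]
    exact ⟨by simp, by simp⟩)
  -- the other side
  obtain ⟨E, hE⟩ : ∃ E, E = S.a (σ2.N (!s)) := ⟨_, rfl⟩
  obtain ⟨F, hF⟩ : ∃ F, F = S.a (σ2.N (!s) + 1) := ⟨_, rfl⟩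
  obtain ⟨r, hr⟩ : ∃ r, r = e (!s) := ⟨_, rfl⟩
  have hr' : r ∈ CC (σ2.L (!s)) := hr ▸ h5 (!s)
  have hE' : E ∉ CC (σ2.L (!s)) := hE ▸ (σ2.good (!s)).a_not le_rfl
  have hF' : F ∉ CC (σ2.L (!s)) := hF ▸ (σ2.good (!s)).a_not (by omega)
  have hEF : E⁻¹ * F ∉ CC (σ2.L (!s)) := by
    rw [hE, hF]; exact (σ2.good (!s)).a_div le_rfl (by omega) (by omega)
  obtain ⟨M', hM', g2⟩ := (σ2.good (!s)).adds [E, F, E⁻¹ * F, r⁻¹ * E, r⁻¹ * F]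
    (by simp only [List.mem_cons, List.not_mem_nil, or_false]
        rintro z (rfl | rfl | rfl | rfl | rfl)
        · exact hE'
        · exact hF'
        · exact hEF
        · rwa [Subgroup.mul_mem_cancel_left _ (inv_mem hr')]
        · rwa [Subgroup.mul_mem_cancel_left _ (inv_mem hr')])
  obtain ⟨ρ, hρ⟩ := g2.newletter [(1, r), (E⁻¹, E), (F⁻¹, F)] (by simp)
  obtain ⟨τ, k1, -, -, -, -, -, -, k2⟩ := mkSt σ2 s (l := [d, t, x * S.a i * t * (S.a i)⁻¹])
    (l' := [ρ * r, E⁻¹ * ρ * E, F⁻¹ * ρ * F]) (by simpa using ht) (by simpa using hρ) rfl hM hM'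
    (fun x hx => by simp [hx]) (fun x hx => by simp [hx])
  refine ⟨τ, St.le_trans h1 (St.le_trans h3 k1), Or.inr ?_⟩
  intro K _ j hj
  have q1 := hj _ _ _ (k2 0 _ _ rfl rfl)
  have q2 := hj _ _ _ (k2 1 _ _ rfl rfl)
  have q3 := hj _ _ _ (k2 2 _ _ rfl rfl)
  have q4 := h6 K j (hj.mono k1) (!s)
  rw [← hr] at q4
  have hn : (Subgroup.normalClosure {wv j w}).Normal := Subgroup.normalClosure_normal
  have hW : wv j w ∈ Subgroup.normalClosure {wv j w} := Subgroup.subset_normalClosure rfl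
  generalize Subgroup.normalClosure {wv j w} = Nn at hn hW ⊢
  have m1 : j (!s) ρ ∈ Nn := by
    have : j (!s) ρ = wv j w * (j (!s) r * (wv j w)⁻¹ * (j (!s) r)⁻¹) := by
      rw [map_mul, ← q4] at q1
      rw [eq_mul_inv_of_mul_eq q1.symm]
      group
    rw [this]
    exact mul_mem hW (hn.conj_mem _ (inv_mem hW) _)
  have m2 : j s t ∈ Nn := by
    rw [q2, map_mul, map_mul, map_inv]
    simpa using hn.conj_mem _ m1 (j (!s) E)⁻¹
  have m3 : j s (x * S.a i * t * (S.a i)⁻¹) ∈ Nn := by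
    rw [q3, map_mul, map_mul, map_inv]
    simpa using hn.conj_mem _ m1 (j (!s) F)⁻¹
  have m4 : j s x = j s (x * S.a i * t * (S.a i)⁻¹) *
      (j s (S.a i) * (j s t)⁻¹ * (j s (S.a i))⁻¹) := by
    simp only [map_mul, map_inv]; group
  rw [m4]
  exact mul_mem m3 (hn.conj_mem _ (inv_mem m2) _)

end
end Emb

/-! Part 8: the generic limit -/
namespace Emb
open Function

section
variable {A : Type} [Group A]

/-- limit pairing -/
def pr (c : Bool → ℕ → A) (s : Bool) (a b : A) : Prop := ∃ k, c s k = a ∧ c (!s) k = b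

/-- the limit hom -/
def phi (c : Bool → ℕ → A) (s : Bool) : FreeGroup ℕ →* A := FreeGroup.lift (c s)

/-- generic data -/
structure Gen (S : Side A) (c : Bool → ℕ → A) : Prop where
  inj : ∀ b, Injective (phi c b)
  conj : ∀ b ω z, ∀ g ∈ S.Gs, phi c b ω = z * g * z⁻¹ → g = 1
  gen : ∀ s x, ∃ t i j, pr c s t (S.a j) ∧ pr c s (x * S.a i * t * (S.a i)⁻¹) (S.a (j+1))
  out : ∀ s y, y ≠ 1 → ∃ z, z * y * z⁻¹ ∉ (phi c s).range
  R1 : ∀ s, ∀ p q k : A, k ∈ (phi c s).range ∨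
    (∃ ω ω', pr c s (S.sv ω) (S.sv ω') ∧ ev p q k ω ∉ (phi c s).range) ∨
      ∃ d ∈ (phi c s).range, ∃ N, ∀ i, N ≤ i → ev p q k (wa i) = d * S.a i * d⁻¹
  R3 : ∀ s, ∀ p q k : A, k ∈ (phi c (!s)).range ∨
    (∃ ω ω', pr c s (S.sv ω) (S.sv ω') ∧ ev p q k ω ∉ (phi c (!s)).range)
  R5 : ∀ p q k p' q' k' : A, (∀ i, ev p q k (wa i) ≠ ev p q k (wa (i+1))) →
    ∃ ω ω', pr c true (S.sv ω) (S.sv ω') ∧ ev p q k ω ≠ ev p' q' k' ω'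
  R6 : ∀ s, ∃ i j, pr c s (S.a i) (S.a j) ∧ pr c s (S.a (i+1)) (S.a (j+1))
  R7 : ∀ s, ∃ i j, pr c s (S.kk * S.a i) (S.a j)
  simple : ∀ s w, w ≠ [] → Alt s w → ∀ x : A, (∃ p ∈ w, p.2 ∈ (phi c p.1).range) ∨
      ∀ (K : Type) [Group K] (j : Bool → A →* K),
        (∀ s a b, pr c s a b → j s a = j (!s) b) →
        j s x ∈ Subgroup.normalClosure {wv j w}

variable {S : Side A}

lemma generic_chain (𝒟 : Set (Set (St S))) (hc : 𝒟.Countable)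
    (hd : ∀ D ∈ 𝒟, ∀ σ : St S, ∃ τ : St S, σ.le τ ∧ τ ∈ D) :
    ∃ f : ℕ → St S, (∀ m n, m ≤ n → (f m).le (f n)) ∧ ∀ D ∈ 𝒟, ∃ n, f n ∈ D := by
  let σ0 : St S := ⟨fun _ => [], fun _ => 0, fun _ => [], fun _ => good_nil, fun _ _ => rfl⟩
  rcases 𝒟.eq_empty_or_nonempty with rfl | hne
  · exact ⟨fun _ => σ0, fun _ _ _ => σ0.le_refl, by simp⟩
  obtain ⟨d, rfl⟩ := hc.exists_eq_range hne
  choose g hg1 hg2 using hd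
  let f : ℕ → St S := fun n => Nat.rec σ0 (fun n σ => g (d n) ⟨n, rfl⟩ σ) n
  have hf : ∀ n, f (n+1) = g (d n) ⟨n, rfl⟩ (f n) := fun n => rfl
  refine ⟨f, ?_, ?_⟩
  · intro m n hmn
    induction n, hmn using Nat.le_induction with
    | base => exact St.le_refl _
    | succ n hmn ih => exact St.le_trans ih (by rw [hf]; exact hg1 _ _ _)
  · rintro _ ⟨n, rfl⟩
    exact ⟨n+1, by rw [hf]; exact hg2 _ _ _⟩

theorem exists_gen (S : Side A) [Countable A] : ∃ c, Gen S c := by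
  let D0 : ℕ → Set (St S) := fun n => {τ | ∀ b, n ≤ (τ.L b).length}
  let D1 : Bool × A → Set (St S) := fun u => {τ | ∃ t i j,
    τ.PR u.1 t (S.a j) ∧ τ.PR u.1 (u.2 * S.a i * t * (S.a i)⁻¹) (S.a (j+1))}
  let D2 : Bool × A → Set (St S) := fun u => {τ | u.2 ≠ 1 → ∃ z, z * u.2 * z⁻¹ ∈ τ.X u.1}
  let D3 : Bool × A × A × A → Set (St S) := fun u => {τ |
    u.2.2.2 ∈ CC (τ.L u.1) ∨ (∃ ω ω', τ.PR u.1 (S.sv ω) (S.sv ω') ∧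
      ev u.2.1 u.2.2.1 u.2.2.2 ω ∈ τ.X u.1) ∨
      ∃ c ∈ CC (τ.L u.1), ∃ N, ∀ i, N ≤ i → ev u.2.1 u.2.2.1 u.2.2.2 (wa i) = c * S.a i * c⁻¹}
  let D4 : Bool × A × A × A → Set (St S) := fun u => {τ |
    u.2.2.2 ∈ CC (τ.L (!u.1)) ∨ (∃ ω ω', τ.PR u.1 (S.sv ω) (S.sv ω') ∧
      ev u.2.1 u.2.2.1 u.2.2.2 ω ∈ τ.X (!u.1))}
  let D5 : (A × A × A) × (A × A × A) → Set (St S) := fun u => {τ |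
    (∀ i, ev u.1.1 u.1.2.1 u.1.2.2 (wa i) ≠ ev u.1.1 u.1.2.1 u.1.2.2 (wa (i+1))) →
    ∃ ω ω', τ.PR true (S.sv ω) (S.sv ω') ∧ ev u.1.1 u.1.2.1 u.1.2.2 ω ≠ ev u.2.1 u.2.2.1 u.2.2.2 ω'}
  let D6 : Bool → Set (St S) := fun s => {τ |
    ∃ i j, τ.PR s (S.a i) (S.a j) ∧ τ.PR s (S.a (i+1)) (S.a (j+1))}
  let D7 : Bool → Set (St S) := fun s => {τ | ∃ i j, τ.PR s (S.kk * S.a i) (S.a j)}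
  let D8 : Bool × A × List (Bool × A) → Set (St S) := fun u => {τ |
    u.2.2 ≠ [] → Alt u.1 u.2.2 → ((∃ p ∈ u.2.2, p.2 ∈ CC (τ.L p.1)) ∨
      ∀ (K : Type) [Group K] (j : Bool → A →* K), τ.Rz j →
        j u.1 u.2.1 ∈ Subgroup.normalClosure {wv j u.2.2})}
  obtain ⟨f, hf, hD⟩ := generic_chain (S := S)
    (Set.range D0 ∪ Set.range D1 ∪ Set.range D2 ∪ Set.range D3 ∪ Set.range D4 ∪ Set.range D5 ∪
      Set.range D6 ∪ Set.range D7 ∪ Set.range D8)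
    (by
      repeat' apply Set.Countable.union
      all_goals exact Set.countable_range _)
    (by
      rintro D ((((((((⟨u, rfl⟩ | ⟨u, rfl⟩) | ⟨u, rfl⟩) | ⟨u, rfl⟩) | ⟨u, rfl⟩) | ⟨u, rfl⟩) | ⟨u, rfl⟩) |
        ⟨u, rfl⟩) | ⟨u, rfl⟩) σ
      · exact task_len u σ
      · exact task_gen _ _ σ
      · by_cases h : u.2 = 1
        · exact ⟨σ, σ.le_refl, fun h' => absurd h h'⟩
        · obtain ⟨τ, h1, h2⟩ := task_out u.1 u.2 h σ
          exact ⟨τ, h1, fun _ => h2⟩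
      · exact task_R1 _ _ _ _ σ
      · exact task_R3 _ _ _ _ σ
      · by_cases h : ∀ i, ev u.1.1 u.1.2.1 u.1.2.2 (wa i) ≠ ev u.1.1 u.1.2.1 u.1.2.2 (wa (i+1))
        · obtain ⟨τ, h1, h2⟩ := task_R5 u.1.1 u.1.2.1 u.1.2.2 u.2.1 u.2.2.1 u.2.2.2 h σ
          exact ⟨τ, h1, fun _ => h2⟩
        · exact ⟨σ, σ.le_refl, fun h' => absurd h' h⟩
      · exact task_R6 _ σ
      · exact task_R7 _ σ
      · by_cases h : u.2.2 ≠ [] ∧ Alt u.1 u.2.2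
        · obtain ⟨τ, h1, h2⟩ := task_simple u.1 u.2.2 h.1 h.2 u.2.1 σ
          exact ⟨τ, h1, fun _ _ => h2⟩
        · exact ⟨σ, σ.le_refl, fun h' h'' => absurd ⟨h', h''⟩ h⟩)
  have hlen : ∀ k, ∃ n, ∀ b, k < ((f n).L b).length := fun k => by
    obtain ⟨n, hn⟩ := hD (D0 (k+1)) (Or.inl (Or.inl (Or.inl (Or.inl (Or.inl (Or.inl (Or.inl (Or.inl ⟨_, rfl⟩))))))))
    exact ⟨n, hn⟩
  choose n hn using hlen
  let c : Bool → ℕ → A := fun b k => ((f (n k)).L b).getD k 1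
  have hc : ∀ b m k a, ((f m).L b)[k]? = some a → c b k = a := by
    intro b m k a h
    have h1 := pfx_get (hf m (max m (n k)) (le_max_left _ _) b).1 h
    have h2 : ((f (n k)).L b)[k]? = some (c b k) := by
      simp [c, hn k b]
    have h3 := pfx_get (hf (n k) (max m (n k)) (le_max_right _ _) b).1 h2
    rw [h1] at h3
    exact (Option.some.inj h3).symm
  have hpr : ∀ {m s a b}, (f m).PR s a b → pr c s a b := by
    rintro m s a b ⟨k, h1, h2⟩
    exact ⟨k, hc _ _ _ _ h1, hc _ _ _ _ h2⟩
  have hCC : ∀ {m s z}, z ∈ CC ((f m).L s) → z ∈ (phi c s).range := by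
    intro m s z hz
    have : CC ((f m).L s) ≤ (phi c s).range := by
      unfold CC
      rw [Subgroup.closure_le]
      intro z hz
      obtain ⟨k, hk⟩ := List.mem_iff_getElem?.1 hz
      refine ⟨FreeGroup.of k, ?_⟩
      simp [phi, hc _ _ _ _ hk]
    exact this hz
  have hw : ∀ s (ω : FreeGroup ℕ), ∃ n0, ∀ m, n0 ≤ m →
      FreeGroup.map Sum.inl ω ∈ FI ((f m).L s).length ((f m).N s) ∧
      FreeGroup.lift (fam S ((f m).L s) (fun _ => false)) (FreeGroup.map Sum.inl ω) = phi c s ω := by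
    intro s ω
    induction ω using FreeGroup.induction_on with
    | C1 => exact ⟨0, fun m _ => by simp⟩
    | of k =>
      refine ⟨n k, fun m hm => ?_⟩
      have h1 : k < ((f m).L s).length := lt_of_lt_of_le (hn k s) (hf _ _ hm s).1.length_le
      refine ⟨?_, ?_⟩
      · simp only [FreeGroup.map.of]; exact of_mem_FI (by simpa using h1)
      · have := hc s m k (((f m).L s).getD k 1) (by simp [h1])
        simp [phi, fam, this]
    | inv_of k ih =>
      obtain ⟨n0, h⟩ := ih
      refine ⟨n0, fun m hm => ?_⟩
      rw [map_inv, map_inv, map_inv]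
      exact ⟨inv_mem (h m hm).1, by rw [(h m hm).2]⟩
    | mul x y hx hy =>
      obtain ⟨n0, h⟩ := hx
      obtain ⟨n1, h'⟩ := hy
      refine ⟨max n0 n1, fun m hm => ?_⟩
      have a1 := h m (by omega)
      have a2 := h' m (by omega)
      rw [map_mul, map_mul, map_mul]
      exact ⟨mul_mem a1.1 a2.1, by rw [a1.2, a2.2]⟩
  have hX : ∀ {m s z}, z ∈ (f m).X s → z ∉ (phi c s).range := by
    rintro m s z hz ⟨ω, rfl⟩
    obtain ⟨n0, h⟩ := hw s ω
    have h1 := h (max m n0) (le_max_right _ _)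
    refine ((f (max m n0)).good s).avoid (fun _ => false) _ ((hf m _ (le_max_left _ _) s).2.2 _ hz) ?_
    exact (mem_EE S).2 ⟨_, h1⟩
  have hRz : ∀ {K : Type} [Group K] (j : Bool → A →* K) m,
      (∀ s a b, pr c s a b → j s a = j (!s) b) → (f m).Rz j := by
    intro K _ j m h s a b hp
    exact h s a b (hpr hp)
  refine ⟨c, ?_, ?_, ?_, ?_, ?_, ?_, ?_, ?_, ?_, ?_⟩
  · intro b
    rw [injective_iff_map_eq_one]
    intro ω hω
    obtain ⟨n0, h⟩ := hw b ω
    obtain ⟨h1, h2⟩ := h n0 le_rfl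
    have h3 := ((f n0).good b).free _ _ h1 (h2.trans hω)
    have : Injective (FreeGroup.map (Sum.inl : ℕ → ℕ ⊕ ℕ)) := FreeGroup.map_injective Sum.inl_injective
    exact this (by rw [h3, map_one])
  · intro b ω z g hg h0
    obtain ⟨n0, h⟩ := hw b ω
    obtain ⟨h1, h2⟩ := h n0 le_rfl
    exact ((f n0).good b).conj _ _ ((mem_EE S).2 ⟨_, h1, h2⟩) z g hg h0
  · intro s x
    obtain ⟨n, t, i, j, h1, h2⟩ := hD (D1 (s, x)) (Or.inl (Or.inl (Or.inl (Or.inl (Or.inl (Or.inl (Or.inl (Or.inr ⟨_, rfl⟩))))))))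
    exact ⟨t, i, j, hpr h1, hpr h2⟩
  · intro s y hy
    obtain ⟨n, h⟩ := hD (D2 (s, y)) (Or.inl (Or.inl (Or.inl (Or.inl (Or.inl (Or.inl (Or.inr ⟨_, rfl⟩)))))))
    obtain ⟨z, hz⟩ := h hy
    exact ⟨z, hX hz⟩
  · intro s p q k
    obtain ⟨n, h | ⟨ω, ω', h1, h2⟩ | ⟨d, h1, h2⟩⟩ := hD (D3 (s, p, q, k)) (Or.inl (Or.inl (Or.inl (Or.inl (Or.inl (Or.inr ⟨_, rfl⟩))))))
    · exact Or.inl (hCC h)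
    · exact Or.inr (Or.inl ⟨ω, ω', hpr h1, hX h2⟩)
    · exact Or.inr (Or.inr ⟨d, hCC h1, h2⟩)
  · intro s p q k
    obtain ⟨n, h | ⟨ω, ω', h1, h2⟩⟩ := hD (D4 (s, p, q, k)) (Or.inl (Or.inl (Or.inl (Or.inl (Or.inr ⟨_, rfl⟩)))))
    · exact Or.inl (hCC h)
    · exact Or.inr ⟨ω, ω', hpr h1, hX h2⟩
  · intro p q k p' q' k' h0
    obtain ⟨n, h⟩ := hD (D5 ((p, q, k), (p', q', k'))) (Or.inl (Or.inl (Or.inl (Or.inr ⟨_, rfl⟩))))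
    obtain ⟨ω, ω', h1, h2⟩ := h h0
    exact ⟨ω, ω', hpr h1, h2⟩
  · intro s
    obtain ⟨n, i, j, h1, h2⟩ := hD (D6 s) (Or.inl (Or.inl (Or.inr ⟨_, rfl⟩)))
    exact ⟨i, j, hpr h1, hpr h2⟩
  · intro s
    obtain ⟨n, i, j, h1⟩ := hD (D7 s) (Or.inl (Or.inr ⟨_, rfl⟩))
    exact ⟨i, j, hpr h1⟩
  · intro s w hw0 ha x
    obtain ⟨n, h⟩ := hD (D8 (s, x, w)) (Or.inr ⟨_, rfl⟩)
    rcases h hw0 ha with ⟨p, h1, h2⟩ | h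
    · exact Or.inl ⟨p, h1, hCC h2⟩
    · exact Or.inr fun K _ j hj => h K j (hRz j n hj)

end
end Emb

/-! Part 9: realization of sides -/
namespace Emb
open Function

section

/-- the building block -/
abbrev Pb : Type := FreeGroup Bool × DihedralGroup 3

/-- the family of free factors -/
def Fm (G : Type) : Option ℕ → Type
  | none => G
  | some _ => Pb

instance (G : Type) [Group G] : ∀ i, Group (Fm G i)
  | none => inferInstanceAs (Group G)
  | some _ => inferInstanceAs (Group Pb)

instance (G : Type) [Countable G] : ∀ i, Countable (Fm G i)
  | none => inferInstanceAs (Countable G)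
  | some _ => inferInstanceAs (Countable Pb)

/-- trivial base -/
def ph0 (G : Type) [Group G] : ∀ i, Unit →* Fm G i := fun _ => 1

/-- free product -/
abbrev Ag (G : Type) [Group G] : Type := Monoid.PushoutI (ph0 G)

variable (G : Type) [Group G]

lemma ph0_inj : ∀ i, Injective (ph0 G i) := fun _ _ _ _ => rfl

instance [Countable G] : Countable (Ag G) := by
  have : Surjective (fun u : Option (List (Σ i, Fm G i)) =>
      (match u with
      | none => (1 : Ag G)
      | some l => lprod (ph0 G) l)) := by
    intro h
    rcases exists_lred (φ := ph0 G) h with ⟨u, rfl⟩ | ⟨l, -, -, rfl⟩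
    · exact ⟨none, (map_one _).symm⟩
    · exact ⟨some l, rfl⟩
  exact this.countable

/-- embedding of `G` -/
def inG : G →* Ag G := Monoid.PushoutI.of (φ := ph0 G) none

/-- copies of `Pb` -/
def inP (n : ℕ) : Pb →* Ag G := Monoid.PushoutI.of (φ := ph0 G) (some n)

lemma inG_inj : Injective (inG G) := Monoid.PushoutI.of_injective (ph0_inj G) none
lemma inP_inj (n) : Injective (inP G n) := Monoid.PushoutI.of_injective (ph0_inj G) (some n)

lemma ag_lift {X : Type*} [Group X] (f : G →* X) (p : ℕ → Pb →* X) :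
    ∃ Λ : Ag G →* X, (∀ g, Λ (inG G g) = f g) ∧ ∀ n w, Λ (inP G n w) = p n w := by
  let F : ∀ i, Fm G i →* X := fun i => match i with
    | none => f
    | some n => p n
  refine ⟨Monoid.PushoutI.lift F 1 (fun i => by ext; simp [ph0]), fun g => ?_, fun n w => ?_⟩
  · exact Monoid.PushoutI.lift_of (φ := ph0 G) F _ _ (i := none) g
  · exact Monoid.PushoutI.lift_of (φ := ph0 G) F _ _ (i := some n) w

lemma ag_top : Subgroup.closure (Set.range (inG G) ∪ ⋃ n, Set.range (inP G n)) = ⊤ := by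
  rw [eq_top_iff]
  intro h _
  induction h using Monoid.PushoutI.induction_on with
  | of i g =>
    rcases i with _ | n
    · exact Subgroup.subset_closure (Or.inl ⟨g, rfl⟩)
    · exact Subgroup.subset_closure (Or.inr (Set.mem_iUnion.2 ⟨n, g, rfl⟩))
  | base h =>
    have : h = 1 := rfl
    rw [this, map_one]; exact one_mem _
  | mul x y hx hy => exact mul_mem (hx trivial) (hy trivial)

/-- filtration -/
def AmG (m : ℕ) : Subgroup (Ag G) :=
  Subgroup.closure (Set.range (inG G) ∪ {z | ∃ n ≤ m, ∃ w, inP G n w = z})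

lemma amG_mono : Monotone (AmG G) := by
  intro m n h
  apply Subgroup.closure_mono
  rintro z (hz | ⟨k, hk, hz⟩)
  · exact Or.inl hz
  · exact Or.inr ⟨k, hk.trans h, hz⟩

lemma amG_inG (m g) : inG G g ∈ AmG G m := Subgroup.subset_closure (Or.inl ⟨g, rfl⟩)
lemma amG_inP {m n} (h : n ≤ m) (w) : inP G n w ∈ AmG G m :=
  Subgroup.subset_closure (Or.inr ⟨n, h, w, rfl⟩)

lemma amG_union (a : Ag G) : ∃ m, a ∈ AmG G m := by
  have : a ∈ Subgroup.closure (Set.range (inG G) ∪ ⋃ n, Set.range (inP G n)) := by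
    rw [ag_top]; trivial
  induction this using Subgroup.closure_induction with
  | mem x hx =>
    rcases hx with ⟨g, rfl⟩ | hx
    · exact ⟨0, amG_inG G 0 g⟩
    · obtain ⟨n, w, rfl⟩ := Set.mem_iUnion.1 hx
      exact ⟨n, amG_inP G le_rfl w⟩
  | one => exact ⟨0, one_mem _⟩
  | mul x y _ _ hx hy =>
    obtain ⟨m, hm⟩ := hx
    obtain ⟨n, hn⟩ := hy
    exact ⟨max m n, mul_mem (amG_mono G (le_max_left _ _) hm) (amG_mono G (le_max_right _ _) hn)⟩
  | inv x _ hx =>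
    obtain ⟨m, hm⟩ := hx
    exact ⟨m, inv_mem hm⟩

lemma amG_ext (m : ℕ) (X : Type) [Group X] (f : AmG G m →* X) (τ : X) :
    ∃ Λ : Ag G →* X, (∀ a : AmG G m, Λ a = f a) ∧
      Λ (inP G (m+1) (FreeGroup.of false, 1)) = τ := by
  obtain ⟨Λ, h1, h2⟩ := ag_lift G (X := X)
    (f.comp ((inG G).codRestrict (AmG G m) (amG_inG G m)))
    (fun n => if h : n ≤ m then f.comp ((inP G n).codRestrict (AmG G m) (amG_inP G h))
      else (FreeGroup.lift (fun _ => τ)).comp (MonoidHom.fst _ _))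
  refine ⟨Λ, ?_, ?_⟩
  · rintro ⟨a, ha⟩
    induction ha using Subgroup.closure_induction with
    | mem x hx =>
      rcases hx with ⟨g, rfl⟩ | ⟨n, hn, w, rfl⟩
      · rw [h1]; rfl
      · rw [h2, dif_pos hn]; rfl
    | one => rw [map_one]; exact (map_one f).symm
    | mul x y hx hy ih1 ih2 =>
      rw [map_mul, ih1, ih2, ← map_mul]; rfl
    | inv x hx ih => rw [map_inv, ih, ← map_inv]; rfl
  · rw [h2, dif_neg (by omega)]
    simp

/-- first generator -/
def xd : Pb := (FreeGroup.of false, DihedralGroup.r 1)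
/-- second generator -/
def yd : Pb := (FreeGroup.of true, DihedralGroup.sr 0)
/-- torsion element -/
def kd : Pb := (1, DihedralGroup.r 1)

lemma conj_one {A : Type*} [Group A] {v w : A} (h : v⁻¹ * w * v = 1) : w = 1 := by
  have : w = v * (v⁻¹ * w * v) * v⁻¹ := by group
  rw [this, h]; group

lemma into_P {w : Pb} (hw : w.1 ≠ 1) {z : Ag G} (h : z * inP G 0 w = inP G 0 w * z) :
    ∃ v, inP G 0 v = z := by
  have := conj_into_factor (ph0_inj G) (i := some 0) (j := some 0) (a := w) (h := z)
    (by
      rintro v0 ⟨u, hu⟩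
      obtain ⟨v, rfl⟩ : ∃ v : Pb, v = v0 := ⟨v0, rfl⟩
      have hu' : (1 : Pb) = v⁻¹ * w * v := hu
      apply hw
      have := congrArg Prod.fst hu'
      exact conj_one (v := v.1) (by simpa using this.symm))
    ⟨w, by
      change inP G 0 w = z⁻¹ * inP G 0 w * z
      rw [mul_assoc, ← h]; group⟩
  exact this.2

lemma comm_P (w : Pb) (h1 : w * yd = yd * w) (h2 : w * (xd * yd * xd⁻¹) = (xd * yd * xd⁻¹) * w) :
    w = 1 := by
  obtain ⟨u, v⟩ := w
  have a1 := congrArg Prod.fst h1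
  have a2 := congrArg Prod.fst h2
  have b1 := congrArg Prod.snd h1
  have b2 := congrArg Prod.snd h2
  have hu : u = 1 := S2_free u a1.symm a2.symm
  have hv : v = 1 := by
    have : ∀ v : DihedralGroup 3, v * DihedralGroup.sr 0 = DihedralGroup.sr 0 * v →
      v * (DihedralGroup.r 1 * DihedralGroup.sr 0 * (DihedralGroup.r 1)⁻¹) =
        (DihedralGroup.r 1 * DihedralGroup.sr 0 * (DihedralGroup.r 1)⁻¹) * v → v = 1 := by decide
    exact this v b1 b2
  rw [hu, hv]; rfl

lemma comm_aux {A : Type*} [Group A] {x y z : A} (h : z * (x * y * x⁻¹) = (x * y * x⁻¹) * z) :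
    (x⁻¹ * z * x) * y = y * (x⁻¹ * z * x) := by
  have : x⁻¹ * (z * (x * y * x⁻¹)) * x = x⁻¹ * ((x * y * x⁻¹) * z) * x := by rw [h]
  simpa [mul_assoc] using this

/-- projection to the free group -/
lemma exists_pi : ∃ π : Ag G →* FreeGroup Bool, (∀ g, π (inG G g) = 1) ∧
    ∀ w, π (inP G 0 w) = w.1 := by
  obtain ⟨Λ, h1, h2⟩ := ag_lift G (X := FreeGroup Bool) 1
    (fun n => MonoidHom.fst _ _)
  exact ⟨Λ, fun g => by rw [h1]; rfl, fun w => by rw [h2]; rfl⟩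

lemma free_pi {π : Ag G →* FreeGroup Bool} (h2 : ∀ w, π (inP G 0 w) = w.1)
    (ε : ℕ → Bool) (ω : FreeGroup ℕ)
    (h : π (FreeGroup.lift (fun i => if ε i then inP G 0 kd * (inP G 0 xd ^ i * inP G 0 yd *
      (inP G 0 xd ^ i)⁻¹) else inP G 0 xd ^ i * inP G 0 yd * (inP G 0 xd ^ i)⁻¹) ω) = 1) :
    ω = 1 := by
  apply (injective_iff_map_eq_one _).1 free_conj
  rw [← h, ← MonoidHom.comp_apply]
  congr 1
  ext i
  by_cases hi : ε i <;> simp [hi, h2, kd, xd, yd]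

/-- the side -/
def sideG : Side (Ag G) where
  x := inP G 0 xd
  y := inP G 0 yd
  kk := inP G 0 kd
  Gs := (inG G).range
  Am := AmG G
  t := fun m => inP G (m+1) (FreeGroup.of false, 1)
  mono := amG_mono G
  union := amG_union G
  x_mem := amG_inP G le_rfl _
  y_mem := amG_inP G le_rfl _
  kk_mem := amG_inP G le_rfl _
  Gs_le := by rintro _ ⟨g, rfl⟩; exact amG_inG G 0 g
  ext := amG_ext G
  kk_pow := by
    have : kd ^ 3 = 1 := Prod.ext (by simp [kd]) (by decide)
    rw [← map_pow, this, map_one]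
  kk_ne := by
    intro h
    have h1 : kd = 1 := inP_inj G 0 (by rw [h, map_one])
    exact absurd (congrArg Prod.snd h1) (by decide)
  x_kk := by
    left
    rw [← map_inv, ← map_mul, ← map_mul]
    congr 1
    exact Prod.ext (by simp [kd, xd]) (by decide)
  y_kk := by
    right
    rw [← map_inv, ← map_mul, ← map_mul, ← map_inv]
    congr 1
    exact Prod.ext (by simp [kd, yd]) (by decide)
  free := by
    intro ε ω h
    obtain ⟨π, -, h2⟩ := exists_pi G
    exact free_pi G h2 ε ω (by rw [h, map_one])
  conj := by
    rintro ε ω z _ ⟨g, rfl⟩ h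
    obtain ⟨π, h1, h2⟩ := exists_pi G
    have hω := free_pi G h2 ε ω (by rw [h]; simp [h1])
    rw [hω, map_one] at h
    have : inG G g = z⁻¹ * (z * inG G g * z⁻¹) * z := by group
    rw [this, ← h]; group
  comm := by
    intro i z h1 h2
    have hx : xd.1 = FreeGroup.of false := rfl
    obtain ⟨v, rfl⟩ := into_P G (w := xd ^ i * yd * (xd ^ i)⁻¹) (z := z)
      (by simp [yd]) (by simpa using h1)
    simp only [← map_pow, ← map_inv, ← map_mul] at h1 h2
    have h1' := comm_aux (inP_inj G 0 h1)
    have h2' := inP_inj G 0 h2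
    rw [show xd ^ (i+1) * yd * (xd ^ (i+1))⁻¹ = xd ^ i * (xd * yd * xd⁻¹) * (xd ^ i)⁻¹ by
      rw [pow_succ]; group] at h2'
    have h3 := comm_P _ h1' (comm_aux h2')
    have : v = 1 := by
      have h4 : v = xd ^ i * ((xd ^ i)⁻¹ * v * xd ^ i) * (xd ^ i)⁻¹ := by group
      rw [h4, h3]; group
    rw [this, map_one]
  kk_cm := by
    intro k hk hx _
    obtain ⟨v, rfl⟩ := into_P G (w := xd ^ 2) (z := k)
      (by simp [xd]) (by
        rw [map_pow]
        have : inP G 0 xd ^ 2 * k * (inP G 0 xd ^ 2)⁻¹ = k := by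
          have e : inP G 0 xd ^ 2 * k * (inP G 0 xd ^ 2)⁻¹ =
            inP G 0 xd * (inP G 0 xd * k * (inP G 0 xd)⁻¹) * (inP G 0 xd)⁻¹ := by
            rw [pow_two]; group
          rcases hx with hx | hx
          · rw [e, hx, hx]
          · have hx' := congrArg (·⁻¹) hx
            rw [e, hx]
            simpa [mul_assoc] using hx'
        exact (mul_inv_eq_iff_eq_mul.1 this).symm)
    obtain ⟨u, d⟩ := v
    rw [← map_pow] at hk
    have hk' : ((u, d) : Pb) ^ 3 = 1 := inP_inj G 0 (by rw [hk, map_one])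
    have hd : d ^ 3 = 1 := congrArg Prod.snd hk'
    have hu : u = 1 := by
      have : u ^ 3 = 1 := congrArg Prod.fst hk'
      exact (pow_eq_one_iff_left (by norm_num)).1 this
    have : ∀ d : DihedralGroup 3, d ^ 3 = 1 →
        d * DihedralGroup.r 1 = DihedralGroup.r 1 * d := by decide
    rw [← map_mul, ← map_mul]
    congr 1
    exact Prod.ext (by simp [kd]) (this d hd)
  mal := by
    rintro h hh _ ⟨g, rfl⟩ ⟨g', hg'⟩
    by_contra hg
    apply hh
    have := conj_into_factor (ph0_inj G) (i := none) (j := none) (a := g) (h := h⁻¹)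
      (by
        rintro v0 ⟨u, hu⟩
        obtain ⟨v, rfl⟩ : ∃ v : G, v = v0 := ⟨v0, rfl⟩
        have hu' : (1 : G) = v⁻¹ * g * v := hu
        apply hg
        have : g = 1 := conj_one hu'.symm
        rw [this, map_one])
      ⟨g', by
        change inG G g' = h⁻¹⁻¹ * inG G g * h⁻¹
        rw [hg', inv_inv]⟩
    have h2 : h⁻¹ ∈ (inG G).range := this.2
    simpa using h2

end
end Emb

/-! Part 10: the amalgam and its basic properties -/
namespace Emb
open Function

section
variable {A : Type} [Group A] {S : Side A} {c : Bool → ℕ → A}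

/-- the amalgam -/
abbrev HH (c : Bool → ℕ → A) : Type := Monoid.PushoutI (G := fun _ : Bool => A) (phi c)

/-- the factors -/
def jj (c : Bool → ℕ → A) (s : Bool) : A →* HH c :=
  Monoid.PushoutI.of (G := fun _ : Bool => A) (φ := phi c) s

lemma pr_symm {s : Bool} {a b : A} (h : pr c s a b) : pr c (!s) b a := by
  obtain ⟨k, h1, h2⟩ := h
  exact ⟨k, h2, by simpa using h1⟩

lemma pr_mem {s : Bool} {a b : A} (h : pr c s a b) : a ∈ (phi c s).range := by
  obtain ⟨k, rfl, -⟩ := h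
  exact ⟨FreeGroup.of k, by simp [phi]⟩

lemma jj_pr {s : Bool} {a b : A} (h : pr c s a b) : jj c s a = jj c (!s) b := by
  obtain ⟨k, rfl, rfl⟩ := h
  have h1 := Monoid.PushoutI.of_apply_eq_base (G := fun _ : Bool => A) (phi c) s (FreeGroup.of k)
  have h2 := Monoid.PushoutI.of_apply_eq_base (G := fun _ : Bool => A) (phi c) (!s)
    (FreeGroup.of k)
  have h3 := h1.trans h2.symm
  have e : ∀ b, phi c b (FreeGroup.of k) = c b k := fun b => by simp [phi]
  rw [e, e] at h3
  exact h3

namespace Gen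

lemma jj_inj (hg : Gen S c) (s) : Injective (jj c s) := Monoid.PushoutI.of_injective hg.inj s

lemma tor (hg : Gen S c) {s : Bool} {z : A} (h : z ∈ (phi c s).range) (h3 : z ^ 3 = 1) : z = 1 := by
  obtain ⟨ω, rfl⟩ := h
  rw [← map_pow] at h3
  have : ω ^ 3 = 1 := hg.inj s (by rw [h3, map_one])
  rw [(pow_eq_one_iff_left (by norm_num)).1 this, map_one]

lemma of_base (hg : Gen S c) {s s' : Bool} (hs : s ≠ s') {a b : A} (h : jj c s a = jj c s' b) :
    a ∈ (phi c s).range := by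
  by_contra ha
  have h1 : LRed (G := fun _ : Bool => A) (phi c) [⟨s, a⟩] :=
    lred_cons.2 ⟨ha, by simp, lred_nil⟩
  refine lprod_not_of hg.inj h1 (by simp) (j := s') (by simpa using hs) ⟨b, ?_⟩
  rw [lprod_cons, lprod_nil, mul_one]
  exact h.symm

lemma gen_mem (hg : Gen S c) (K : Subgroup (HH c)) (s : Bool) (h : ∀ i, jj c s (S.a i) ∈ K)
    (h' : ∀ i, jj c (!s) (S.a i) ∈ K) (x : A) : jj c (!s) x ∈ K := by
  obtain ⟨t, i, j, h1, h2⟩ := hg.gen (!s) x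
  have e1 := jj_pr h1
  have e2 := jj_pr h2
  rw [Bool.not_not] at e1 e2
  have m1 : jj c (!s) t ∈ K := e1 ▸ h j
  have m2 : jj c (!s) (x * S.a i * t * (S.a i)⁻¹) ∈ K := e2 ▸ h (j+1)
  have m3 : jj c (!s) (S.a i * t * (S.a i)⁻¹) ∈ K := by
    rw [map_mul, map_mul, map_inv]
    exact mul_mem (mul_mem (h' i) m1) (inv_mem (h' i))
  have e : x = (x * S.a i * t * (S.a i)⁻¹) * (S.a i * t * (S.a i)⁻¹)⁻¹ := by group
  rw [e, map_mul, map_inv]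
  exact mul_mem m2 (inv_mem m3)

lemma top_of (K : Subgroup (HH c)) (h : ∀ s x, jj c s x ∈ K) : K = ⊤ := by
  rw [eq_top_iff]
  intro z _
  induction z using Monoid.PushoutI.induction_on with
  | of i g => exact h i g
  | base u =>
    have := Monoid.PushoutI.of_apply_eq_base (G := fun _ : Bool => A) (phi c) true u
    rw [← this]; exact h true _
  | mul x y hx hy => exact mul_mem (hx trivial) (hy trivial)

lemma fg_top (hg : Gen S c) : Subgroup.closure ({jj c true S.x, jj c true S.y, jj c false S.x, jj c false S.y} :
    Set (HH c)) = ⊤ := by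
  set K := Subgroup.closure ({jj c true S.x, jj c true S.y, jj c false S.x, jj c false S.y} :
    Set (HH c)) with hK
  have hx : ∀ s, jj c s S.x ∈ K := by
    intro s; apply Subgroup.subset_closure; cases s <;> simp
  have hy : ∀ s, jj c s S.y ∈ K := by
    intro s; apply Subgroup.subset_closure; cases s <;> simp
  have ha : ∀ s i, jj c s (S.a i) ∈ K := by
    intro s i
    unfold Side.a
    rw [map_mul, map_mul, map_inv, map_pow]
    exact mul_mem (mul_mem (pow_mem (hx s) _) (hy s)) (inv_mem (pow_mem (hx s) _))
  apply top_of
  intro s x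
  have := hg.gen_mem K (!s) (ha _) (ha _) x
  simpa using this

lemma alt_of_lred : ∀ (l : List (Σ _ : Bool, A)) (s : Bool),
    LRed (G := fun _ : Bool => A) (phi c) l →
    (∀ q ∈ l.head?, q.1 = s) → Alt s (l.map fun p => (p.1, p.2))
  | [], _, _, _ => trivial
  | p :: l, s, h, hs => by
    have hp : p.1 = s := hs p rfl
    refine ⟨hp, alt_of_lred l (!s) (LRed.tail h) fun q hq => ?_⟩
    have := (lred_cons.1 h).2.1 q hq
    rw [hp] at this
    cases h1 : q.1 <;> cases s <;> simp_all

lemma normal_top (hg : Gen S c) (N : Subgroup (HH c)) [hN : N.Normal] (h : N ≠ ⊥) : N = ⊤ := by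
  obtain ⟨⟨z, hz⟩, hz1'⟩ := Subgroup.ne_bot_iff_exists_ne_one.1 h
  have hz1 : z ≠ 1 := fun h => hz1' (Subtype.ext h)
  obtain ⟨l, hne, hl, hlN⟩ : ∃ l : List (Σ _ : Bool, A), l ≠ [] ∧
      LRed (G := fun _ : Bool => A) (phi c) l ∧ lprod (G := fun _ : Bool => A) (phi c) l ∈ N := by
    rcases exists_lred (z : HH c) with ⟨u, hu⟩ | ⟨l, h1, h2, h3⟩
    · have hu' : jj c true (phi c true u) = z := by
        rw [← hu]
        exact Monoid.PushoutI.of_apply_eq_base (G := fun _ : Bool => A) (phi c) true u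
      obtain ⟨v, hv⟩ := hg.out true (phi c true u) (by
        intro h0; rw [h0, map_one] at hu'; exact hz1 hu'.symm)
      refine ⟨[⟨true, v * phi c true u * v⁻¹⟩], by simp, lred_cons.2 ⟨hv, by simp, lred_nil⟩, ?_⟩
      rw [lprod_cons, lprod_nil, mul_one]
      change jj c true _ ∈ N
      rw [map_mul, map_mul, map_inv, hu']
      exact hN.conj_mem _ hz _
    · exact ⟨l, h1, h2, h3 ▸ hz⟩
  obtain ⟨p, l', rfl⟩ := List.exists_cons_of_ne_nil hne
  have key : ∀ x, jj c p.1 x ∈ N := by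
    intro x
    rcases hg.simple p.1 ((p :: l').map fun p => (p.1, p.2)) (by simp)
      (alt_of_lred _ _ hl (by simp)) x with ⟨q, hq, hq'⟩ | h1
    · obtain ⟨r, hr, rfl⟩ := List.mem_map.1 hq
      exact absurd hq' (hl.2 r hr)
    · have h2 := h1 (HH c) (jj c) (fun s a b => jj_pr)
      have h3 : wv (jj c) ((p :: l').map fun p => (p.1, p.2)) =
          lprod (G := fun _ : Bool => A) (phi c) (p :: l') := by
        unfold wv lprod
        rw [List.map_map]; rfl
      rw [h3] at h2
      exact Subgroup.normalClosure_le_normal (by simpa using hlN) h2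
  have key2 : ∀ x, jj c (!p.1) x ∈ N := by
    intro x
    obtain ⟨t, i, j, h1, h2⟩ := hg.gen (!p.1) x
    have e1 := jj_pr h1
    have e2 := jj_pr h2
    rw [Bool.not_not] at e1 e2
    have m1 : jj c (!p.1) t ∈ N := e1 ▸ key _
    have m2 : jj c (!p.1) (x * S.a i * t * (S.a i)⁻¹) ∈ N := e2 ▸ key _
    have m3 : jj c (!p.1) (S.a i * t * (S.a i)⁻¹) ∈ N := by
      rw [map_mul, map_mul, map_inv]
      exact hN.conj_mem _ m1 _
    have e : x = (x * S.a i * t * (S.a i)⁻¹) * (S.a i * t * (S.a i)⁻¹)⁻¹ := by group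
    rw [e, map_mul, map_inv]
    exact mul_mem m2 (inv_mem m3)
  apply top_of
  intro s x
  by_cases hs : s = p.1
  · rw [hs]; exact key x
  · have : s = !p.1 := by revert hs; cases s <;> cases p.1 <;> simp
    rw [this]; exact key2 x

lemma simpleH (hg : Gen S c) : IsSimpleGroup (HH c) := by
  have : Nontrivial (HH c) := ⟨jj c true S.kk, 1, fun h => S.kk_ne (hg.jj_inj true (by
    rw [h, map_one]))⟩
  constructor
  intro N hN
  by_cases h : N = ⊥
  · exact Or.inl h
  · exact Or.inr (hg.normal_top N h)

lemma a_ne (S : Side A) (i : ℕ) : S.a i ≠ S.a (i+1) := by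
  intro h
  have := S.free (fun _ => false) (FreeGroup.of i * (FreeGroup.of (i+1))⁻¹) (by
    simp only [map_mul, map_inv, FreeGroup.lift_apply_of]
    exact mul_inv_eq_one.2 h)
  have h2 := FreeGroup.of_injective (mul_inv_eq_one.1 this)
  omega

lemma centerH (hg : Gen S c) : Subgroup.center (HH c) = ⊥ := by
  by_contra h
  have ht := hg.normal_top _ h
  have h1 : jj c true S.y ∈ Subgroup.center (HH c) := by rw [ht]; trivial
  have h2 := Subgroup.mem_center_iff.1 h1 (jj c true S.x)
  rw [← map_mul, ← map_mul] at h2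
  have h3 := hg.jj_inj true h2
  apply a_ne S 0
  simp [Side.a, h3]

lemma malH (hg : Gen S c) (h : HH c) (hh : h ∉ S.Gs.map (jj c true)) (g : HH c) (hgm : g ∈ S.Gs.map (jj c true))
    (hc : h * g * h⁻¹ ∈ S.Gs.map (jj c true)) : g = 1 := by
  obtain ⟨a, ha, rfl⟩ := hgm
  obtain ⟨b, hb, hab⟩ := hc
  by_contra hne
  have ha1 : a ≠ 1 := fun h0 => hne (by rw [h0, map_one])
  have h1 := conj_into_factor hg.inj (i := true) (j := true) (a := a) (h := h⁻¹)
    (by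
      rintro z ⟨ω, hω⟩
      exact ha1 (hg.conj true ω z⁻¹ a ha (by rw [hω, inv_inv])))
    ⟨b, by rw [inv_inv]; exact hab⟩
  obtain ⟨v, hv⟩ := h1.2
  have hv' : h = jj c true v⁻¹ := by
    rw [map_inv]; exact (inv_eq_iff_eq_inv.1 hv.symm)
  subst hv'
  rw [← map_mul, ← map_inv, ← map_mul] at hab
  have hab' := hg.jj_inj true hab
  refine ha1 (S.mal v⁻¹ (fun h0 => hh ⟨_, h0, rfl⟩) a ha (hab' ▸ hb))

end Gen
end
end Emb

/-! Part 11: rigidity of injective endomorphisms -/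
namespace Emb
open Function

section
variable {A : Type} [Group A] {S : Side A} {c : Bool → ℕ → A}

lemma ev_conj (z p q k : A) (ω) :
    ev (z⁻¹ * p * z) (z⁻¹ * q * z) (z⁻¹ * k * z) ω = z⁻¹ * ev p q k ω * z := by
  have : ev (z⁻¹ * p * z) (z⁻¹ * q * z) (z⁻¹ * k * z) =
      (MulAut.conj z⁻¹).toMonoidHom.comp (ev p q k) := by
    ext i
    fin_cases i <;> simp [ev]
  rw [this]
  simp

/-- a representation of `β` on the side `s` -/
def Rep (S : Side A) (c : Bool → ℕ → A) (β : HH c →* HH c) (s : Bool) (h : HH c) (i : Bool)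
    (p q k : A) : Prop :=
  ∀ ω, β (jj c s (S.sv ω)) = h * jj c i (ev p q k ω) * h⁻¹

variable {β : HH c →* HH c} {s i : Bool} {h : HH c} {p q k : A}

lemma Rep.conj (hr : Rep S c β s h i p q k) (z : A) :
    Rep S c β s (h * jj c i z) i (z⁻¹ * p * z) (z⁻¹ * q * z) (z⁻¹ * k * z) := by
  intro ω
  rw [hr, ev_conj]
  simp [mul_assoc]

lemma Rep.one_iff (hg : Gen S c) (hβ : Injective β) (hr : Rep S c β s h i p q k) (ω) :
    ev p q k ω = 1 ↔ S.sv ω = 1 := by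
  have := hr ω
  constructor
  · intro h1
    rw [h1] at this
    apply hg.jj_inj s
    apply hβ
    simpa using this
  · intro h1
    rw [h1, map_one, map_one] at this
    apply hg.jj_inj i
    rw [map_one]
    exact conj_one (v := h⁻¹) (by rw [inv_inv]; exact this.symm)

lemma Rep.eq_iff (hg : Gen S c) (hβ : Injective β) (hr : Rep S c β s h i p q k) (ω ω') :
    ev p q k ω = ev p q k ω' ↔ S.sv ω = S.sv ω' := by
  have := hr.one_iff hg hβ (ω * ω'⁻¹)
  simpa [mul_inv_eq_one] using this

open FreeGroup in
lemma Rep.k3 (hg : Gen S c) (hβ : Injective β) (hr : Rep S c β s h i p q k) : k ^ 3 = 1 := by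
  have := (hr.one_iff hg hβ (of 2 ^ 3)).2 (by simp [Side.sv, S.kk_pow])
  simpa using this

open FreeGroup in
lemma Rep.k1 (hg : Gen S c) (hβ : Injective β) (hr : Rep S c β s h i p q k) : k ≠ 1 := by
  intro hk
  have := (hr.one_iff hg hβ (of 2)).1 (by simpa using hk)
  exact S.kk_ne (by simpa [Side.sv] using this)

open FreeGroup in
lemma Rep.pk (hg : Gen S c) (hβ : Injective β) (hr : Rep S c β s h i p q k) :
    p * k * p⁻¹ = k ∨ p * k * p⁻¹ = k⁻¹ := by
  have h1 := hr.eq_iff hg hβ (of 0 * of 2 * (of 0)⁻¹) (of 2)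
  have h2 := hr.eq_iff hg hβ (of 0 * of 2 * (of 0)⁻¹) (of 2)⁻¹
  simp only [Side.sv, _root_.map_mul, _root_.map_inv, ev_zero, ev_two] at h1 h2
  rw [h1, h2]
  exact S.x_kk

open FreeGroup in
lemma Rep.qk (hg : Gen S c) (hβ : Injective β) (hr : Rep S c β s h i p q k) :
    q * k * q⁻¹ = k ∨ q * k * q⁻¹ = k⁻¹ := by
  have h1 := hr.eq_iff hg hβ (of 1 * of 2 * (of 1)⁻¹) (of 2)
  have h2 := hr.eq_iff hg hβ (of 1 * of 2 * (of 1)⁻¹) (of 2)⁻¹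
  simp only [Side.sv, _root_.map_mul, _root_.map_inv, ev_one, ev_two] at h1 h2
  rw [h1, h2]
  exact S.y_kk

lemma conj_pow3 (z k : A) (h : k ^ 3 = 1) : (z⁻¹ * k * z) ^ 3 = 1 := by
  have : (z⁻¹ * k * z) ^ 3 = z⁻¹ * k ^ 3 * z := by simp only [pow_succ, pow_zero]; group
  rw [this, h]; group

/-- normalizers of an order three subgroup stay in the factor -/
lemma Gen.norm_in (hg : Gen S c) {k : A} (h3 : k ^ 3 = 1) (h1 : k ≠ 1) {i : Bool} {u : HH c}
    (hu : u * jj c i k * u⁻¹ = jj c i k ∨ u * jj c i k * u⁻¹ = (jj c i k)⁻¹) :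
    ∃ a, jj c i a = u := by
  have := conj_into_factor hg.inj (i := i) (j := i) (a := k) (h := u⁻¹)
    (fun z hz => h1 (conj_one (hg.tor hz (conj_pow3 z k h3))))
    (by
      rw [inv_inv]
      rcases hu with hu | hu
      · exact ⟨k, hu.symm⟩
      · exact ⟨k⁻¹, by rw [map_inv]; exact hu.symm⟩)
  obtain ⟨a, ha⟩ := this.2
  exact ⟨a⁻¹, by rw [map_inv, inv_eq_iff_eq_inv]; exact ha⟩

lemma Gen.exists_rep (hg : Gen S c) (hβ : Injective β) (s : Bool) :
    ∃ h i p q k, Rep S c β s h i p q k := by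
  obtain ⟨i, k, h, hk⟩ := finite_order_conj hg.inj 3 (by norm_num) (β (jj c s S.kk))
    (by rw [← map_pow, ← map_pow, S.kk_pow, map_one, map_one])
  change β (jj c s S.kk) = h * jj c i k * h⁻¹ at hk
  have hk' : jj c i k = h⁻¹ * β (jj c s S.kk) * h := by rw [hk]; group
  have h3 : k ^ 3 = 1 := by
    apply hg.jj_inj i
    rw [map_pow, hk', map_one]
    apply conj_pow3
    rw [← map_pow, ← map_pow, S.kk_pow, map_one, map_one]
  have h1 : k ≠ 1 := by
    rintro rfl
    rw [map_one] at hk'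
    have := conj_one hk'.symm
    exact S.kk_ne (hg.jj_inj s (hβ (by rw [this, map_one, map_one])))
  have key : ∀ v : A, (v * S.kk * v⁻¹ = S.kk ∨ v * S.kk * v⁻¹ = S.kk⁻¹) →
      ∃ a, jj c i a = h⁻¹ * β (jj c s v) * h := by
    intro v hv
    apply hg.norm_in h3 h1
    have e : h⁻¹ * β (jj c s v) * h * jj c i k * (h⁻¹ * β (jj c s v) * h)⁻¹ =
        h⁻¹ * β (jj c s (v * S.kk * v⁻¹)) * h := by
      rw [hk']; simp [mul_assoc]
    rcases hv with hv | hv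
    · left; rw [e, hv, hk']
    · right; rw [e, hv, hk']; simp [mul_assoc]
  obtain ⟨p, hp⟩ := key S.x S.x_kk
  obtain ⟨q, hq⟩ := key S.y S.y_kk
  refine ⟨h, i, p, q, k, ?_⟩
  have : (β.comp (jj c s)).comp S.sv =
      (MulAut.conj h).toMonoidHom.comp ((jj c i).comp (ev p q k)) := by
    ext n
    fin_cases n
    · simp [Side.sv, hp, mul_assoc]
    · simp [Side.sv, hq, mul_assoc]
    · simp [Side.sv, hk, mul_assoc]
  intro ω
  exact DFunLike.congr_fun this ω

/-- the dichotomy for two representations -/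
lemma Gen.sep (hg : Gen S c) {s : Bool} {h h' : HH c} {i i' : Bool} {p q k p' q' k' : A}
    (hr : Rep S c β s h i p q k) (hr' : Rep S c β (!s) h' i' p' q' k')
    (hn : ¬ (i = i' ∧ h⁻¹ * h' ∈ (jj c i).range)) :
    ∃ z, ∀ ω ω', pr c s (S.sv ω) (S.sv ω') → z⁻¹ * ev p q k ω * z ∈ (phi c i).range := by
  obtain ⟨z, l, hl, hi, he⟩ := exists_left (h⁻¹ * h') i
  change h⁻¹ * h' = jj c i z * lprod (G := fun _ : Bool => A) (phi c) l at he
  refine ⟨z, fun ω ω' hp => ?_⟩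
  have e1 := jj_pr hp
  have e2 : h * jj c i (ev p q k ω) * h⁻¹ = h' * jj c i' (ev p' q' k' ω') * h'⁻¹ := by
    rw [← hr, ← hr', e1]
  have e3 : jj c i' (ev p' q' k' ω') =
      (lprod (G := fun _ : Bool => A) (phi c) l)⁻¹ * jj c i (z⁻¹ * ev p q k ω * z) *
        lprod (G := fun _ : Bool => A) (phi c) l := by
    have : jj c i' (ev p' q' k' ω') = (h⁻¹ * h')⁻¹ * jj c i (ev p q k ω) * (h⁻¹ * h') := by
      have : jj c i' (ev p' q' k' ω') =
        h'⁻¹ * (h' * jj c i' (ev p' q' k' ω') * h'⁻¹) * h' := by group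
      rw [this, ← e2]; group
    rw [this, he]
    simp [mul_assoc]
  by_contra hc
  by_cases hne : l = []
  · subst hne
    rw [lprod_nil] at he e3
    have hii : i ≠ i' := fun h0 => hn ⟨h0, ⟨z, by rw [he, mul_one]⟩⟩
    exact hc (hg.of_base hii (b := ev p' q' k' ω') (by rw [e3]; group))
  · exact conj_not_of hg.inj hl hne hi hc i' ⟨ev p' q' k' ω', e3⟩

lemma tail_x {p q : A} {N : ℕ} (ht : ∀ i, N ≤ i → p ^ i * q * (p ^ i)⁻¹ = S.a i) :
    p = S.x ∧ q = S.y := by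
  have key : ∀ i, N ≤ i → (S.x⁻¹ * p) * S.a i = S.a i * (S.x⁻¹ * p) := by
    intro i hi
    have h1 := ht i hi
    have h2 := ht (i+1) (by omega)
    have h3 : p * S.a i * p⁻¹ = S.x * S.a i * S.x⁻¹ := by
      have e : S.x * S.a i * S.x⁻¹ = S.a (i+1) := by
        unfold Side.a; rw [pow_succ']; group
      rw [e, ← h2, ← h1, pow_succ']; group
    have h4 : p * S.a i = S.x * S.a i * S.x⁻¹ * p := by rw [← h3]; group
    rw [mul_assoc, h4]; group
  have hx : S.x⁻¹ * p = 1 := S.comm N _ (key N le_rfl) (key (N+1) (by omega))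
  have hp : p = S.x := by rw [inv_mul_eq_one] at hx; exact hx.symm
  refine ⟨hp, ?_⟩
  have := ht N le_rfl
  rw [hp] at this
  unfold Side.a at this
  simpa using this

/-- normal form of a representation -/
lemma Gen.norm_rep (hg : Gen S c) (hβ : Injective β) {s : Bool} {h : HH c} {i : Bool} {p q k : A}
    (hr : Rep S c β s h i p q k) {z : A}
    (hz : ∀ ω ω', pr c s (S.sv ω) (S.sv ω') → z⁻¹ * ev p q k ω * z ∈ (phi c i).range) :
    ∃ f, ∀ ω, β (jj c s (S.sv ω)) = f * jj c s (S.sv ω) * f⁻¹ := by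
  have hr1 := hr.conj z
  have hz1 : ∀ ω ω', pr c s (S.sv ω) (S.sv ω') →
      ev (z⁻¹ * p * z) (z⁻¹ * q * z) (z⁻¹ * k * z) ω ∈ (phi c i).range := by
    intro ω ω' hp
    rw [ev_conj]; exact hz ω ω' hp
  clear hr hz
  generalize z⁻¹ * p * z = p1 at *
  generalize z⁻¹ * q * z = q1 at *
  generalize z⁻¹ * k * z = k1 at *
  generalize h * jj c i z = h1 at *
  have hkr : ∀ s, k1 ∉ (phi c s).range := fun s hk =>
    hr1.k1 hg hβ (hg.tor hk (hr1.k3 hg hβ))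
  have his : i = s := by
    by_contra hne
    have : i = !s := by revert hne; cases i <;> cases s <;> simp
    subst this
    rcases hg.R3 s p1 q1 k1 with h2 | ⟨ω, ω', h2, h3⟩
    · exact hkr _ h2
    · exact h3 (hz1 ω ω' h2)
  subst his
  rcases hg.R1 i p1 q1 k1 with h2 | ⟨ω, ω', h2, h3⟩ | ⟨d, hd, N, hN⟩
  · exact absurd h2 (hkr _)
  · exact absurd (hz1 ω ω' h2) h3
  have hr2 := hr1.conj d
  have hz2 : ∀ ω ω', pr c i (S.sv ω) (S.sv ω') →
      ev (d⁻¹ * p1 * d) (d⁻¹ * q1 * d) (d⁻¹ * k1 * d) ω ∈ (phi c i).range := by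
    intro ω ω' hp
    rw [ev_conj]
    exact mul_mem (mul_mem (inv_mem hd) (hz1 ω ω' hp)) hd
  obtain ⟨hp2, hq2⟩ := tail_x (S := S) (p := d⁻¹ * p1 * d) (q := d⁻¹ * q1 * d) (N := N) (by
    intro n hn
    have := ev_conj d p1 q1 k1 (wa n)
    rw [ev_wa] at this
    rw [this, hN n hn]; group)
  rw [hp2, hq2] at hr2 hz2
  generalize d⁻¹ * k1 * d = k2 at *
  have hk2 : k2 = S.kk := by
    obtain ⟨m, n, hmn⟩ := hg.R7 i
    have e1 := hz2 (FreeGroup.of 2 * wa m) (wa n) (by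
      rw [map_mul, sv_wa, sv_wa, sv_two]; exact hmn)
    have e2 := pr_mem hmn
    have e3 : k2 * S.kk⁻¹ ∈ (phi c i).range := by
      have : k2 * S.kk⁻¹ = (k2 * S.a m) * (S.kk * S.a m)⁻¹ := by group
      rw [this]
      refine mul_mem ?_ (inv_mem e2)
      rw [map_mul, ev_two, ev_wa] at e1
      exact e1
    have hcm := S.kk_cm k2 (hr2.k3 hg hβ) (hr2.pk hg hβ) (hr2.qk hg hβ)
    have hcm' : Commute k2 S.kk⁻¹ := (show Commute k2 S.kk from hcm).inv_right
    have := hg.tor e3 (by rw [hcm'.mul_pow, hr2.k3 hg hβ, inv_pow, S.kk_pow]; simp)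
    exact mul_inv_eq_one.1 this
  subst hk2
  exact ⟨_, hr2⟩

lemma Gen.centr (hg : Gen S c) (f : HH c)
    (hf : ∀ s ω ω', pr c s (S.sv ω) (S.sv ω') → f * jj c s (S.sv ω) = jj c s (S.sv ω) * f) :
    f = 1 := by
  have one : ∀ s y, f = jj c s y → f = 1 := by
    rintro s y rfl
    obtain ⟨i, j, h1, h2⟩ := hg.R6 s
    have e1 := hf s (wa i) (wa j) (by rw [sv_wa, sv_wa]; exact h1)
    have e2 := hf s (wa (i+1)) (wa (j+1)) (by rw [sv_wa, sv_wa]; exact h2)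
    rw [sv_wa, ← map_mul, ← map_mul] at e1 e2
    rw [S.comm i y (hg.jj_inj s e1) (hg.jj_inj s e2), map_one]
  rcases exists_lred f with ⟨u, hu⟩ | ⟨l, hne, hl, he⟩
  · exact one true (phi c true u) (by
      rw [← hu]
      exact (Monoid.PushoutI.of_apply_eq_base (G := fun _ : Bool => A) (phi c) true u).symm)
  obtain ⟨⟨s, y⟩, l, rfl⟩ := List.exists_cons_of_ne_nil hne
  rw [lprod_cons] at he
  change jj c s y * _ = f at he
  by_cases hl0 : l = []
  · subst hl0
    rw [lprod_nil, mul_one] at he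
    exact one s y he.symm
  exfalso
  obtain ⟨hy, hhead, hl'⟩ := lred_cons.1 hl
  have key : ∀ ω ω', pr c s (S.sv ω) (S.sv ω') → y⁻¹ * S.sv ω * y ∈ (phi c s).range := by
    intro ω ω' hp
    by_contra hc
    refine conj_not_of hg.inj hl' hl0 hhead hc s ⟨S.sv ω, ?_⟩
    change jj c s (S.sv ω) = _ * jj c s (y⁻¹ * S.sv ω * y) * _
    have h1 := hf s ω ω' hp
    have h2 : jj c s (S.sv ω) = f⁻¹ * jj c s (S.sv ω) * f := by
      rw [mul_assoc, ← h1]; group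
    rw [h2]
    nth_rewrite 1 2 [← he]
    simp [mul_assoc]
  rcases hg.R1 s (y⁻¹ * S.x * y) (y⁻¹ * S.y * y) (y⁻¹ * S.kk * y) with
    h2 | ⟨ω, ω', h2, h3⟩ | ⟨d, hd, N, hN⟩
  · exact S.kk_ne (conj_one (hg.tor h2 (conj_pow3 y _ S.kk_pow)))
  · rw [ev_conj] at h3
    exact h3 (key ω ω' h2)
  · have h4 : ∀ i, N ≤ i → (y * d) * S.a i = S.a i * (y * d) := by
      intro i hi
      have := hN i hi
      rw [ev_conj] at this
      have e : ev S.x S.y S.kk (wa i) = S.a i := sv_wa i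
      rw [e] at this
      have e2 : (y * d) * S.a i = y * (d * S.a i * d⁻¹) * d := by group
      rw [e2, ← this]; group
    have h5 : y * d = 1 := S.comm N _ (h4 N le_rfl) (h4 (N+1) (by omega))
    apply hy
    have : y = d⁻¹ := eq_inv_of_mul_eq_one_left h5
    rw [this]
    exact inv_mem hd

theorem Gen.rigid (hg : Gen S c) (hβ : Injective β) : ∃ f, ∀ z, β z = f * z * f⁻¹ := by
  obtain ⟨h1, i1, p1, q1, k1, hr1⟩ := hg.exists_rep hβ true
  obtain ⟨h0, i0, p0, q0, k0, hr0⟩ := hg.exists_rep hβ false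
  have hn : ¬ (i1 = i0 ∧ h1⁻¹ * h0 ∈ (jj c i1).range) := by
    rintro ⟨rfl, z, hz⟩
    obtain ⟨ω, ω', h2, h3⟩ := hg.R5 p1 q1 k1 (z⁻¹⁻¹ * p0 * z⁻¹) (z⁻¹⁻¹ * q0 * z⁻¹)
      (z⁻¹⁻¹ * k0 * z⁻¹) (by
        intro i hi
        have := (hr1.eq_iff hg hβ _ _).1 hi
        rw [sv_wa, sv_wa] at this
        exact Gen.a_ne S i this)
    apply h3
    rw [ev_conj, inv_inv]
    apply hg.jj_inj i1
    have e1 := congrArg β (jj_pr h2)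
    change _ = β (jj c false _) at e1
    rw [hr1, hr0] at e1
    have e2 : jj c i1 (ev p1 q1 k1 ω) = h1⁻¹ * (h1 * jj c i1 (ev p1 q1 k1 ω) * h1⁻¹) * h1 := by
      group
    rw [e2, e1, map_mul, map_mul, map_inv, hz]; group
  have hn' : ¬ (i0 = i1 ∧ h0⁻¹ * h1 ∈ (jj c i0).range) := by
    rintro ⟨rfl, h2⟩
    refine hn ⟨rfl, ?_⟩
    have := inv_mem h2
    simpa using this
  obtain ⟨z1, hz1⟩ := hg.sep (s := true) hr1 hr0 hn
  obtain ⟨z0, hz0⟩ := hg.sep (s := false) hr0 hr1 hn'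
  obtain ⟨f1, hf1⟩ := hg.norm_rep hβ hr1 hz1
  obtain ⟨f0, hf0⟩ := hg.norm_rep hβ hr0 hz0
  have hpair : ∀ ω ω', pr c true (S.sv ω) (S.sv ω') →
      (f1⁻¹ * f0) * jj c true (S.sv ω) = jj c true (S.sv ω) * (f1⁻¹ * f0) := by
    intro ω ω' hp
    have e0 : jj c true (S.sv ω) = jj c false (S.sv ω') := jj_pr hp
    have e1 := hf1 ω
    rw [e0, hf0, ← e0] at e1
    have e2 : f0 * jj c true (S.sv ω) = (f0 * jj c true (S.sv ω) * f0⁻¹) * f0 := by group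
    rw [mul_assoc, e2, e1]; group
  have hf : f1⁻¹ * f0 = 1 := by
    apply hg.centr
    rintro (_ | _) ω ω' hp
    · have hp' := pr_symm hp
      have := hpair ω' ω hp'
      have e0 : jj c true (S.sv ω') = jj c false (S.sv ω) := jj_pr hp'
      rw [e0] at this
      exact this
    · exact hpair ω ω' hp
  have hf' : f0 = f1 := (inv_mul_eq_one.1 hf).symm
  subst hf'
  refine ⟨f0, fun z => ?_⟩
  have : β = (MulAut.conj f0).toMonoidHom := by
    apply MonoidHom.eq_of_eqOn_dense hg.fg_top
    have x1 := hf1 (FreeGroup.of 0)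
    have y1 := hf1 (FreeGroup.of 1)
    have x0 := hf0 (FreeGroup.of 0)
    have y0 := hf0 (FreeGroup.of 1)
    simp only [Side.sv, ev_zero, ev_one] at x1 y1 x0 y0
    rintro z (rfl | rfl | rfl | rfl)
    · rw [x1]; simp
    · rw [y1]; simp
    · rw [x0]; simp
    · rw [y0]; simp
  rw [this]; simp

end
end Emb

/-! Part 12: conclusion -/
namespace Emb
open Function

theorem core (G : Type) [Group G] [Countable G] :
    ∃ (H : Type) (_ : Group H) (ι : G →* H), Function.Injective ι ∧
      (∃ S : Finset H, Subgroup.closure (S : Set H) = ⊤) ∧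
      IsSimpleGroup H ∧
      Subgroup.center H = ⊥ ∧
      (∀ β : H →* H, Function.Injective β → ∃ h : H, ∀ x : H, β x = h * x * h⁻¹) ∧
      (∀ h : H, h ∉ ι.range → ∀ g ∈ ι.range, h * g * h⁻¹ ∈ ι.range → g = 1) := by
  classical
  obtain ⟨c, hg⟩ := exists_gen (sideG G)
  have hr : ((jj c true).comp (inG G)).range = (sideG G).Gs.map (jj c true) :=
    MonoidHom.range_comp _ _
  refine ⟨HH c, inferInstance, (jj c true).comp (inG G), ?_, ?_, hg.simpleH, hg.centerH,
    fun β hβ => hg.rigid hβ, ?_⟩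
  · exact (hg.jj_inj true).comp (inG_inj G)
  · refine ⟨{jj c true (sideG G).x, jj c true (sideG G).y, jj c false (sideG G).x,
      jj c false (sideG G).y}, ?_⟩
    have := hg.fg_top
    simpa using this
  · rw [hr]
    exact fun h hh g hgm hc => hg.malH h hh g hgm hc

end Emb

/-- Every countable group `G` embeds into a finitely generated group `H` such that `H`
is simple, complete (trivial centre and all automorphisms inner) and co-Hopfian
(injective endomorphisms are surjective), and the image of `G` is malnormal in `H`. -/
theorem embedding_theorem_countable (G : Type u) [Group G] [Countable G] :
    ∃ (H : Type u) (_ : Group H) (ι : G →* H), Function.Injective ι ∧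
      (∃ S : Finset H, Subgroup.closure (S : Set H) = ⊤) ∧
      IsSimpleGroup H ∧
      Subgroup.center H = ⊥ ∧
      (∀ φ : H ≃* H, ∃ h : H, ∀ x : H, φ x = h * x * h⁻¹) ∧
      (∀ β : H →* H, Function.Injective β → Function.Surjective β) ∧
      (∀ h : H, h ∉ ι.range → ∀ g ∈ ι.range, h * g * h⁻¹ ∈ ι.range → g = 1) := by
  have : Countable (Shrink.{0} G) := (equivShrink.{0} G).symm.injective.countable
  obtain ⟨H0, _, ι0, hinj, ⟨S, hS⟩, hsim, hcen, hrig, hmal⟩ := Emb.core (Shrink.{0} G)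
  let e : H0 ≃* ULift.{u} H0 := MulEquiv.ulift.symm
  let r : G ≃* Shrink.{0} G := Shrink.mulEquiv.symm
  have rig : ∀ β : ULift.{u} H0 →* ULift.{u} H0, Function.Injective β →
      ∃ h, ∀ x, β x = h * x * h⁻¹ := by
    intro β hβ
    obtain ⟨h, hh⟩ := hrig ((e.symm.toMonoidHom.comp β).comp e.toMonoidHom)
      ((e.symm.injective.comp hβ).comp e.injective)
    refine ⟨e h, fun x => ?_⟩
    have := hh (e.symm x)
    apply e.symm.injective
    simpa using this
  have hran : ∀ z, z ∈ ((e.toMonoidHom.comp ι0).comp r.toMonoidHom).range ↔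
      e.symm z ∈ ι0.range := by
    intro z
    constructor
    · rintro ⟨g, rfl⟩
      exact ⟨r g, by simp⟩
    · rintro ⟨g, hg⟩
      refine ⟨r.symm g, ?_⟩
      simp [hg]
  refine ⟨ULift.{u} H0, inferInstance, (e.toMonoidHom.comp ι0).comp r.toMonoidHom, ?_, ?_, ?_, ?_,
    ?_, ?_, ?_⟩
  · exact (e.injective.comp hinj).comp r.injective
  · classical
    refine ⟨S.image e, ?_⟩
    rw [Finset.coe_image]
    have h1 := MonoidHom.map_closure e.toMonoidHom (S : Set H0)
    rw [hS, ← MonoidHom.range_eq_map, MonoidHom.range_eq_top.2 e.surjective] at h1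
    exact h1.symm
  · exact e.symm.isSimpleGroup
  · rw [eq_bot_iff]
    intro z hz
    have h1 : e.symm z ∈ Subgroup.center H0 := by
      rw [Subgroup.mem_center_iff] at hz ⊢
      intro g
      have := congrArg e.symm (hz (e g))
      simpa using this
    rw [hcen, Subgroup.mem_bot] at h1
    rw [Subgroup.mem_bot]
    exact e.symm.injective (by rw [h1, map_one])
  · intro φ
    exact rig φ.toMonoidHom φ.injective
  · intro β hβ z
    obtain ⟨h, hh⟩ := rig β hβ
    exact ⟨h⁻¹ * z * h, by rw [hh]; group⟩
  · intro h hh g hg hc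
    rw [hran] at hh hg hc
    apply e.symm.injective
    rw [map_one]
    exact hmal _ hh _ hg (by simpa using hc)
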